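/- arXiv:2510.19727 — 5 statements merged into one kernel-verified Lean document; each statement's English description precedes it below -/
import Mathlib

section
/- For every integer k > 2 with k ≡ 1, 2, 9, or 10 (mod 12), the integer 2^k is not separable; that is, there is no positive integer m such that (m, 2^k) is an interlocking pair. -/
/-!
Let `(m, 2 ^ k)` be interlocking. Each dyadic interval `(2 ^ i, 2 ^ (i + 1))` with `1 ≤ i < k`
contains exactly one divisor of `m`, there is at most one divisor above `2 ^ k`, and `m` is odd.
Hence `m` has `k` or `k + 1` divisors (`card_divisors_of_interlocking`).

On the other hand, uniqueness in the small intervals pins down the small prime powers in `m`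
(`four_or_six_dvd_card`). The divisor in `(2, 4)` is `3`, and the one in `(4, 8)` is `5` or `7`.
* If `5 ∣ m`, then `15` excludes `9`, and `75` excludes `125` (both lie in `(64, 128)`), so the part
  of `m` composed of `3` and `5` is `3 * 5` or `3 * 5 ^ 2`.
* If `7 ∣ m`, then `21` excludes `27`. If `9 ∣ m`, then `63` excludes `49`; otherwise the divisor in
  `(8, 16)` is `11` or `13`, and its triple, in `(32, 64)`, excludes `49`. So the part of `m`
  composed of `3` and `7` is `3 * 7` or `3 ^ 2 * 7`.

In every case the number of divisors of `m` is a multiple of `4` or of `6`, whereas for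
`k ≡ 1, 2, 9, 10 (mod 12)` neither `k` nor `k + 1` is such a multiple.
-/

/-- `(m, n)` is an interlocking pair: both are positive, and between any two
consecutive divisors (the smaller one exceeding 1) of either number there is a
divisor of the other. -/
def Interlocking (m n : ℕ) : Prop :=
  0 < m ∧ 0 < n ∧
  (∀ d d' : ℕ, d ∣ n → d' ∣ n → 1 < d → d < d' →
    (∀ e : ℕ, e ∣ n → ¬(d < e ∧ e < d')) →
    ∃ e : ℕ, e ∣ m ∧ d < e ∧ e < d') ∧
  (∀ d d' : ℕ, d ∣ m → d' ∣ m → 1 < d → d < d' →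
    (∀ e : ℕ, e ∣ m → ¬(d < e ∧ e < d')) →
    ∃ e : ℕ, e ∣ n ∧ d < e ∧ e < d')

/-- A positive integer `n` is separable if some `m` interlocks with it. -/
def Separable (n : ℕ) : Prop := ∃ m : ℕ, Interlocking m n

/-- The interlocking condition on consecutive divisors of `m` extends to arbitrary pairs of
divisors, by passing to the successor of the smaller one. -/
lemma Interlocking.exists_between {m n a b : ℕ} (h : Interlocking m n) (ha : a ∣ m) (hb : b ∣ m)
    (h1 : 1 < a) (hab : a < b) : ∃ e, e ∣ n ∧ a < e ∧ e < b := by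
  classical
  have hex : ∃ d, d ∣ m ∧ a < d := ⟨b, hb, hab⟩
  obtain ⟨hd, had⟩ := Nat.find_spec hex
  have hmin : Nat.find hex ≤ b := Nat.find_min' hex ⟨hb, hab⟩
  obtain ⟨e, he, hae, hed⟩ := h.2.2.2 a (Nat.find hex) ha hd h1 had
    (fun e he hlt => Nat.find_min hex hlt.2 ⟨he, hlt.1⟩)
  exact ⟨e, he, hae, hed.trans_le hmin⟩

/-- A closed dyadic interval contains at most one divisor of `m` exceeding `1`. -/
lemma Interlocking.dyadic_unique {m k a b : ℕ} (h : Interlocking m (2 ^ k)) (i : ℕ) (ha : a ∣ m)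
    (hb : b ∣ m) (h1 : 1 < a) (hab : a < b) (hia : 2 ^ i ≤ a) (hib : b ≤ 2 ^ (i + 1)) : False := by
  obtain ⟨e, he, hae, heb⟩ := h.exists_between ha hb h1 hab
  obtain ⟨j, -, rfl⟩ := (Nat.dvd_prime_pow Nat.prime_two).1 he
  have h2 : i < j := (Nat.pow_lt_pow_iff_right (by norm_num)).1 (hia.trans_lt hae)
  have h3 : j < i + 1 := (Nat.pow_lt_pow_iff_right (by norm_num)).1 (heb.trans_le hib)
  omega

lemma Interlocking.dyadic_exists {m k : ℕ} (h : Interlocking m (2 ^ k)) (i : ℕ) (hi : 1 ≤ i)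
    (hik : i < k) : ∃ e, e ∣ m ∧ 2 ^ i < e ∧ e < 2 ^ (i + 1) := by
  refine h.2.2.1 _ _ (pow_dvd_pow 2 hik.le) (pow_dvd_pow 2 hik)
    (Nat.one_lt_two_pow (by omega)) (Nat.pow_lt_pow_right (by norm_num) (by omega)) ?_
  rintro e he ⟨h1, h2⟩
  obtain ⟨j, -, rfl⟩ := (Nat.dvd_prime_pow Nat.prime_two).1 he
  have h3 := (Nat.pow_lt_pow_iff_right (by norm_num)).1 h1
  have h4 := (Nat.pow_lt_pow_iff_right (by norm_num)).1 h2
  omega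

/-- The map `d ↦ min (log₂ d) k` is injective on the divisors of `m`, with image between
`{0, …, k - 1}` and `{0, …, k}`. -/
lemma card_divisors_of_interlocking {m k : ℕ} (h : Interlocking m (2 ^ k)) (hk : 1 ≤ k) :
    m.divisors.card = k ∨ m.divisors.card = k + 1 := by
  have key : ∀ a b, a ∣ m → b ∣ m → a < b → min (Nat.log 2 a) k ≠ min (Nat.log 2 b) k := by
    intro a b ha hb hab heq
    have ha0 : 0 < a := Nat.pos_of_dvd_of_pos ha h.1
    have hb0 : 0 < b := Nat.pos_of_dvd_of_pos hb h.1
    have hbl : 1 ≤ Nat.log 2 b := Nat.log_pos (by norm_num) (by omega)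
    have ha1 : 1 < a := by
      rcases Nat.lt_or_ge 1 a with h1 | h1
      · exact h1
      · obtain rfl : a = 1 := by omega
        simp at heq
        omega
    have hla := Nat.pow_log_le_self 2 ha0.ne'
    by_cases hlk : Nat.log 2 a < k
    · have hlb : Nat.log 2 b = Nat.log 2 a := by omega
      have hub := Nat.lt_pow_succ_log_self (b := 2) (by norm_num) b
      rw [hlb] at hub
      exact h.dyadic_unique _ ha hb ha1 hab hla hub.le
    · obtain ⟨e, he, hae, -⟩ := h.exists_between ha hb ha1 hab
      have h1 := Nat.le_of_dvd (by positivity) he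
      have h2 : 2 ^ k ≤ 2 ^ Nat.log 2 a := Nat.pow_le_pow_right (by norm_num) (by omega)
      omega
  have hinj : Set.InjOn (fun d => min (Nat.log 2 d) k) (m.divisors : Set ℕ) := by
    intro a ha b hb hab
    have ha' := Nat.dvd_of_mem_divisors (Finset.mem_coe.1 ha)
    have hb' := Nat.dvd_of_mem_divisors (Finset.mem_coe.1 hb)
    rcases lt_trichotomy a b with h1 | h1 | h1
    · exact (key a b ha' hb' h1 hab).elim
    · exact h1
    · exact (key b a hb' ha' h1 hab.symm).elim
  have hcard := Finset.card_image_of_injOn hinj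
  have hup : m.divisors.image (fun d => min (Nat.log 2 d) k) ⊆ Finset.range (k + 1) := by
    intro x hx
    obtain ⟨d, -, rfl⟩ := Finset.mem_image.1 hx
    exact Finset.mem_range.2 (by omega)
  have hlo : Finset.range k ⊆ m.divisors.image (fun d => min (Nat.log 2 d) k) := by
    intro i hi
    have hi := Finset.mem_range.1 hi
    rw [Finset.mem_image]
    rcases Nat.eq_zero_or_pos i with rfl | hi0
    · exact ⟨1, Nat.mem_divisors.2 ⟨one_dvd _, h.1.ne'⟩, by simp⟩
    · obtain ⟨e, he, h1, h2⟩ := h.dyadic_exists i hi0 hi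
      refine ⟨e, Nat.mem_divisors.2 ⟨he, h.1.ne'⟩, ?_⟩
      have : Nat.log 2 e = i := Nat.log_eq_of_pow_le_of_lt_pow h1.le h2
      simp only [this]
      omega
  have h1 := Finset.card_le_card hup
  have h2 := Finset.card_le_card hlo
  rw [hcard, Finset.card_range] at h1 h2
  omega

/-- If `p ^ s * q ^ t` is the exact part of `m` composed of `p` and `q`, the divisor count of `m`
is a multiple of `(s + 1) * (t + 1)`. -/
lemma mul_dvd_card_divisors {m p q s t : ℕ} (hp : p.Prime) (hq : q.Prime) (hpq : p ≠ q)
    (h1 : p ^ s ∣ m) (h2 : q ^ t ∣ m) (h3 : ¬ p ^ (s + 1) ∣ m) (h4 : ¬ q ^ (t + 1) ∣ m) :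
    (s + 1) * (t + 1) ∣ m.divisors.card := by
  have hc : Nat.Coprime (p ^ s) (q ^ t) := Nat.Coprime.pow _ _ ((Nat.coprime_primes hp hq).2 hpq)
  obtain ⟨c, rfl⟩ := hc.mul_dvd_of_dvd_of_dvd h1 h2
  have hpc : Nat.Coprime (p ^ s) c := by
    refine Nat.Coprime.pow_left _ ((Nat.Prime.coprime_iff_not_dvd hp).2 fun hd => h3 ?_)
    rw [pow_succ, mul_assoc]
    exact mul_dvd_mul_left _ (hd.mul_left _)
  have hqc : Nat.Coprime (q ^ t) c := by
    refine Nat.Coprime.pow_left _ ((Nat.Prime.coprime_iff_not_dvd hq).2 fun hd => h4 ?_)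
    rw [pow_succ, mul_assoc]
    exact (mul_dvd_mul_left _ hd).mul_left _
  rw [(hpc.mul_left hqc).card_divisors_mul, hc.card_divisors_mul, Nat.divisors_prime_pow hp,
    Nat.divisors_prime_pow hq]
  simp

lemma four_or_six_dvd_card {m k : ℕ} (h : Interlocking m (2 ^ k)) (hk : 9 ≤ k) :
    4 ∣ m.divisors.card ∨ 6 ∣ m.divisors.card := by
  have h3 : 3 ∣ m := by
    obtain ⟨e, he, h1, h2⟩ := h.dyadic_exists 1 le_rfl (by omega)
    obtain rfl : e = 3 := by omega
    exact he
  have hodd : ¬ 2 ∣ m := fun h2 =>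
    h.dyadic_unique 1 h2 h3 (by norm_num) (by norm_num) (by norm_num) (by norm_num)
  have cop {a b : ℕ} (hab : Nat.Coprime a b) (ha : a ∣ m) (hb : b ∣ m) : a * b ∣ m :=
    hab.mul_dvd_of_dvd_of_dvd ha hb
  have h57 : 5 ∣ m ∨ 7 ∣ m := by
    obtain ⟨e, he, h1, h2⟩ := h.dyadic_exists 2 (by norm_num) (by omega)
    norm_num at h1 h2
    interval_cases e
    · exact Or.inl he
    · exact (hodd (dvd_trans (by norm_num) he)).elim
    · exact Or.inr he
  by_cases h5 : 5 ∣ m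
  · have h15 : 15 ∣ m := cop (a := 3) (b := 5) (by norm_num) h3 h5
    have h9 : ¬ 9 ∣ m := fun h9 =>
      h.dyadic_unique 3 h9 h15 (by norm_num) (by norm_num) (by norm_num) (by norm_num)
    by_cases h25 : 25 ∣ m
    · have h75 : 75 ∣ m := cop (a := 3) (b := 25) (by norm_num) h3 h25
      have h125 : ¬ 125 ∣ m := fun h125 =>
        h.dyadic_unique 6 h75 h125 (by norm_num) (by norm_num) (by norm_num) (by norm_num)
      exact Or.inr (mul_dvd_card_divisors (p := 3) (q := 5) (s := 1) (t := 2) (by norm_num)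
        (by norm_num) (by norm_num) h3 h25 h9 h125)
    · exact Or.inl (mul_dvd_card_divisors (p := 3) (q := 5) (s := 1) (t := 1) (by norm_num)
        (by norm_num) (by norm_num) h3 h5 h9 h25)
  · have h7 : 7 ∣ m := h57.resolve_left h5
    have h21 : 21 ∣ m := cop (a := 3) (b := 7) (by norm_num) h3 h7
    by_cases h9 : 9 ∣ m
    · have h63 : 63 ∣ m := cop (a := 9) (b := 7) (by norm_num) h9 h7
      have h27 : ¬ 27 ∣ m := fun h27 =>
        h.dyadic_unique 4 h21 h27 (by norm_num) (by norm_num) (by norm_num) (by norm_num)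
      have h49 : ¬ 49 ∣ m := fun h49 =>
        h.dyadic_unique 5 h49 h63 (by norm_num) (by norm_num) (by norm_num) (by norm_num)
      exact Or.inr (mul_dvd_card_divisors (p := 3) (q := 7) (s := 2) (t := 1) (by norm_num)
        (by norm_num) (by norm_num) h9 h7 h27 h49)
    · have h49 : ¬ 49 ∣ m := by
        intro h49
        obtain ⟨e, he, h1, h2⟩ := h.dyadic_exists 3 (by norm_num) (by omega)
        norm_num at h1 h2
        have he2 : ¬ 2 ∣ e := fun hd => hodd (hd.trans he)
        have he5 : ¬ 5 ∣ e := fun hd => h5 (hd.trans he)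
        have he9 : e ≠ 9 := fun hd => h9 (hd ▸ he)
        obtain rfl | rfl : e = 11 ∨ e = 13 := by omega
        · have h33 : 33 ∣ m := cop (a := 3) (b := 11) (by norm_num) h3 he
          exact h.dyadic_unique 5 h33 h49 (by norm_num) (by norm_num) (by norm_num) (by norm_num)
        · have h39 : 39 ∣ m := cop (a := 3) (b := 13) (by norm_num) h3 he
          exact h.dyadic_unique 5 h39 h49 (by norm_num) (by norm_num) (by norm_num) (by norm_num)
      exact Or.inl (mul_dvd_card_divisors (p := 3) (q := 7) (s := 1) (t := 1) (by norm_num)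
        (by norm_num) (by norm_num) h3 h7 h9 h49)

/-- For `k > 2` with `k ≡ 1, 2, 9, 10 (mod 12)`, the integer `2^k` is not separable. -/
theorem two_pow_not_separable (k : ℕ) (hk : 2 < k)
    (hmod : k % 12 = 1 ∨ k % 12 = 2 ∨ k % 12 = 9 ∨ k % 12 = 10) :
    ¬ Separable (2 ^ k) := by
  rintro ⟨m, h⟩
  have h1 := card_divisors_of_interlocking h (by omega)
  have h2 := four_or_six_dvd_card h (by omega)
  omega
end

section
/- There exists a real constant C > 0 such that for every positive integer x, the number of positive integers n ≤ x that lie in S_C is greater than x/2. -/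
/-!
Fix a natural number `K` and take `C = K`. If `n ∉ S_K`, let `d < d'` be offending consecutive
divisors and `D = max K d`, so that `n` has no divisor in `(D, e ^ D]`. Let `a` be the largest
divisor of `n` with `a ≤ D`, and write `n = a * b`. For a prime `p ∣ b`, the divisor `a * p` exceeds
`D`, hence exceeds `e ^ D ≥ D ^ 2`, so `p > D`, and then `p > e ^ D ≥ 2 ^ D`. Thus every exceptional
`n` has the form `a * b` with `b > 1` free of prime factors `≤ 2 ^ max K a`
(`exists_rough_factor`).

The number of `1 < b ≤ y` without prime factors `≤ z` is `O(y / log z)` (`card_rough_le`). This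
follows by weighting with `log b = ∑ q ∣ b, Λ q`: Chebyshev's bound `ψ(t) = O(t)` reduces the count
to the sum of reciprocals of the rough numbers up to `y`, and multiplying this sum by the harmonic
sum up to `z` gives at most the harmonic sum up to `y * z`, since a product of a `z`-rough number
and a number `≤ z` determines its two factors.

Hence the number of exceptional `n ≤ x` is `O(x * ∑ a, 1 / (a * max K a))`, and
`max K a ≥ √K * √a` makes this `O(x / √K)`, which is below `x / 2` for large `K`.
-/

open scoped Classical

/-- `SC C` is the set of positive integers `n` such that any two consecutive
divisors `d < d'` of `n` satisfy `d' ≤ exp (max C d)`. -/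
def SC (C : ℝ) : Set ℕ :=
  {n : ℕ | 0 < n ∧ ∀ d d' : ℕ, d ∣ n → d' ∣ n → d < d' →
    (∀ e : ℕ, e ∣ n → ¬(d < e ∧ e < d')) →
    (d' : ℝ) ≤ Real.exp (max C (d : ℝ))}

/-! ### Upper bound for the number of rough integers -/

/-- `b` is `z`-rough: all its prime factors exceed `z`. -/
def Rough (z b : ℕ) : Prop := ∀ p : ℕ, p.Prime → p ∣ b → z < p

/-- The `z`-rough numbers in `[1, y]`. -/
noncomputable def roughs (z y : ℕ) : Finset ℕ := (Finset.Icc 1 y).filter (Rough z)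

lemma mem_roughs {z y b : ℕ} : b ∈ roughs z y ↔ (1 ≤ b ∧ b ≤ y) ∧ Rough z b := by
  simp [roughs]

lemma Rough.of_dvd {z a b : ℕ} (h : Rough z b) (hab : a ∣ b) : Rough z a :=
  fun p hp hpa => h p hp (hpa.trans hab)

lemma Rough.coprime {z b k : ℕ} (h : Rough z b) (hk : 1 ≤ k) (hkz : k ≤ z) : b.Coprime k := by
  apply Nat.Coprime.symm
  refine Nat.coprime_of_dvd fun p hp hpk hpb => ?_
  have h1 := h p hp hpb
  have h2 := Nat.le_of_dvd hk hpk
  omega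

lemma sum_inv_Icc_eq (n : ℕ) : ∑ k ∈ Finset.Icc 1 n, (1 / (k : ℝ)) = (harmonic n : ℝ) := by
  rw [harmonic_eq_sum_Icc]
  push_cast
  simp

/-- Products of a `z`-rough number and a number `≤ z` are pairwise distinct, so the product of the
two reciprocal sums is bounded by a harmonic sum. -/
lemma sum_inv_roughs_mul_le (z y : ℕ) :
    (∑ m ∈ roughs z y, 1 / (m : ℝ)) * (∑ k ∈ Finset.Icc 1 z, 1 / (k : ℝ)) ≤
      ∑ j ∈ Finset.Icc 1 (y * z), 1 / (j : ℝ) := by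
  rw [Finset.sum_mul_sum, ← Finset.sum_product']
  have hinj : Set.InjOn (fun q : ℕ × ℕ => q.1 * q.2)
      (roughs z y ×ˢ Finset.Icc 1 z : Finset (ℕ × ℕ)) := by
    rintro ⟨m, k⟩ h ⟨m', k'⟩ h' heq
    simp only [Finset.coe_product, Set.mem_prod, Finset.mem_coe, mem_roughs,
      Finset.mem_Icc] at h h' heq
    have h1 : m ∣ m' := (h.1.2.coprime h'.2.1 h'.2.2).dvd_of_dvd_mul_right
      (heq ▸ Dvd.intro _ rfl)
    have h2 : m' ∣ m := (h'.1.2.coprime h.2.1 h.2.2).dvd_of_dvd_mul_right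
      (heq ▸ Dvd.intro _ rfl)
    have h3 : m = m' := Nat.dvd_antisymm h1 h2
    subst h3
    have := Nat.eq_of_mul_eq_mul_left h.1.1.1 heq
    simp [this]
  calc ∑ q ∈ roughs z y ×ˢ Finset.Icc 1 z, 1 / (q.1 : ℝ) * (1 / (q.2 : ℝ))
      = ∑ j ∈ (roughs z y ×ˢ Finset.Icc 1 z).image (fun q : ℕ × ℕ => q.1 * q.2), 1 / (j : ℝ) := by
        rw [Finset.sum_image hinj]
        refine Finset.sum_congr rfl fun q _ => ?_
        push_cast
        rw [one_div_mul_one_div]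
    _ ≤ _ := by
        refine Finset.sum_le_sum_of_subset_of_nonneg ?_ fun _ _ _ => by positivity
        intro j hj
        simp only [Finset.mem_image, Finset.mem_product, mem_roughs, Finset.mem_Icc] at hj ⊢
        obtain ⟨q, ⟨⟨⟨h1, h2⟩, -⟩, h3, h4⟩, rfl⟩ := hj
        exact ⟨Nat.mul_pos h1 h3, Nat.mul_le_mul h2 h4⟩

lemma psi_le_six {t : ℝ} (ht : 0 ≤ t) : Chebyshev.psi t ≤ 6 * t := by
  refine (Chebyshev.psi_le_const_mul_self ht).trans ?_
  have h4 : Real.log 4 = 2 * Real.log 2 := by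
    rw [show (4 : ℝ) = 2 ^ 2 by norm_num, Real.log_pow]; norm_num
  have := Real.log_two_lt_d9
  gcongr
  linarith

lemma sum_log_roughs_le (z y : ℕ) :
    ∑ b ∈ roughs z y, Real.log b ≤ 6 * (y * ∑ m ∈ roughs z y, 1 / (m : ℝ)) := by
  have key : ∑ b ∈ roughs z y, Real.log b ≤ ∑ m ∈ roughs z y, Chebyshev.psi ((y : ℝ) / m) := by
    have hL : ∑ b ∈ roughs z y, Real.log b =
        ∑ s ∈ (roughs z y).sigma (fun b => b.divisors), ArithmeticFunction.vonMangoldt s.2 := by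
      rw [Finset.sum_sigma]
      exact Finset.sum_congr rfl fun b _ => ArithmeticFunction.vonMangoldt_sum.symm
    have hR : ∑ m ∈ roughs z y, Chebyshev.psi ((y : ℝ) / m) =
        ∑ s ∈ (roughs z y).sigma (fun m => Finset.Ioc 0 (y / m)),
          ArithmeticFunction.vonMangoldt s.2 := by
      rw [Finset.sum_sigma]
      refine Finset.sum_congr rfl fun m _ => ?_
      rw [Chebyshev.psi, Nat.floor_div_eq_div]
    rw [hL, hR]
    -- The pair `(b, q)` with `q ∣ b` is sent to `(b / q, q)`.
    have hinj : Set.InjOn (fun s : (_ : ℕ) × ℕ => (⟨s.1 / s.2, s.2⟩ : (_ : ℕ) × ℕ))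
        ((roughs z y).sigma (fun b => b.divisors) : Finset ((_ : ℕ) × ℕ)) := by
      rintro ⟨b, q⟩ h ⟨b', q'⟩ h' heq
      simp only [Finset.mem_coe, Finset.mem_sigma, Nat.mem_divisors] at h h'
      simp only [Sigma.mk.injEq, heq_eq_eq] at heq
      obtain ⟨h1, rfl⟩ := heq
      have : b = b' := by
        rw [← Nat.div_mul_cancel h.2.1, ← Nat.div_mul_cancel h'.2.1, h1]
      subst this
      rfl
    rw [← Finset.sum_image (f := fun s : (_ : ℕ) × ℕ => ArithmeticFunction.vonMangoldt s.2) hinj]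
    refine Finset.sum_le_sum_of_subset_of_nonneg ?_
      fun _ _ _ => ArithmeticFunction.vonMangoldt_nonneg
    intro s hs
    simp only [Finset.mem_image, Finset.mem_sigma, Nat.mem_divisors, mem_roughs] at hs
    obtain ⟨⟨b, q⟩, ⟨⟨⟨hb1, hby⟩, hr⟩, ⟨m, hm⟩, hb0⟩, rfl⟩ := hs
    dsimp only at *
    have hq : 0 < q := Nat.pos_of_ne_zero (by rintro rfl; simp at hm; omega)
    have hm0 : 0 < m := Nat.pos_of_ne_zero (by rintro rfl; simp at hm; omega)
    have hdiv : b / q = m := by rw [hm, Nat.mul_div_cancel_left _ hq]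
    rw [hdiv]
    simp only [Finset.mem_sigma, mem_roughs, Finset.mem_Ioc]
    refine ⟨⟨⟨hm0, ?_⟩, hr.of_dvd ⟨q, by rw [hm, mul_comm]⟩⟩, hq, ?_⟩
    · exact (Nat.le_mul_of_pos_left m hq).trans (hm ▸ hby)
    · rw [Nat.le_div_iff_mul_le hm0]
      exact hm ▸ hby
  refine key.trans ?_
  rw [Finset.mul_sum, Finset.mul_sum]
  refine Finset.sum_le_sum fun m _ => ?_
  refine (psi_le_six (by positivity)).trans (le_of_eq ?_)
  ring

/-- The sieve bound `O(y / log z)` for the number of `z`-rough numbers in `(1, y]`. The number `1`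
has to be excluded, since the bound is below `1` for `y` much smaller than `log z`. -/
lemma card_rough_le {z : ℕ} (hz : 2 ≤ z) (y : ℕ) :
    (((roughs z y).filter (fun b => 1 < b)).card : ℝ) ≤ 28 * y / Real.log z := by
  have hlz : 0 < Real.log z := Real.log_pos (by exact_mod_cast hz)
  rcases lt_or_ge y z with hyz | hyz
  · -- A rough number `b > 1` exceeds `z`, so the set is empty.
    have : (roughs z y).filter (fun b => 1 < b) = ∅ := by
      refine Finset.filter_eq_empty_iff.2 fun b hb hb1 => ?_
      obtain ⟨⟨h1, h2⟩, hr⟩ := mem_roughs.1 hb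
      have h3 := hr _ (Nat.minFac_prime (by omega)) (Nat.minFac_dvd b)
      have h4 := Nat.minFac_le h1
      omega
    rw [this]
    simp only [Finset.card_empty, Nat.cast_zero]
    positivity
  have hy : (2 : ℝ) ≤ y := by exact_mod_cast hz.trans hyz
  have hz' : (2 : ℝ) ≤ z := by exact_mod_cast hz
  have hl2 := Real.log_two_gt_d9
  have hly2 : Real.log 2 ≤ Real.log y := Real.log_le_log (by norm_num) hy
  have hly : 0 < Real.log y := by linarith
  set H := ∑ m ∈ roughs z y, 1 / (m : ℝ) with hH
  have hH0 : 0 ≤ H := Finset.sum_nonneg fun _ _ => by positivity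
  have hHle : H * Real.log z ≤ 4 * Real.log y := by
    have h1 := sum_inv_roughs_mul_le z y
    rw [sum_inv_Icc_eq, sum_inv_Icc_eq] at h1
    have h2 := harmonic_le_one_add_log (y * z)
    have h3 : Real.log z ≤ (harmonic z : ℝ) := by
      refine le_trans ?_ (log_add_one_le_harmonic z)
      refine Real.log_le_log (by positivity) ?_
      push_cast
      linarith
    have h4 : Real.log ((y * z : ℕ) : ℝ) ≤ 2 * Real.log y := by
      push_cast
      rw [Real.log_mul (by positivity) (by positivity)]
      have : Real.log z ≤ Real.log y :=
        Real.log_le_log (by positivity) (by exact_mod_cast hyz)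
      linarith
    have h5 := mul_le_mul_of_nonneg_left h3 hH0
    linarith
  have hcard : ((roughs z y).card : ℝ) * Real.log y ≤ 7 * (y * H) := by
    have h1 : ((roughs z y).card : ℝ) * Real.log y ≤
        ∑ b ∈ roughs z y, (Real.log b + y * (1 / (b : ℝ))) := by
      rw [← nsmul_eq_mul]
      refine Finset.card_nsmul_le_sum _ _ _ fun b hb => ?_
      have hb0 : (0 : ℝ) < b := by exact_mod_cast (mem_roughs.1 hb).1.1
      have h2 : Real.log ((y : ℝ) / b) ≤ y / b - 1 :=
        Real.log_le_sub_one_of_pos (by positivity)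
      rw [Real.log_div (by positivity) (by positivity)] at h2
      rw [mul_one_div]
      linarith
    rw [Finset.sum_add_distrib, ← Finset.mul_sum] at h1
    have h2 := sum_log_roughs_le z y
    linarith
  have hle : (((roughs z y).filter (fun b => 1 < b)).card : ℝ) ≤ (roughs z y).card := by
    exact_mod_cast Finset.card_filter_le _ _
  refine hle.trans ?_
  rw [le_div_iff₀ hlz]
  refine le_of_mul_le_mul_right ?_ hly
  calc ((roughs z y).card : ℝ) * Real.log z * Real.log y
      = ((roughs z y).card : ℝ) * Real.log y * Real.log z := by ring
    _ ≤ 7 * (y * H) * Real.log z := by gcongr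
    _ = 7 * y * (H * Real.log z) := by ring
    _ ≤ 7 * y * (4 * Real.log y) := by gcongr
    _ = 28 * y * Real.log y := by ring

/-! ### Structure of the integers outside `S_K` -/

lemma sq_le_two_pow {D : ℕ} (hD : 4 ≤ D) : D * D ≤ 2 ^ D := by
  induction D, hD using Nat.le_induction with
  | base => norm_num
  | succ n hn ih =>
    rw [pow_succ]
    nlinarith

lemma two_pow_le_exp (D : ℕ) : (2 : ℝ) ^ D ≤ Real.exp D := by
  rw [← Real.exp_one_pow]
  gcongr
  have := Real.exp_one_gt_d9
  linarith

/-- Every `n` outside `S_K` is `a * b` with `b > 1` rough with respect to `2 ^ max K a`. -/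
lemma exists_rough_factor {K n : ℕ} (hK : 4 ≤ K) (hn : 0 < n) (h : n ∉ SC (K : ℝ)) :
    ∃ a b : ℕ, n = a * b ∧ 1 < b ∧ Rough (2 ^ max K a) b := by
  have h' : ∃ d d' : ℕ, d ∣ n ∧ d' ∣ n ∧ d < d' ∧ (∀ e : ℕ, e ∣ n → ¬(d < e ∧ e < d')) ∧
      Real.exp (max (K : ℝ) (d : ℝ)) < d' := by
    by_contra hcon
    refine h ⟨hn, fun d d' h1 h2 h3 h4 => ?_⟩
    by_contra h5
    exact hcon ⟨d, d', h1, h2, h3, h4, not_le.1 h5⟩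
  obtain ⟨d, d', hd, hd', hdd, hgap, hexp⟩ := h'
  obtain ⟨D, hD⟩ : ∃ D, D = max K d := ⟨_, rfl⟩
  have hKD : K ≤ D := hD ▸ le_max_left _ _
  have hdD : d ≤ D := hD ▸ le_max_right _ _
  have hpow : 2 ^ D < d' := by
    have h1 : Real.exp (D : ℝ) < d' := by rw [hD]; push_cast; exact hexp
    exact_mod_cast (two_pow_le_exp D).trans_lt h1
  have hsq := sq_le_two_pow (hK.trans hKD)
  have hno : ∀ e : ℕ, e ∣ n → D < e → 2 ^ D < e := by
    intro e he hDe
    by_contra hle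
    exact hgap e he ⟨by omega, by omega⟩
  obtain ⟨a, ha, hamax⟩ := Finset.exists_max_image (n.divisors.filter (· ≤ D)) id
    ⟨1, by simp; omega⟩
  simp only [Finset.mem_filter, Nat.mem_divisors, id] at ha hamax
  obtain ⟨⟨⟨b, hb⟩, -⟩, haD⟩ := ha
  have ha0 : 0 < a := Nat.pos_of_ne_zero (by rintro rfl; simp at hb; omega)
  refine ⟨a, b, hb, ?_, fun p hp hpb => ?_⟩
  · have h1 : d' ≤ n := Nat.le_of_dvd hn hd'
    by_contra hb1
    have h2 : a * b ≤ a * 1 := Nat.mul_le_mul_left a (by omega)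
    have h3 : D < 2 ^ D := Nat.lt_two_pow_self
    omega
  · have hapn : a * p ∣ n := hb ▸ Nat.mul_dvd_mul_left a hpb
    have hapD : D < a * p := by
      by_contra hle
      have h1 := hamax (a * p) ⟨⟨hapn, by omega⟩, by omega⟩
      have h2 := hp.two_le
      nlinarith
    have h1 := hno _ hapn hapD
    have hpD : D < p := by
      by_contra hle
      have : a * p ≤ D * D := Nat.mul_le_mul haD (by omega)
      omega
    have h2 := hno p ((Dvd.intro_left a rfl).trans hapn) hpD
    have h3 : 2 ^ max K a ≤ 2 ^ D := Nat.pow_le_pow_right (by norm_num) (max_le hKD haD)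
    omega

/-! ### Counting the exceptional integers -/

/-- The term attached to `a` is dominated by that of a convergent series, with a saving `1 / √K`;
this uses `max K a ≥ √K * √a`. -/
lemma card_rough_term_le {K : ℕ} (hK : 4 ≤ K) {a : ℕ} (ha : 1 ≤ a) (x : ℕ) :
    (((roughs (2 ^ max K a) (x / a)).filter (fun b => 1 < b)).card : ℝ) ≤
      56 * x / √K * (1 / (a : ℝ) ^ (3 / 2 : ℝ)) := by
  have ha0 : (0 : ℝ) < a := by exact_mod_cast ha
  have hK0 : (0 : ℝ) < K := by exact_mod_cast (by omega : 0 < K)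
  obtain ⟨M, hM⟩ : ∃ M, M = max K a := ⟨_, rfl⟩
  have hKM : (K : ℝ) ≤ M := by exact_mod_cast hM ▸ le_max_left _ _
  have haM : (a : ℝ) ≤ M := by exact_mod_cast hM ▸ le_max_right _ _
  have hM0 : (0 : ℝ) < M := hK0.trans_le hKM
  have hz : 2 ≤ 2 ^ M := by
    have : M ≠ 0 := by rintro rfl; simp at hM0
    exact Nat.le_self_pow this 2
  rw [← hM]
  refine (card_rough_le hz (x / a)).trans ?_
  have hdiv : ((x / a : ℕ) : ℝ) ≤ x / a := Nat.cast_div_le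
  have hsqrt : √K * √a ≤ M := by
    calc √(K : ℝ) * √a ≤ √M * √M := by gcongr
      _ = M := Real.mul_self_sqrt hM0.le
  have hlog : √K * √a / 2 ≤ Real.log ((2 ^ M : ℕ) : ℝ) := by
    push_cast
    rw [Real.log_pow]
    have := Real.log_two_gt_d9
    nlinarith
  have hpow : (a : ℝ) ^ (3 / 2 : ℝ) = a * √a := by
    rw [show (3 / 2 : ℝ) = 1 + 1 / 2 by norm_num, Real.rpow_add ha0, Real.rpow_one,
      Real.sqrt_eq_rpow]
  rw [hpow]
  have hsK : 0 < √(K : ℝ) := Real.sqrt_pos.2 hK0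
  have hsa : 0 < √(a : ℝ) := Real.sqrt_pos.2 ha0
  calc 28 * ((x / a : ℕ) : ℝ) / Real.log ((2 ^ M : ℕ) : ℝ)
      ≤ 28 * (x / a) / (√K * √a / 2) := by gcongr
    _ = 56 * x / √K * (1 / (a * √a)) := by
      field_simp
      ring

lemma card_exceptional_le {K : ℕ} (hK : 4 ≤ K) (x : ℕ) :
    (((Finset.Icc 1 x).filter fun n => ¬ n ∈ SC (K : ℝ)).card : ℝ) ≤
      56 * x / √K * ∑' a : ℕ, 1 / (a : ℝ) ^ (3 / 2 : ℝ) := by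
  have hsub : ((Finset.Icc 1 x).filter fun n => ¬ n ∈ SC (K : ℝ)) ⊆
      (Finset.Icc 1 x).biUnion fun a =>
        ((roughs (2 ^ max K a) (x / a)).filter (fun b => 1 < b)).image (a * ·) := by
    intro n hn
    simp only [Finset.mem_filter, Finset.mem_Icc] at hn
    obtain ⟨a, b, rfl, hb, hr⟩ := exists_rough_factor hK hn.1.1 hn.2
    have ha : 0 < a := Nat.pos_of_mul_pos_right hn.1.1
    simp only [Finset.mem_biUnion, Finset.mem_image, Finset.mem_filter, mem_roughs,
      Finset.mem_Icc]
    refine ⟨a, ⟨ha, (Nat.le_mul_of_pos_right a (by omega)).trans hn.1.2⟩, b,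
      ⟨⟨⟨hb.le, ?_⟩, hr⟩, hb⟩, rfl⟩
    rw [Nat.le_div_iff_mul_le ha, mul_comm]
    exact hn.1.2
  have h1 := (Finset.card_le_card hsub).trans Finset.card_biUnion_le
  have h2 : (((Finset.Icc 1 x).filter fun n => ¬ n ∈ SC (K : ℝ)).card : ℝ) ≤
      ∑ a ∈ Finset.Icc 1 x,
        (((roughs (2 ^ max K a) (x / a)).filter (fun b => 1 < b)).card : ℝ) := by
    refine (Nat.cast_le.2 h1).trans ?_
    push_cast
    exact Finset.sum_le_sum fun a _ => by exact_mod_cast Finset.card_image_le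
  refine h2.trans ((Finset.sum_le_sum fun a ha =>
    card_rough_term_le hK (Finset.mem_Icc.1 ha).1 x).trans ?_)
  rw [← Finset.mul_sum]
  refine mul_le_mul_of_nonneg_left ?_ (by positivity)
  exact (Real.summable_one_div_nat_rpow.2 (by norm_num)).sum_le_tsum _
    fun _ _ => by positivity

/-- There is a constant `C > 0` such that for every positive integer `x`, more
than `x/2` positive integers `n ≤ x` lie in `S_C`. -/
theorem SC_majority :
    ∃ C : ℝ, 0 < C ∧ ∀ x : ℕ, 0 < x →
      (x : ℝ) / 2 < (((Finset.Icc 1 x).filter fun n => n ∈ SC C).card : ℝ) := by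
  obtain ⟨S, hS⟩ : ∃ S : ℝ, S = ∑' a : ℕ, 1 / (a : ℝ) ^ (3 / 2 : ℝ) := ⟨_, rfl⟩
  have hS0 : 0 ≤ S := hS ▸ tsum_nonneg fun _ => by positivity
  obtain ⟨N, hN⟩ := exists_nat_ge ((112 * S + 1) ^ 2)
  obtain ⟨K, hKdef⟩ : ∃ K, K = N + 4 := ⟨_, rfl⟩
  have hK : 4 ≤ K := by omega
  have hsq : 112 * S + 1 ≤ √(K : ℝ) := by
    refine Real.le_sqrt_of_sq_le (hN.trans ?_)
    rw [hKdef]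
    push_cast
    linarith
  refine ⟨K, by exact_mod_cast (by omega : 0 < K), fun x hx => ?_⟩
  have hx0 : (0 : ℝ) < x := by exact_mod_cast hx
  have hbad := card_exceptional_le hK x
  rw [← hS] at hbad
  have hsum : (((Finset.Icc 1 x).filter fun n => n ∈ SC (K : ℝ)).card : ℝ) +
      (((Finset.Icc 1 x).filter fun n => ¬ n ∈ SC (K : ℝ)).card : ℝ) = x := by
    have := Finset.card_filter_add_card_filter_not (s := Finset.Icc 1 x)
      (fun n => n ∈ SC (K : ℝ))
    rw [Nat.card_Icc, Nat.add_sub_cancel] at this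
    exact_mod_cast this
  have hlt : 56 * x / √K * S < (x : ℝ) / 2 := by
    have hpos : 0 < √(K : ℝ) := by linarith
    rw [div_mul_eq_mul_div, div_lt_iff₀ hpos]
    nlinarith
  linarith
end

section
/- Let C > 100 be a real number and let x ≥ e^C be a positive integer. Let l = ⌊log_2(log_C(log x))⌋, and for 0 ≤ i ≤ l set y_i = exp(C^(2^(i-1))) and z_i = exp(C^(2^i)). If a positive integer n ≤ x has, for every i with 0 ≤ i ≤ l, a divisor in the interval [y_i, z_i], then every pair of consecutive divisors d < d' of n satisfies d' ≤ exp(max(C, d)). -/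
/-!
Suppose `d < d'` are consecutive divisors with `d' > exp (max C d)`. No divisor lies strictly
between them, so a divisor less than `d'` is at most `d`. The divisor in `[y 0, z 0]` is at most
`exp C < d'`, hence `y 0 ≤ d`. If `y i ≤ d`, put `t = C ^ 2 ^ (i - 1) ≥ √C > 10`; then
`d ≥ exp t > t ^ 4 = C ^ 2 ^ (i + 1)` (`pow_four_lt_exp`), so `z (i + 1) < exp d < d'`
(`exp_tower_lt_exp`), and the divisor in `[y (i + 1), z (i + 1)]` gives `y (i + 1) ≤ d`.
By induction `y l ≤ d`, and the same inequality with `i = l` gives `exp (C ^ 2 ^ (l + 1)) < d'`.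
By the choice of `l` the left side exceeds `x`, contradicting `d' ≤ n ≤ x`.
-/

lemma pow_four_lt_exp (t : ℝ) (ht : 10 < t) : t ^ 4 < Real.exp t := by
  have h5 : (10 : ℝ) < Real.exp (5 / 2) := by
    have h : Real.exp (5 / 2) ^ 2 = Real.exp 1 ^ 5 := by
      rw [← Real.exp_nat_mul, ← Real.exp_nat_mul]; norm_num
    have h1 : (2.7 : ℝ) ^ 5 ≤ Real.exp 1 ^ 5 := by
      have := Real.exp_one_gt_d9
      gcongr
      linarith
    have h0 := Real.exp_pos (5 / 2)
    have h2 : (100 : ℝ) < Real.exp (5 / 2) ^ 2 := by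
      rw [h]
      exact lt_of_lt_of_le (by norm_num) h1
    nlinarith
  have h4 : t < Real.exp (t / 4) := by
    have e : Real.exp (t / 4) = Real.exp (5 / 2) * Real.exp (t / 4 - 5 / 2) := by
      rw [← Real.exp_add]; ring_nf
    have h2 := Real.add_one_le_exp (t / 4 - 5 / 2)
    rw [e]
    nlinarith
  calc t ^ 4 < Real.exp (t / 4) ^ 4 := by gcongr
    _ = Real.exp t := by rw [← Real.exp_nat_mul]; congr 1; push_cast; ring

lemma exp_tower_lt_exp (C : ℝ) (hC : 100 < C) (i : ℕ) (d : ℝ)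
    (hd : Real.exp (C ^ ((2 : ℝ) ^ ((i : ℝ) - 1))) ≤ d) :
    Real.exp (C ^ ((2 : ℝ) ^ ((i : ℝ) + 1))) < Real.exp d := by
  have hC0 : 0 ≤ C := by linarith
  have ht : 10 < C ^ ((2 : ℝ) ^ ((i : ℝ) - 1)) := by
    have h1 : (10 : ℝ) < C ^ (1 / 2 : ℝ) := by
      rw [← Real.sqrt_eq_rpow]
      exact Real.lt_sqrt_of_sq_lt (by linarith)
    refine h1.trans_le (Real.rpow_le_rpow_of_exponent_le (by linarith) ?_)
    have h2 : (2 : ℝ) ^ (-1 : ℝ) ≤ (2 : ℝ) ^ ((i : ℝ) - 1) :=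
      Real.rpow_le_rpow_of_exponent_le (by norm_num) (by linarith [Nat.cast_nonneg (α := ℝ) i])
    rw [Real.rpow_neg_one] at h2
    linarith
  have h4 : C ^ ((2 : ℝ) ^ ((i : ℝ) + 1)) = (C ^ ((2 : ℝ) ^ ((i : ℝ) - 1))) ^ 4 := by
    rw [← Real.rpow_natCast, ← Real.rpow_mul hC0]
    congr 1
    rw [show (i : ℝ) + 1 = ((i : ℝ) - 1) + 2 by ring, Real.rpow_add (by norm_num)]
    norm_num
  rw [h4]
  exact Real.exp_lt_exp.2 ((pow_four_lt_exp _ ht).trans_le hd)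

/-- Let `C > 100`, and let `x ≥ e^C` be a positive integer. With
`l = ⌊log₂ (log_C (log x))⌋`, `y_i = exp (C^(2^(i-1)))` and `z_i = exp (C^(2^i))`,
if a positive integer `n ≤ x` has a divisor in `[y_i, z_i]` for every `0 ≤ i ≤ l`,
then every pair of consecutive divisors `d < d'` of `n` satisfies
`d' ≤ exp (max C d)`. -/
theorem consecutive_divisors_of_divisor_in_intervals
    (C : ℝ) (hC : 100 < C) (x : ℕ) (hx : 0 < x) (hxC : Real.exp C ≤ (x : ℝ))
    (l : ℕ) (hl : l = ⌊Real.logb 2 (Real.logb C (Real.log x))⌋₊)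
    (y z : ℕ → ℝ)
    (hy : ∀ i : ℕ, y i = Real.exp (C ^ ((2 : ℝ) ^ ((i : ℝ) - 1))))
    (hz : ∀ i : ℕ, z i = Real.exp (C ^ ((2 : ℝ) ^ (i : ℝ))))
    (n : ℕ) (hn : 0 < n) (hnx : n ≤ x)
    (hdiv : ∀ i : ℕ, i ≤ l → ∃ d : ℕ, d ∣ n ∧ y i ≤ (d : ℝ) ∧ (d : ℝ) ≤ z i) :
    ∀ d d' : ℕ, d ∣ n → d' ∣ n → d < d' →
      (∀ e : ℕ, e ∣ n → ¬(d < e ∧ e < d')) →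
      (d' : ℝ) ≤ Real.exp (max C (d : ℝ)) := by
  intro d d' hd hd' hlt hcons
  by_contra! hbig
  have hC' : Real.exp C < d' := (Real.exp_le_exp.2 (le_max_left _ _)).trans_lt hbig
  have hdd : Real.exp d < d' := (Real.exp_le_exp.2 (le_max_right _ _)).trans_lt hbig
  have key : ∀ e : ℕ, e ∣ n → (e : ℝ) < d' → (e : ℝ) ≤ d := by
    intro e he hed
    by_contra! h
    exact hcons e he ⟨by exact_mod_cast h, by exact_mod_cast hed⟩
  have hyd : ∀ i : ℕ, i ≤ l → y i ≤ d := by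
    intro i
    induction i with
    | zero =>
      intro h
      obtain ⟨e, he, h1, h2⟩ := hdiv 0 h
      refine h1.trans (key e he (h2.trans_lt ?_))
      simpa [hz] using hC'
    | succ k ih =>
      intro h
      obtain ⟨e, he, h1, h2⟩ := hdiv (k + 1) h
      have h3 := ih (by omega)
      rw [hy] at h3
      refine h1.trans (key e he (h2.trans_lt ?_))
      rw [hz]
      push_cast
      exact (exp_tower_lt_exp C hC k d h3).trans hdd
  have hl1 := hyd l le_rfl
  rw [hy] at hl1
  have h1 := (exp_tower_lt_exp C hC l d hl1).trans hdd
  have hd'x : (d' : ℝ) ≤ x := by exact_mod_cast (Nat.le_of_dvd hn hd').trans hnx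
  have hx0 : (0 : ℝ) < x := by exact_mod_cast hx
  have h2 : C ^ ((2 : ℝ) ^ ((l : ℝ) + 1)) < Real.log x :=
    (Real.lt_log_iff_exp_lt hx0).2 (h1.trans_le hd'x)
  have hlog : C ≤ Real.log x := (Real.le_log_iff_exp_le hx0).2 hxC
  have h3 : (2 : ℝ) ^ ((l : ℝ) + 1) < Real.logb C (Real.log x) :=
    (Real.lt_logb_iff_rpow_lt (by linarith) (by linarith)).2 h2
  have h4 : (l : ℝ) + 1 < Real.logb 2 (Real.logb C (Real.log x)) :=
    (Real.lt_logb_iff_rpow_lt (by norm_num) (lt_trans (by positivity) h3)).2 h3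
  have h5 := Nat.lt_floor_add_one (Real.logb 2 (Real.logb C (Real.log x)))
  rw [← hl] at h5
  linarith
end

section
/- The set of positive integers k such that 2^k is separable has positive lower asymptotic density. -/
/-!
The argument builds, for many `k`, an odd `m` with exactly one divisor in each dyadic block
`[2 ^ i, 2 ^ (i + 1))`, `i < k`, and no other divisors (`DyadicChain`); such an `m` interlocks with
`2 ^ k`. If `m` works for `k` and `q` is a prime just above `2 ^ k`, then `m * q ^ (c - 1)` works for
`k * c`, since its divisors are `c` shifted copies of those of `m`; the shifts must not push a divisor
out of its block, which is ensured by `q ≤ 2 ^ k * (1 + 1 / (4 * k * c))` (`Attainable.mul`).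

Primes this close to `2 ^ k` come from the zeta function. The `3-4-1` inequality, in quantitative
form, gives a zero-free region of width `(log T)⁻⁹` up to constants, so by Cauchy's estimate the
`j`-th derivative of `-ζ'/ζ - ζ` on the line `re s = 1` is at most `j! * (C * (log |t|) ^ 9) ^ (j + 1)`.
By Fourier inversion against a triangular bump, this bounds the sum of `(Λ n - 1) * (log n) ^ j / n`
over `log n` within `δ` of `u₀`, whereas without primes there the sum would be about
`-δ * u₀ ^ j`. With `u₀` close to `A * log 2`, `δ = exp (-(log A) ^ 5)` and `j` close to
`4 * (log A) ^ 4` this yields a prime `q > 2 ^ A` with `log q - A * log 2 < 2 * δ`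
(`exists_prime_gt_two_pow`). Hence an attainable `A` with `log A ≥ 1500` may be multiplied by any `c`
with `log c ≤ (log A) ^ 4` (`Attainable.mul_of_le`). To reach this range, one starts from the divisors
of `231 = 3 * 7 * 11` and uses three explicit primes, the last two certified by Proth's criterion
(`attainable_base`).

Now fix a large attainable `k`. The multiple `k * b` is attainable as soon as the prime factors of
`b` can be multiplied onto `k` in increasing order, each `p` with `log p ≤ (log A) ^ 4` for the
product `A` formed before it. This holds if `b` is `Graded`: cut the primes into blocks with
logarithms repeatedly squared, and require a prime factor of `b` in the block preceding any block
beyond the first that contains a prime factor of `b`. By Chebyshev's bounds the reciprocals of the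
primes in the `i`-th block have sum at least a constant times `2 ^ i`, so by Turán's second moment
bound (`turan`) only `O(x / 2 ^ i)` of the integers up to `x` miss that block; with the blocks starting
high enough, at least half of all `b ≤ x` are graded, and the lower density is at least
`1 / (4 * k)`.
-/

open scoped Classical

/-! ### Dyadic chains and attainable exponents -/

/-- `DyadicChain m k ρ`: the number `m` is odd, each dyadic block `[2^i, 2^(i+1))` with `i < k`
contains exactly one divisor `d` of `m`, all divisors of `m` lie in these blocks, and moreover
`d ≤ ρ * 2^i` for the divisor in block `i`. -/
structure DyadicChain (m k : ℕ) (ρ : ℝ) : Prop where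
  odd : Odd m
  block : ∀ d, d ∣ m → ∃ i < k, 2 ^ i ≤ d ∧ (d : ℝ) ≤ ρ * 2 ^ i
  exists_dvd : ∀ i < k, ∃ d, d ∣ m ∧ 2 ^ i ≤ d ∧ d < 2 ^ (i + 1)
  unique : ∀ i d d', d ∣ m → d' ∣ m → 2 ^ i ≤ d → d < 2 ^ (i + 1) → 2 ^ i ≤ d' →
    d' < 2 ^ (i + 1) → d = d'

lemma dyadic_index_unique {a b d : ℕ} (h1 : 2 ^ a ≤ d) (h2 : d < 2 ^ (a + 1)) (h3 : 2 ^ b ≤ d)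
    (h4 : d < 2 ^ (b + 1)) : a = b := by
  have := (Nat.pow_lt_pow_iff_right (a := 2) (by norm_num)).1 (h1.trans_lt h4)
  have := (Nat.pow_lt_pow_iff_right (a := 2) (by norm_num)).1 (h3.trans_lt h2)
  omega

lemma lt_two_pow_succ_of_le {d i : ℕ} {ρ : ℝ} (hρ : ρ < 2) (h : (d : ℝ) ≤ ρ * 2 ^ i) :
    d < 2 ^ (i + 1) := by
  have : (d : ℝ) < 2 ^ (i + 1) := by
    rw [pow_succ']
    exact h.trans_lt (mul_lt_mul_of_pos_right hρ (by positivity))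
  exact_mod_cast this

lemma DyadicChain.mono {m k : ℕ} {ρ ρ' : ℝ} (h : DyadicChain m k ρ) (hρ : ρ ≤ ρ') :
    DyadicChain m k ρ' where
  odd := h.odd
  exists_dvd := h.exists_dvd
  unique := h.unique
  block d hd := by
    obtain ⟨i, hi, h1, h2⟩ := h.block d hd
    exact ⟨i, hi, h1, h2.trans (mul_le_mul_of_nonneg_right hρ (by positivity))⟩

lemma DyadicChain.separable {m k : ℕ} {ρ : ℝ} (hρ : ρ < 2) (h : DyadicChain m k ρ) :
    Separable (2 ^ k) := by
  refine ⟨m, h.odd.pos, by positivity, ?_, ?_⟩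
  · intro d d' hd hd' h1 hlt hcons
    obtain ⟨i, hi, rfl⟩ := (Nat.dvd_prime_pow Nat.prime_two).1 hd
    obtain ⟨i', hi', rfl⟩ := (Nat.dvd_prime_pow Nat.prime_two).1 hd'
    have hii : i < i' := (Nat.pow_lt_pow_iff_right (by norm_num)).1 hlt
    have hi0 : i ≠ 0 := by rintro rfl; simp at h1
    obtain ⟨e, he, h2, h3⟩ := h.exists_dvd i (by omega)
    refine ⟨e, he, lt_of_le_of_ne h2 ?_, h3.trans_le (Nat.pow_le_pow_right (by norm_num) hii)⟩
    rintro rfl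
    have : 2 ∣ m := (dvd_pow_self 2 hi0).trans he
    exact (Nat.not_even_iff_odd.2 h.odd) (even_iff_two_dvd.2 this)
  · intro d d' hd hd' h1 hlt _
    obtain ⟨i, hi, h2, h3⟩ := h.block d hd
    obtain ⟨i', hi', h2', h3'⟩ := h.block d' hd'
    have h3 := lt_two_pow_succ_of_le hρ h3
    have h3' := lt_two_pow_succ_of_le hρ h3'
    have hii : i < i' := by
      by_contra hcon
      rcases (not_lt.1 hcon).eq_or_lt with heq | hl
      · subst heq
        exact hlt.ne (h.unique _ d d' hd hd' h2 h3 h2' h3')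
      · have : 2 ^ (i' + 1) ≤ 2 ^ i := Nat.pow_le_pow_right (by norm_num) hl
        omega
    refine ⟨2 ^ i', pow_dvd_pow _ hi'.le, h3.trans_le (Nat.pow_le_pow_right (by norm_num) hii),
      lt_of_le_of_ne h2' ?_⟩
    rintro rfl
    have : 2 ∣ m := (dvd_pow_self 2 (by omega)).trans hd'
    exact (Nat.not_even_iff_odd.2 h.odd) (even_iff_two_dvd.2 this)

/-- Multiplying by `q ^ (c - 1)`, where `q` is a prime slightly above `2 ^ k`, replaces the pattern
of length `k` by `c` shifted copies of it. -/
lemma DyadicChain.step {m k c q : ℕ} {ρ ρ' : ℝ} (h : DyadicChain m k ρ) (hk : 0 < k)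
    (hρ : 0 ≤ ρ) (hρ2 : ρ < 2) (hq : q.Prime) (hqk : 2 ^ k < q) (hc : 0 < c)
    (hρ' : ρ * ((q : ℝ) / 2 ^ k) ^ (c - 1) ≤ ρ') (hρ'2 : ρ' < 2) :
    DyadicChain (m * q ^ (c - 1)) (k * c) ρ' := by
  have hqr : (1 : ℝ) ≤ (q : ℝ) / 2 ^ k := by
    rw [one_le_div (by positivity)]; exact_mod_cast hqk.le
  have hm : ∀ d, d ∣ m → d < 2 ^ k := by
    intro d hd
    obtain ⟨i, hi, -, h2⟩ := h.block d hd
    exact (lt_two_pow_succ_of_le hρ2 h2).trans_le (Nat.pow_le_pow_right (by norm_num) hi)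
  have hq2 : q ≠ 2 := by
    rintro rfl
    have : 2 ^ 1 ≤ 2 ^ k := Nat.pow_le_pow_right (by norm_num) hk
    omega
  -- position of the divisor `d * q ^ j`
  have key : ∀ d j, d ∣ m → j ≤ c - 1 → ∃ i < k, 2 ^ i ≤ d ∧ d < 2 ^ (i + 1) ∧
      2 ^ (i + k * j) ≤ d * q ^ j ∧ ((d * q ^ j : ℕ) : ℝ) ≤ ρ' * 2 ^ (i + k * j) := by
    intro d j hd hj
    obtain ⟨i, hi, h1, h2⟩ := h.block d hd
    refine ⟨i, hi, h1, lt_two_pow_succ_of_le hρ2 h2, ?_, ?_⟩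
    · rw [pow_add, pow_mul]
      exact Nat.mul_le_mul h1 (Nat.pow_le_pow_left hqk.le _)
    · have e1 : (q : ℝ) ^ j = ((q : ℝ) / 2 ^ k) ^ j * 2 ^ (k * j) := by
        rw [div_pow, ← pow_mul, div_mul_cancel₀ _ (by positivity)]
      push_cast
      rw [e1, pow_add]
      calc (d : ℝ) * (((q : ℝ) / 2 ^ k) ^ j * 2 ^ (k * j))
          ≤ (ρ * 2 ^ i) * (((q : ℝ) / 2 ^ k) ^ (c - 1) * 2 ^ (k * j)) := by
            gcongr
        _ = (ρ * ((q : ℝ) / 2 ^ k) ^ (c - 1)) * (2 ^ i * 2 ^ (k * j)) := by ring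
        _ ≤ _ := by gcongr
  have hdv : ∀ d, d ∣ m * q ^ (c - 1) → ∃ e j, e ∣ m ∧ j ≤ c - 1 ∧ d = e * q ^ j := by
    intro d hd
    obtain ⟨e, f, he, hf, rfl⟩ := (Nat.dvd_mul.1 hd)
    obtain ⟨j, hj, rfl⟩ := (Nat.dvd_prime_pow hq).1 hf
    exact ⟨e, j, he, hj, rfl⟩
  refine ⟨h.odd.mul ((hq.odd_of_ne_two hq2).pow), ?_, ?_, ?_⟩
  · intro d hd
    obtain ⟨e, j, he, hj, rfl⟩ := hdv d hd
    obtain ⟨i, hi, -, -, h3, h4⟩ := key e j he hj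
    refine ⟨_, ?_, h3, h4⟩
    calc i + k * j < k + k * j := by omega
      _ = k * (j + 1) := by ring
      _ ≤ k * c := Nat.mul_le_mul_left _ (by omega)
  · intro i hi
    obtain ⟨d, hd, h1, h2⟩ := h.exists_dvd (i % k) (Nat.mod_lt _ hk)
    have hj : i / k < c := Nat.div_lt_of_lt_mul hi
    obtain ⟨i', hi', h1', h2', h3, h4⟩ := key d (i / k) hd (by omega)
    have : i' = i % k := dyadic_index_unique h1' h2' h1 h2
    subst this
    rw [Nat.mod_add_div] at h3 h4
    exact ⟨_, mul_dvd_mul hd (pow_dvd_pow _ (by omega)), h3, lt_two_pow_succ_of_le hρ'2 h4⟩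
  · intro i d d' hd hd' h1 h2 h1' h2'
    obtain ⟨e, j, he, hj, rfl⟩ := hdv d hd
    obtain ⟨e', j', he', hj', rfl⟩ := hdv d' hd'
    obtain ⟨a, ha, ha1, ha2, h3, h4⟩ := key e j he hj
    obtain ⟨a', ha', ha1', ha2', h3', h4'⟩ := key e' j' he' hj'
    have e1 := dyadic_index_unique h1 h2 h3 (lt_two_pow_succ_of_le hρ'2 h4)
    have e2 := dyadic_index_unique h1' h2' h3' (lt_two_pow_succ_of_le hρ'2 h4')
    have e3 : a + k * j = a' + k * j' := by omega
    have e4 : a = a' := by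
      have := congrArg (· % k) e3
      simpa [Nat.add_mul_mod_self_left, Nat.mod_eq_of_lt ha, Nat.mod_eq_of_lt ha'] using this
    subst e4
    have e5 : j = j' := Nat.eq_of_mul_eq_mul_left hk (by omega)
    subst e5
    rw [h.unique a e e' he he' ha1 ha2 ha1' ha2']

/-- The invariant carried through the construction: the patterns of length `k` whose divisors are
at most the fraction `k / (k + 1)` of the upper end of their blocks. -/
def Attainable (k : ℕ) : Prop :=
  0 < k ∧ ∃ m, DyadicChain m k (2 * k / (k + 1))

lemma two_mul_div_lt (k : ℕ) : (2 * k / (k + 1) : ℝ) < 2 := by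
  rw [div_lt_iff₀ (by positivity)]; linarith

lemma Attainable.separable {k : ℕ} (h : Attainable k) : Separable (2 ^ k) := by
  obtain ⟨-, m, hm⟩ := h
  exact hm.separable (two_mul_div_lt k)

lemma Attainable.mul {k c q : ℕ} (h : Attainable k) (hc : 0 < c) (hq : q.Prime)
    (hqk : 2 ^ k < q) (hqe : (q : ℝ) ≤ 2 ^ k * (1 + 1 / (4 * k * c))) : Attainable (k * c) := by
  obtain ⟨hk, m, hm⟩ := h
  refine ⟨Nat.mul_pos hk hc, _, hm.step hk (by positivity) (two_mul_div_lt k) hq hqk hc ?_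
    (two_mul_div_lt _)⟩
  have hk' : (0 : ℝ) < k := by exact_mod_cast hk
  have hc' : (1 : ℝ) ≤ c := by exact_mod_cast hc
  have h1 : (q : ℝ) / 2 ^ k ≤ 1 + 1 / (4 * k * c) := by
    rw [div_le_iff₀ (by positivity)]; linarith
  set x : ℝ := (c - 1) * (1 / (4 * k * c)) with hx
  have hx0 : 0 ≤ x := mul_nonneg (by linarith) (by positivity)
  have hk1 : (1 : ℝ) ≤ k := by exact_mod_cast hk
  have hx1 : x ≤ 1 / 2 := by
    rw [hx, mul_one_div, div_le_iff₀ (by positivity)]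
    nlinarith
  have h2 : ((q : ℝ) / 2 ^ k) ^ (c - 1) ≤ 1 + 2 * x := by
    calc ((q : ℝ) / 2 ^ k) ^ (c - 1) ≤ (Real.exp (1 / (4 * k * c))) ^ (c - 1) := by
          gcongr
          refine h1.trans ?_
          linarith [Real.add_one_le_exp (1 / (4 * k * c : ℝ))]
      _ = Real.exp x := by
          rw [← Real.exp_nat_mul, Nat.cast_sub hc, hx]; simp
      _ ≤ 1 / (1 - x) := by
          rw [le_div_iff₀ (by linarith)]
          have := Real.one_sub_le_exp_neg x
          calc Real.exp x * (1 - x) ≤ Real.exp x * Real.exp (-x) := by gcongr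
            _ = 1 := by rw [← Real.exp_add]; simp
      _ ≤ 1 + 2 * x := by
          rw [div_le_iff₀ (by linarith)]; nlinarith
  calc (2 * k / (k + 1) : ℝ) * ((q : ℝ) / 2 ^ k) ^ (c - 1)
      ≤ (2 * k / (k + 1) : ℝ) * (1 + 2 * x) := by gcongr
    _ ≤ 2 * ((k * c : ℕ) : ℝ) / (((k * c : ℕ) : ℝ) + 1) := by
        push_cast
        rw [hx, le_div_iff₀ (by positivity), div_mul_eq_mul_div, div_mul_eq_mul_div,
          div_le_iff₀ (by positivity)]
        have e : (1 + 2 * ((c - 1) * (1 / (4 * k * c))) : ℝ) = (2 * k * c + (c - 1)) / (2 * k * c) := by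
          field_simp; ring
        rw [e, mul_div_assoc', div_mul_eq_mul_div, div_le_iff₀ (by positivity)]
        have : 0 ≤ (k:ℝ) * (c - 1) * (k * c - 1) := by
          have : (1:ℝ) ≤ k * c := by nlinarith
          have : (0:ℝ) ≤ k * c - 1 := by linarith
          have : (0:ℝ) ≤ c - 1 := by linarith
          positivity
        nlinarith

/-! ### The starting point: explicit Proth primes -/

/-- Proth's criterion. -/
lemma proth_prime {q s r a : ℕ} (hq : q = 2 ^ (s + 1) * r + 1) (hr0 : 0 < r) (hr : r < 2 ^ (s + 1))
    (ha : a ^ (2 ^ s * r) % q = q - 1) : q.Prime := by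
  by_contra hnp
  have hq1 : 1 < q := by
    have : 0 < 2 ^ (s + 1) * r := by positivity
    omega
  set p := q.minFac with hp
  have hpp : p.Prime := Nat.minFac_prime hq1.ne'
  have hpq : p ∣ q := Nat.minFac_dvd q
  have hp2 : p ^ 2 ≤ q := Nat.minFac_sq_le_self (by omega) hnp
  have : Fact p.Prime := ⟨hpp⟩
  have hpne2 : p ≠ 2 := by
    intro h
    rw [h, hq, pow_succ', mul_assoc] at hpq
    omega
  have : Fact (2 < p) := ⟨lt_of_le_of_ne hpp.two_le (Ne.symm hpne2)⟩
  set b : ZMod p := (a : ZMod p) ^ r with hb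
  have h1 : b ^ 2 ^ s = -1 := by
    have e : a ^ (2 ^ s * r) + 1 = q * (a ^ (2 ^ s * r) / q + 1) := by
      have := Nat.div_add_mod (a ^ (2 ^ s * r)) q
      rw [ha] at this
      rw [mul_add, mul_one]; omega
    have h0 : ((q : ℕ) : ZMod p) = 0 := (ZMod.natCast_eq_zero_iff _ _).2 hpq
    have e' := congrArg (fun n : ℕ => (n : ZMod p)) e
    simp only [Nat.cast_add, Nat.cast_mul, h0, zero_mul, Nat.cast_pow, Nat.cast_one] at e'
    rw [hb, ← pow_mul, mul_comm r]
    exact eq_neg_of_add_eq_zero_left e'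
  have h2 : orderOf b = 2 ^ (s + 1) := by
    apply orderOf_eq_prime_pow
    · rw [h1]; exact ZMod.neg_one_ne_one
    · rw [pow_succ, pow_mul, h1]; norm_num
  have h3 : orderOf b ∣ p - 1 := by
    apply ZMod.orderOf_dvd_card_sub_one
    intro h0
    rw [h0, zero_pow (by positivity)] at h1
    exact (neg_ne_zero.2 one_ne_zero) h1.symm
  rw [h2] at h3
  have h4 := Nat.le_of_dvd (Nat.sub_pos_of_lt hpp.one_lt) h3
  have h5 : 2 ^ (s + 1) + 1 ≤ p := by have := hpp.one_lt; omega
  have h6 : 2 ^ (s + 1) * r ≤ 2 ^ (s + 1) * 2 ^ (s + 1) := Nat.mul_le_mul_left _ hr.le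
  nlinarith

/-- `2 ^ k` successive squarings modulo `q`. Written with the recursor, and using its argument
only once per squaring, so that the kernel evaluates it with shallow recursion. -/
def sqBlock (q k : ℕ) : ℕ → ℕ :=
  Nat.rec (motive := fun _ => ℕ → ℕ) (fun x => x ^ 2 % q) (fun _ f x => f (f x)) k

lemma sqBlock_modEq (q k x : ℕ) : sqBlock q k x ≡ x ^ 2 ^ 2 ^ k [MOD q] := by
  induction k generalizing x with
  | zero => exact Nat.mod_modEq _ _
  | succ k ih =>
    have h := (ih (sqBlock q k x)).trans ((ih x).pow _)
    rwa [← pow_mul, ← pow_add, ← two_mul, ← pow_succ'] at h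

/-- `sqBlocks q l x` squares `x` modulo `q` a total of `∑ 2 ^ k` times, over the `k` in `l`. -/
def sqBlocks (q : ℕ) (l : List ℕ) (x : ℕ) : ℕ := l.foldr (fun k y => sqBlock q k y) x

lemma sqBlocks_modEq (q : ℕ) (l : List ℕ) (x : ℕ) :
    sqBlocks q l x ≡ x ^ 2 ^ (l.map (2 ^ ·)).sum [MOD q] := by
  induction l with
  | nil => simp [sqBlocks, Nat.ModEq.refl]
  | cons k l ih =>
    have h := (sqBlock_modEq q k (sqBlocks q l x)).trans (ih.pow _)
    rw [← pow_mul, ← pow_add] at h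
    rw [List.map_cons, List.sum_cons, add_comm]
    exact h

/-- Proth's criterion for `q = 2 ^ (s + 1) * (2 ^ t + u) + 1`, in a form suited to evaluation. -/
lemma proth_prime' {q s t u a : ℕ} (l l' : List ℕ) (hl : (l.map (2 ^ ·)).sum = t)
    (hl' : (l'.map (2 ^ ·)).sum = s) (hq : q = 2 ^ (s + 1) * (2 ^ t + u) + 1)
    (hr : 2 ^ t + u < 2 ^ (s + 1))
    (ha : Nat.beq (sqBlocks q l' (sqBlocks q l a * a ^ u) % q) (q - 1) = true) : q.Prime := by
  refine proth_prime (a := a) hq (by positivity) hr ?_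
  have h1 := sqBlocks_modEq q l' (sqBlocks q l a * a ^ u)
  have h2 := (((sqBlocks_modEq q l a).mul_right (a ^ u)).pow (2 ^ s))
  rw [hl'] at h1
  rw [hl, ← pow_add, ← pow_mul, mul_comm _ (2 ^ s)] at h2
  exact Eq.trans (h1.trans h2).symm (Nat.eq_of_beq_eq_true ha)

lemma prime_q1 : (2 ^ 128 + 323 * 2 ^ 66 + 1).Prime :=
  proth_prime' (s := 65) (t := 62) (u := 323) (a := 7) [1, 2, 3, 4, 5] [0, 6] (by norm_num)
    (by norm_num) (by norm_num) (by norm_num) (by decide +kernel)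

set_option exponentiation.threshold 10000 in
lemma prime_q2 : (2 ^ 8192 + 2169 * 2 ^ 4100 + 1).Prime :=
  proth_prime' (s := 4099) (t := 4092) (u := 2169) (a := 3) [2, 3, 4, 5, 6, 7, 8, 9, 10, 11]
    [0, 1, 12] (by norm_num) (by norm_num) (by norm_num) (by norm_num) (by decide +kernel)

lemma dyadicChain_base : DyadicChain 231 8 (181 / 100) where
  odd := by decide
  block d hd := by
    have hd' : d ∈ Nat.divisors 231 := by simpa using hd
    have : Nat.divisors 231 = {1, 3, 7, 11, 21, 33, 77, 231} := by decide +kernel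
    rw [this] at hd'
    simp only [Finset.mem_insert, Finset.mem_singleton] at hd'
    rcases hd' with rfl | rfl | rfl | rfl | rfl | rfl | rfl | rfl
    exacts [⟨0, by norm_num⟩, ⟨1, by norm_num⟩, ⟨2, by norm_num⟩, ⟨3, by norm_num⟩,
      ⟨4, by norm_num⟩, ⟨5, by norm_num⟩, ⟨6, by norm_num⟩, ⟨7, by norm_num⟩]
  exists_dvd i hi := by
    interval_cases i
    exacts [⟨1, by norm_num⟩, ⟨3, by norm_num⟩, ⟨7, by norm_num⟩, ⟨11, by norm_num⟩,
      ⟨21, by norm_num⟩, ⟨33, by norm_num⟩, ⟨77, by norm_num⟩, ⟨231, by norm_num⟩]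
  unique i d d' hd hd' h1 h2 h3 h4 := by
    have hm : d ∈ Nat.divisors 231 := by simpa using hd
    have hm' : d' ∈ Nat.divisors 231 := by simpa using hd'
    have key : ∀ d ∈ Nat.divisors 231, ∀ d' ∈ Nat.divisors 231, Nat.log 2 d = Nat.log 2 d' →
      d = d' := by decide +kernel
    refine key d hm d' hm' ?_
    rw [Nat.log_eq_of_pow_le_of_lt_pow h1 h2, Nat.log_eq_of_pow_le_of_lt_pow h3 h4]

lemma attainable_128 : Attainable 128 := by
  refine ⟨by norm_num, _, dyadicChain_base.step (c := 16) (q := 257) (by norm_num) (by norm_num)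
    (by norm_num) (by norm_num) (by norm_num) (by norm_num) ?_ ?_⟩ <;> norm_num

lemma attainable_8192 : Attainable 8192 :=
  attainable_128.mul (c := 64) (by norm_num) prime_q1 (by norm_num) (by norm_num)

set_option exponentiation.threshold 10000 in
lemma attainable_base : Attainable (8192 * 2 ^ 2300) := by
  refine attainable_8192.mul (c := 2 ^ 2300) (by positivity) prime_q2 ?_ ?_
  · norm_num
  · have h : (2169 * 2 ^ 4100 + 1 : ℝ) ≤ 2 ^ 8192 * (1 / (4 * 8192 * 2 ^ 2300)) := by
      rw [mul_one_div, le_div_iff₀ (by positivity)]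
      norm_num
    push_cast
    linarith

/-! ### The Riemann zeta function slightly to the left of the line `re s = 1` -/

/-- The terms of the series `(s - 1) ζ(s) = 1 + ∑ zetaTerm n s`, which converges for
`0 < re s`. -/
noncomputable def zetaTerm (n : ℕ) (s : ℂ) : ℂ :=
  (s - 1) * ((n + 1 : ℝ) : ℂ) ^ (-s) - ((n + 1 : ℝ) : ℂ) ^ (1 - s) + ((n + 1 + 1 : ℝ) : ℂ) ^ (1 - s)

lemma norm_ofReal_cpow_neg {x : ℝ} (hx : 0 < x) (s : ℂ) : ‖(x : ℂ) ^ (-s)‖ = x ^ (-s.re) := by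
  rw [Complex.norm_cpow_eq_rpow_re_of_pos hx]; simp

lemma norm_cpow_sub_le {s : ℂ} (hs : 0 < s.re) {x u : ℝ} (hx : 0 < x) (hxu : x ≤ u)
    (hu : u ≤ x + 1) :
    ‖(x : ℂ) ^ (-s) - (u : ℂ) ^ (-s)‖ ≤ min 2 (‖s‖ / x) * x ^ (-s.re) := by
  have hmono : ∀ v, x ≤ v → ∀ a : ℝ, a ≤ 0 → v ^ a ≤ x ^ a := fun v hv a ha =>
    Real.rpow_le_rpow_of_nonpos hx hv ha
  rw [min_mul_of_nonneg _ _ (by positivity), le_min_iff]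
  constructor
  · refine (norm_sub_le _ _).trans ?_
    rw [norm_ofReal_cpow_neg hx, norm_ofReal_cpow_neg (hx.trans_le hxu)]
    linarith [hmono u hxu (-s.re) (by linarith)]
  · have hs0 : -s ≠ 0 := by
      intro h; rw [neg_eq_zero] at h; simp [h] at hs
    have := norm_image_sub_le_of_norm_deriv_le_segment' (a := x) (b := x + 1)
      (f := fun y : ℝ => (y : ℂ) ^ (-s)) (f' := fun y : ℝ => -s * (y : ℂ) ^ (-s - 1))
      (C := ‖s‖ * x ^ (-s.re - 1))
      (fun y hy => (hasDerivAt_ofReal_cpow_const (hx.trans_le hy.1).ne' hs0).hasDerivWithinAt)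
      (fun y hy => by
        rw [norm_mul, norm_neg, Complex.norm_cpow_eq_rpow_re_of_pos (hx.trans_le hy.1)]
        gcongr
        simpa using hmono y hy.1 (-s.re - 1) (by linarith)) u ⟨hxu, hu⟩
    rw [norm_sub_rev]
    refine this.trans ?_
    rw [Real.rpow_sub_one hx.ne']
    calc ‖s‖ * (x ^ (-s.re) / x) * (u - x) ≤ ‖s‖ * (x ^ (-s.re) / x) * 1 := by
          gcongr; linarith
      _ = _ := by ring

lemma norm_zetaTerm_le {s : ℂ} (hs : 0 < s.re) (n : ℕ) :
    ‖zetaTerm n s‖ ≤ ‖s - 1‖ * (min 2 (‖s‖ / (n + 1)) * (n + 1 : ℝ) ^ (-s.re)) := by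
  rcases eq_or_ne s 1 with rfl | h1
  · simp [zetaTerm]
  set x : ℝ := n + 1 with hx
  have hx0 : 0 < x := by positivity
  have h1' : 1 - s ≠ 0 := sub_ne_zero.2 h1.symm
  have := norm_image_sub_le_of_norm_deriv_le_segment' (a := x) (b := x + 1)
      (f := fun y : ℝ => (y : ℂ) ^ (1 - s) + (y : ℂ) * ((s - 1) * (x : ℂ) ^ (-s)))
      (f' := fun y : ℝ => (1 - s) * (y : ℂ) ^ (1 - s - 1) + 1 * ((s - 1) * (x : ℂ) ^ (-s)))
      (C := ‖s - 1‖ * (min 2 (‖s‖ / x) * x ^ (-s.re)))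
      (fun y hy => ((hasDerivAt_ofReal_cpow_const (hx0.trans_le hy.1).ne' h1').add
        (Complex.ofRealCLM.hasDerivAt.mul_const _)).hasDerivWithinAt)
      (fun y hy => by
        have e : (1 - s) * (y : ℂ) ^ (1 - s - 1) + 1 * ((s - 1) * (x : ℂ) ^ (-s))
          = (s - 1) * ((x : ℂ) ^ (-s) - (y : ℂ) ^ (-s)) := by
            rw [show 1 - s - 1 = -s by ring]; ring
        rw [e, norm_mul]
        gcongr
        exact norm_cpow_sub_le hs hx0 hy.1 hy.2.le) (x + 1) ⟨by linarith, le_rfl⟩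
  rw [show x + 1 - x = 1 by ring, mul_one] at this
  refine le_trans (le_of_eq ?_) this
  rw [zetaTerm, ← hx]
  push_cast
  congr 1
  ring

lemma differentiable_zetaTerm (n : ℕ) : Differentiable ℂ (zetaTerm n) := by
  unfold zetaTerm
  intro s
  have h : ((n + 1 : ℝ) : ℂ) ≠ 0 := by exact_mod_cast (by positivity : (n + 1 : ℝ) ≠ 0)
  have h' : ((n + 1 + 1 : ℝ) : ℂ) ≠ 0 := by exact_mod_cast (by positivity : (n + 1 + 1 : ℝ) ≠ 0)
  exact (((differentiableAt_id.sub_const _).mul (differentiableAt_id.neg.const_cpow (Or.inl h))).sub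
    ((differentiableAt_id.const_sub _).const_cpow (Or.inl h))).add
    ((differentiableAt_id.const_sub _).const_cpow (Or.inl h'))

lemma summable_nat_add_one_rpow_neg {a : ℝ} (ha : 1 < a) :
    Summable (fun n : ℕ => (n + 1 : ℝ) ^ (-a)) := by
  have := (summable_nat_add_iff (f := fun n : ℕ => (n : ℝ) ^ (-a)) 1).2
    (Real.summable_nat_rpow.2 (by linarith))
  simpa using this

lemma tsum_nat_add_one_rpow_neg_le {a : ℝ} (ha : 1 < a) :
    ∑' n : ℕ, (n + 1 : ℝ) ^ (-a) ≤ 1 + 1 / (a - 1) := by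
  have h := ZetaAsymptotics.zeta_limit_aux1 ha
  have h2 : 0 ≤ ZetaAsymptotics.termTSum a :=
    tsum_nonneg fun n => ZetaAsymptotics.term_nonneg _ _
  have h3 : ∑' n : ℕ, (n + 1 : ℝ) ^ (-a) = ∑' n : ℕ, 1 / (n + 1 : ℝ) ^ a :=
    tsum_congr fun n => by rw [Real.rpow_neg (by positivity), one_div]
  rw [h3]
  nlinarith

lemma hasSum_zetaTerm_of_one_lt {s : ℂ} (hs : 1 < s.re) :
    HasSum (fun n => zetaTerm n s) ((s - 1) * riemannZeta s - 1) := by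
  have hsum : Summable (fun n => zetaTerm n s) := by
    refine Summable.of_norm_bounded
      ((summable_nat_add_one_rpow_neg hs).mul_left (‖s - 1‖ * 2)) fun n => ?_
    refine (norm_zetaTerm_le (by linarith) n).trans ?_
    rw [mul_assoc]
    gcongr
    exact min_le_left _ _
  rw [hsum.hasSum_iff_tendsto_nat]
  have hpart : ∀ N : ℕ, ∑ n ∈ Finset.range N, zetaTerm n s =
      (s - 1) * ∑ n ∈ Finset.range N, ((n + 1 : ℝ) : ℂ) ^ (-s) - 1
        + ((N + 1 : ℝ) : ℂ) ^ (1 - s) := by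
    intro N
    induction N with
    | zero => simp
    | succ N ih =>
      rw [Finset.sum_range_succ, Finset.sum_range_succ, ih, zetaTerm]
      push_cast
      ring
  simp_rw [hpart]
  have h1 : Filter.Tendsto (fun N : ℕ => ∑ n ∈ Finset.range N, ((n + 1 : ℝ) : ℂ) ^ (-s))
      Filter.atTop (nhds (riemannZeta s)) := by
    have hz : riemannZeta s = ∑' n : ℕ, ((n + 1 : ℝ) : ℂ) ^ (-s) := by
      rw [zeta_eq_tsum_one_div_nat_add_one_cpow hs]
      exact tsum_congr fun n => by rw [Complex.cpow_neg, one_div]; push_cast; rfl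
    rw [hz]
    refine (Summable.hasSum ?_).tendsto_sum_nat
    refine Summable.of_norm_bounded (summable_nat_add_one_rpow_neg hs) fun n => ?_
    rw [norm_ofReal_cpow_neg (by positivity)]
  have h2 : Filter.Tendsto (fun N : ℕ => ((N + 1 : ℝ) : ℂ) ^ (1 - s)) Filter.atTop (nhds 0) := by
    rw [tendsto_zero_iff_norm_tendsto_zero]
    have : (fun N : ℕ => ‖((N + 1 : ℝ) : ℂ) ^ (1 - s)‖) =
        fun N : ℕ => ((N + 1 : ℝ)) ^ (-(s.re - 1)) := by
      ext N
      rw [Complex.norm_cpow_eq_rpow_re_of_pos (by positivity)]; simp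
    rw [this]
    exact (tendsto_rpow_neg_atTop (by linarith)).comp
      (Filter.tendsto_atTop_add_const_right _ _ tendsto_natCast_atTop_atTop)
  simpa using ((h1.const_mul (s - 1)).sub_const 1).add h2

lemma summable_zetaTerm_bound {a : ℝ} (ha : 0 < a) :
    Summable (fun n : ℕ => (n + 1 : ℝ) ^ (-a - 1)) := by
  have := summable_nat_add_one_rpow_neg (a := a + 1) (by linarith)
  simpa [neg_add, sub_eq_add_neg, add_comm] using this

lemma sub_one_mul_riemannZeta₀_eq {s : ℂ} (hs : 1 / 2 < s.re) :
    (s - 1) * riemannZeta₀ s = ∑' n, zetaTerm n s := by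
  set R : ℝ := ‖s‖ + 3 with hR
  set U : Set ℂ := {z | 1 / 2 < z.re} ∩ Metric.ball 0 R with hU
  have hUo : IsOpen U := (isOpen_lt continuous_const Complex.continuous_re).inter Metric.isOpen_ball
  have hUc : Convex ℝ U := (convex_halfSpace_re_gt _).inter (convex_ball _ _)
  have hd : DifferentiableOn ℂ (fun w : ℂ => ∑' n, zetaTerm n w) U := by
    refine Complex.differentiableOn_tsum_of_summable_norm
      ((summable_zetaTerm_bound (a := 1 / 2) (by norm_num)).mul_left ((R + 1) * R))
      (fun n => (differentiable_zetaTerm n).differentiableOn) hUo fun n w hw => ?_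
    have hw1 : 1 / 2 < w.re := hw.1
    have hw2 : ‖w‖ < R := by simpa using hw.2
    refine (norm_zetaTerm_le (by linarith) n).trans ?_
    have hn : (1 : ℝ) ≤ n + 1 := by linarith [n.cast_nonneg (α := ℝ)]
    calc ‖w - 1‖ * (min 2 (‖w‖ / (n + 1)) * (n + 1 : ℝ) ^ (-w.re))
        ≤ (R + 1) * ((R / (n + 1)) * (n + 1 : ℝ) ^ (-(1 / 2) : ℝ)) := by
          gcongr
          · refine (norm_sub_le _ _).trans ?_
            simp; linarith
          · exact (min_le_right _ _).trans (by gcongr)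
      _ = _ := by
          rw [Real.rpow_sub_one (by positivity)]; ring
  have heq : Set.EqOn (fun w => (w - 1) * riemannZeta₀ w) (fun w => ∑' n, zetaTerm n w) U := by
    refine AnalyticOnNhd.eqOn_of_preconnected_of_eventuallyEq (z₀ := 2) ?_
      (hd.analyticOnNhd hUo) hUc.isPreconnected ?_ ?_
    · refine DifferentiableOn.analyticOnNhd (fun w _ => ?_) hUo
      exact (((differentiableAt_id.sub_const 1).mul
        (differentiable_riemannZeta₀ w))).differentiableWithinAt
    · refine ⟨by norm_num, ?_⟩
      simp only [Metric.mem_ball, dist_zero_right, Complex.norm_ofNat, hR]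
      linarith [norm_nonneg s]
    · filter_upwards [(isOpen_lt continuous_const Complex.continuous_re).mem_nhds
        (show (2 : ℂ) ∈ {z : ℂ | 1 < z.re} by norm_num)] with w hw
      rw [(hasSum_zetaTerm_of_one_lt hw).tsum_eq]
      have hw1 : w ≠ 1 := by rintro rfl; simp at hw
      rw [riemannZeta_eq_inv_sub_add hw1, mul_add, mul_inv_cancel₀ (sub_ne_zero.2 hw1)]
      ring
  exact heq ⟨hs, by simp [hR]⟩

lemma exp_two_lt : Real.exp 2 < 7.4 := by
  have h := Real.exp_one_lt_d9
  have : Real.exp 2 = Real.exp 1 * Real.exp 1 := by rw [← Real.exp_add]; norm_num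
  rw [this]
  nlinarith [Real.exp_pos 1]

lemma two_lt_log_of_eight_le {T : ℝ} (hT : 8 ≤ T) : 2 < Real.log T := by
  rw [Real.lt_log_iff_exp_lt (by linarith)]
  linarith [exp_two_lt]

/-- The entire function `ζ(s) - 1 / (s - 1)` is `O(log T)` for `‖s‖ ≤ T`, in the region
`re s ≥ 1 - 1 / log T`. -/
lemma norm_riemannZeta₀_le {T : ℝ} (hT : 8 ≤ T) {s : ℂ} (hs : 1 - 1 / Real.log T ≤ s.re)
    (hsT : ‖s‖ ≤ T) : ‖riemannZeta₀ s‖ ≤ 30 * Real.log T := by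
  set L := Real.log T with hL
  have hL2 : 2 < L := two_lt_log_of_eight_le hT
  rcases eq_or_ne s 1 with rfl | h1
  · rw [riemannZeta₀_one, Complex.norm_real, Real.norm_of_nonneg
      (by linarith [Real.one_half_lt_eulerMascheroniConstant])]
    linarith [Real.eulerMascheroniConstant_lt_two_thirds]
  have hre : 1 / 2 < s.re := by
    have : 1 / L < 1 / 2 := one_div_lt_one_div_of_lt (by norm_num) hL2
    linarith
  have hs0 : 0 < ‖s‖ := by
    rw [norm_pos_iff]; rintro rfl; simp at hre; linarith
  have hexp : ‖s‖ ^ (2 / L) ≤ Real.exp 2 := by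
    calc ‖s‖ ^ (2 / L) ≤ T ^ (2 / L) := by gcongr
      _ = Real.exp 2 := by
        rw [Real.rpow_def_of_pos (by linarith), ← hL]; congr 1; field_simp
  have hterm : ∀ n : ℕ, ‖zetaTerm n s‖ ≤
      ‖s - 1‖ * (2 * Real.exp 2) * (n + 1 : ℝ) ^ (-(1 + 1 / L)) := by
    intro n
    refine (norm_zetaTerm_le (by linarith) n).trans ?_
    have hn : (1 : ℝ) ≤ n + 1 := by linarith [n.cast_nonneg (α := ℝ)]
    rw [mul_assoc]
    refine mul_le_mul_of_nonneg_left ?_ (norm_nonneg _)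
    have hmin : min 2 (‖s‖ / (n + 1)) ≤ 2 * (‖s‖ / (n + 1)) ^ (2 / L) := by
      have hy : 0 < ‖s‖ / (n + 1) := by positivity
      rcases le_total 1 (‖s‖ / (n + 1)) with h | h
      · refine (min_le_left _ _).trans ?_
        have := Real.one_le_rpow h (show 0 ≤ 2 / L by positivity)
        linarith
      · refine (min_le_right _ _).trans ?_
        have := Real.rpow_le_rpow_of_exponent_ge hy h
          (show 2 / L ≤ 1 by rw [div_le_one (by linarith)]; exact hL2.le)
        rw [Real.rpow_one] at this
        have h0 : 0 ≤ (‖s‖ / (n + 1)) ^ (2 / L) := by positivity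
        linarith
    calc min 2 (‖s‖ / (n + 1)) * (n + 1 : ℝ) ^ (-s.re)
        ≤ 2 * (‖s‖ / (n + 1)) ^ (2 / L) * (n + 1 : ℝ) ^ (-s.re) := by gcongr
      _ = 2 * ‖s‖ ^ (2 / L) * ((n + 1 : ℝ) ^ (-(s.re + 2 / L))) := by
          rw [Real.div_rpow hs0.le (by positivity), neg_add, Real.rpow_add (by positivity),
            Real.rpow_neg (by positivity) (2 / L)]
          ring
      _ ≤ 2 * Real.exp 2 * (n + 1 : ℝ) ^ (-(1 + 1 / L)) := by
          have : 2 / L = 1 / L + 1 / L := by ring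
          have hx := Real.rpow_le_rpow_of_exponent_le hn
            (show -(s.re + 2 / L) ≤ -(1 + 1 / L) by linarith)
          gcongr 2 * ?_ * ?_
  have ha : 1 < 1 + 1 / L := by
    have : 0 < 1 / L := by positivity
    linarith
  have hsm := (summable_nat_add_one_rpow_neg ha).mul_left (‖s - 1‖ * (2 * Real.exp 2))
  have hb : ‖∑' n, zetaTerm n s‖ ≤ ‖s - 1‖ * (2 * Real.exp 2) * (1 + L) := by
    refine (tsum_of_norm_bounded hsm.hasSum hterm).trans ?_
    rw [tsum_mul_left]
    gcongr
    have := tsum_nat_add_one_rpow_neg_le ha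
    simpa using this
  rw [← sub_one_mul_riemannZeta₀_eq hre, norm_mul, mul_assoc] at hb
  have hb' := le_of_mul_le_mul_left hb (norm_pos_iff.2 (sub_ne_zero.2 h1))
  refine hb'.trans ?_
  nlinarith [exp_two_lt]

lemma norm_le_of_re_im {z : ℂ} {a b : ℝ} (h1 : |z.re| ≤ a) (h2 : |z.im| ≤ b) : ‖z‖ ≤ a + b :=
  (Complex.norm_le_abs_re_add_abs_im z).trans (add_le_add h1 h2)

lemma norm_deriv_riemannZeta₀_le {T : ℝ} (hT : 8 ≤ T) {s : ℂ}
    (hs : 1 - 1 / (2 * Real.log T) ≤ s.re) (hsT : ‖s‖ ≤ T - 1) :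
    ‖deriv riemannZeta₀ s‖ ≤ 60 * Real.log T ^ 2 := by
  have hL2 : 2 < Real.log T := two_lt_log_of_eight_le hT
  set L := Real.log T with hL
  have hr : 0 < 1 / (2 * L) := by positivity
  have hr1 : 1 / (2 * L) ≤ 1 := by
    rw [div_le_one (by positivity)]; linarith
  have h := Complex.norm_deriv_le_of_forall_mem_sphere_norm_le (c := s) (C := 30 * L) hr
    differentiable_riemannZeta₀.diffContOnCl (fun z hz => by
      have hz' : ‖z - s‖ = 1 / (2 * L) := by simpa [dist_eq_norm] using hz
      refine norm_riemannZeta₀_le hT ?_ ?_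
      · have h1 := (Complex.abs_re_le_norm (z - s)).trans hz'.le
        rw [Complex.sub_re, abs_le] at h1
        have : 1 / L = 1 / (2 * L) + 1 / (2 * L) := by field_simp; norm_num
        rw [← hL]
        linarith [h1.1]
      · calc ‖z‖ = ‖(z - s) + s‖ := by ring_nf
          _ ≤ ‖z - s‖ + ‖s‖ := norm_add_le _ _
          _ ≤ T := by rw [hz']; linarith)
  refine h.trans (le_of_eq ?_)
  field_simp
  norm_num

/-- The bound used for `ζ` away from its pole. -/
lemma norm_riemannZeta_le {T : ℝ} (hT : 8 ≤ T) {s : ℂ} {c : ℝ} (hc : 0 < c)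
    (hs : 1 - 1 / Real.log T ≤ s.re)
    (hsT : ‖s‖ ≤ T) (hc' : c⁻¹ ≤ |s.im|) : ‖riemannZeta s‖ ≤ c + 30 * Real.log T := by
  have hpos : 0 < c⁻¹ := by positivity
  have h1 : s ≠ 1 := by
    rintro rfl
    simp at hc'; linarith
  rw [riemannZeta_eq_inv_sub_add h1]
  refine (norm_add_le _ _).trans (add_le_add ?_ (norm_riemannZeta₀_le hT hs hsT))
  rw [norm_inv]
  refine inv_le_of_inv_le₀ hc (hc'.trans ?_)
  simpa using Complex.abs_im_le_norm (s - 1)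

lemma norm_deriv_riemannZeta_le {T : ℝ} (hT : 8 ≤ T) {s : ℂ}
    (hs : 1 - 1 / (2 * Real.log T) ≤ s.re)
    (hsT : ‖s‖ ≤ T - 1) (hc' : 1 / 250 ≤ |s.im|) :
    ‖deriv riemannZeta s‖ ≤ 16000 * Real.log T ^ 2 := by
  have hL2 : 2 < Real.log T := two_lt_log_of_eight_le hT
  have h1 : s ≠ 1 := by
    rintro rfl
    norm_num at hc'
  rw [deriv_riemannZeta_eq_neg_inv_sub_sq_add h1]
  have h2 : ‖(s - 1)⁻¹‖ ≤ 250 := by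
    rw [norm_inv]
    refine inv_le_of_inv_le₀ (by norm_num) ?_
    have : |s.im| ≤ ‖s - 1‖ := by simpa using Complex.abs_im_le_norm (s - 1)
    linarith
  have h3 : ‖-((s - 1)⁻¹) ^ 2‖ ≤ 250 ^ 2 := by
    rw [norm_neg, norm_pow]; gcongr
  refine (norm_add_le _ _).trans ?_
  have h4 := norm_deriv_riemannZeta₀_le hT hs hsT
  nlinarith

lemma norm_riemannZeta_one_add_le {x : ℝ} (hx : 0 < x) (hx1 : x ≤ 1) :
    ‖riemannZeta (1 + x)‖ ≤ 2 / x := by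
  have hre : (1 + (x : ℂ)).re = 1 + x := by simp
  rw [zeta_eq_tsum_one_div_nat_add_one_cpow (by rw [hre]; linarith)]
  have h := tsum_of_norm_bounded (g := fun n : ℕ => (n + 1 : ℝ) ^ (-(1 + x)))
    (f := fun n : ℕ => 1 / (n + 1 : ℂ) ^ (1 + (x : ℂ)))
    (summable_nat_add_one_rpow_neg (by linarith)).hasSum (fun n => by
      have := norm_ofReal_cpow_neg (x := n + 1) (by positivity) (1 + x)
      rw [hre] at this
      rw [← this, Complex.cpow_neg, one_div]
      push_cast
      rfl)
  refine h.trans ((tsum_nat_add_one_rpow_neg_le (by linarith)).trans ?_)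
  rw [add_sub_cancel_left, ← sub_nonneg]
  have : 2 / x - (1 + 1 / x) = (1 - x) / x := by field_simp; ring
  rw [this]
  exact div_nonneg (by linarith) hx.le

lemma zeta_three_four_one {x : ℝ} (hx : 0 < x) (y : ℝ) :
    1 ≤ ‖riemannZeta (1 + x)‖ ^ 3 * ‖riemannZeta (1 + x + Complex.I * y)‖ ^ 4 *
      ‖riemannZeta (1 + x + 2 * Complex.I * y)‖ := by
  have h := DirichletCharacter.norm_LFunction_product_ge_one (N := 1) 1 hx y
  rw [DirichletCharacter.LFunctionTrivChar] at h
  simpa [DirichletCharacter.LFunction_modOne_eq] using h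

/-- Lower bound for `ζ` to the right of the line `re s = 1`, from the `3-4-1` inequality. -/
lemma norm_riemannZeta_pow_four_ge {T : ℝ} {x y : ℝ} (hx : 0 < x) (hx1 : x ≤ 1)
    (hy : 1 / 250 ≤ |y|) (hT : 2 * |y| + 8 ≤ T) :
    x ^ 3 / (800 * Real.log T) ≤ ‖riemannZeta (1 + x + Complex.I * y)‖ ^ 4 := by
  have hT8 : 8 ≤ T := by linarith [abs_nonneg y]
  have hL2 : 2 < Real.log T := two_lt_log_of_eight_le hT8
  set L := Real.log T with hL
  have h := zeta_three_four_one hx y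
  have h1 := norm_riemannZeta_one_add_le hx hx1
  have hre : (1 + x + 2 * Complex.I * y : ℂ).re = 1 + x := by simp
  have him : (1 + x + 2 * Complex.I * y : ℂ).im = 2 * y := by simp
  have h2 : ‖riemannZeta (1 + x + 2 * Complex.I * y)‖ ≤ 125 + 30 * L := by
    refine norm_riemannZeta_le hT8 (by norm_num) ?_ ?_ ?_
    · rw [hre]
      have : 0 < 1 / Real.log T := by rw [← hL]; positivity
      linarith
    · refine (norm_le_of_re_im (a := 2) (b := 2 * |y|) ?_ ?_).trans (by linarith)
      · rw [hre, abs_of_pos (by linarith)]; linarith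
      · rw [him, abs_mul]; norm_num
    · rw [him, abs_mul]; norm_num; linarith
  have h3 : 1 ≤ (2 / x) ^ 3 * ‖riemannZeta (1 + x + Complex.I * y)‖ ^ 4 * (100 * L) := by
    refine h.trans ?_
    gcongr
    linarith
  have h4 : (2 / x) ^ 3 * ‖riemannZeta (1 + x + Complex.I * y)‖ ^ 4 * (100 * L) =
    ‖riemannZeta (1 + x + Complex.I * y)‖ ^ 4 * (800 * L) / x ^ 3 := by
    field_simp; ring
  rw [h4, one_le_div (by positivity)] at h3
  rw [div_le_iff₀ (by positivity)]
  exact h3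

/-- The width `ρ` of the zero-free strip, as a function of `L = log T`. -/
noncomputable def stripWidth (L : ℝ) : ℝ := 1 / (10 ^ 24 * L ^ 9)

lemma stripWidth_pos {L : ℝ} (hL : 2 < L) : 0 < stripWidth L := by
  unfold stripWidth; positivity

lemma stripWidth_le {L : ℝ} (hL : 2 < L) : stripWidth L ≤ 1 / 1000 := by
  unfold stripWidth
  have : (1:ℝ) ≤ L ^ 9 := one_le_pow₀ (by linarith)
  gcongr
  nlinarith

lemma stripWidth_le' {L : ℝ} (hL : 2 < L) : stripWidth L ≤ 1 / (2 * L) := by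
  unfold stripWidth
  have : (1:ℝ) ≤ L ^ 8 := one_le_pow₀ (by linarith)
  refine one_div_le_one_div_of_le (by positivity) ?_
  calc 2 * L ≤ 10 ^ 24 * L := by nlinarith
    _ ≤ 10 ^ 24 * (L * L ^ 8) := by nlinarith
    _ = _ := by ring

/-- Quantitative zero-free region, away from the pole. -/
lemma norm_riemannZeta_ge {T : ℝ} {s : ℂ} (hT : 2 * |s.im| + 8 ≤ T)
    (hs : 1 - stripWidth (Real.log T) ≤ s.re) (hs2 : s.re ≤ 2) (hy : 1 / 250 ≤ |s.im|) :
    1 / (10 ^ 20 * Real.log T ^ 7) ≤ ‖riemannZeta s‖ := by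
  have hT8 : 8 ≤ T := by linarith [abs_nonneg s.im]
  have hL2 : 2 < Real.log T := two_lt_log_of_eight_le hT8
  set L := Real.log T with hL
  have hρ0 := stripWidth_pos hL2
  have hρ1 := stripWidth_le hL2
  have hρ2 := stripWidth_le' hL2
  set ρ := stripWidth L with hρ
  have hright : ∀ x : ℝ, ρ ≤ x → x ≤ 1 →
      1 / (6 * 10 ^ 18 * L ^ 7) ≤ ‖riemannZeta (1 + x + Complex.I * s.im)‖ := by
    intro x hx hx1
    have h := norm_riemannZeta_pow_four_ge (hρ0.trans_le hx) hx1 hy hT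
    rw [← hL] at h
    refine le_of_pow_le_pow_left₀ (n := 4) (by norm_num) (norm_nonneg _) (le_trans ?_ h)
    have h1 : ρ ^ 3 / (800 * L) ≤ x ^ 3 / (800 * L) := by gcongr
    refine le_trans ?_ h1
    rw [hρ, stripWidth, div_pow, div_pow, div_div, one_pow, one_pow]
    refine one_div_le_one_div_of_le (by positivity) ?_
    have e1 : (10 ^ 24 * L ^ 9) ^ 3 * (800 * L) = 800 * 10 ^ 72 * L ^ 28 := by ring
    have e2 : (6 * 10 ^ 18 * L ^ 7) ^ 4 = 1296 * 10 ^ 72 * L ^ 28 := by ring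
    rw [e1, e2]
    gcongr
    norm_num
  rcases le_total (1 + ρ) s.re with hcase | hcase
  · have h := hright (s.re - 1) (by linarith) (by linarith)
    have e : (1 + ((s.re - 1 : ℝ) : ℂ) + Complex.I * s.im) = s := by
      apply Complex.ext <;> simp
    rw [e] at h
    refine le_trans ?_ h
    gcongr
    norm_num
  · have h := hright ρ le_rfl (by linarith)
    set w : ℂ := 1 + ρ + Complex.I * s.im with hw
    have hwre : w.re = 1 + ρ := by simp [hw]
    have hwim : w.im = s.im := by simp [hw]
    -- `ζ` varies little between `s` and `w`
    have hdiff : ‖riemannZeta w - riemannZeta s‖ ≤ 16000 * L ^ 2 * ‖w - s‖ := by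
      set C : Set ℂ := {z | 1 - ρ ≤ z.re} ∩ {z | z.re ≤ 2} ∩ {z | z.im = s.im} with hC
      have hconv : Convex ℝ C :=
        ((convex_halfSpace_re_ge _).inter (convex_halfSpace_re_le _)).inter
          (convex_hyperplane Complex.imLm.isLinear _)
      refine hconv.norm_image_sub_le_of_norm_deriv_le (f := riemannZeta) (fun z hz => ?_)
        (fun z hz => ?_) ?_ ?_
      · refine differentiableAt_riemannZeta ?_
        rintro rfl
        have : (1 : ℂ).im = s.im := hz.2
        rw [← this] at hy
        norm_num at hy
      · have h1 : 1 - ρ ≤ z.re := hz.1.1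
        have h2 : z.re ≤ 2 := hz.1.2
        have h3 : z.im = s.im := hz.2
        refine norm_deriv_riemannZeta_le hT8 ?_ ?_ ?_
        · rw [← hL]; linarith
        · refine (norm_le_of_re_im (a := 2) (b := |s.im|) ?_ ?_).trans ?_
          · rw [abs_le]; constructor <;> linarith
          · rw [h3]
          · linarith [abs_nonneg s.im]
        · rw [h3]; exact hy
      · exact ⟨⟨hs, hs2⟩, rfl⟩
      · refine ⟨⟨?_, ?_⟩, hwim⟩ <;> simp only [Set.mem_ofPred_eq, hwre] <;> linarith
    have hws : ‖w - s‖ ≤ 2 * ρ + 0 := by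
      refine norm_le_of_re_im ?_ ?_
      · rw [Complex.sub_re, hwre, abs_le]; constructor <;> linarith
      · rw [Complex.sub_im, hwim]; simp
    have h5 : ‖riemannZeta w‖ ≤ ‖riemannZeta s‖ + 16000 * L ^ 2 * (2 * ρ) := by
      have h6 : ‖riemannZeta w‖ ≤ ‖riemannZeta w - riemannZeta s‖ + ‖riemannZeta s‖ := by
        simpa using norm_add_le (riemannZeta w - riemannZeta s) (riemannZeta s)
      have h7 : 16000 * L ^ 2 * ‖w - s‖ ≤ 16000 * L ^ 2 * (2 * ρ) := by
        gcongr; linarith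
      linarith
    have h8 : 16000 * L ^ 2 * (2 * ρ) = 32000 / 10 ^ 24 * (1 / L ^ 7) := by
      rw [hρ, stripWidth]; field_simp; norm_num
    have h9 : 1 / (6 * 10 ^ 18 * L ^ 7) = 1 / (6 * 10 ^ 18) * (1 / L ^ 7) := by field_simp
    have h10 : 1 / (10 ^ 20 * L ^ 7) = 1 / 10 ^ 20 * (1 / L ^ 7) := by field_simp
    rw [h8] at h5
    rw [h9] at h
    rw [h10]
    have h11 : 0 < 1 / L ^ 7 := by positivity
    nlinarith

/-! ### The Dirichlet series of `Λ - 1` and its derivatives -/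

/-- The function `-ζ'/ζ - ζ`, written through the entire functions `riemannZeta₀` and
`riemannZeta₁`, so that the singularity at `s = 1` is removed. -/
noncomputable def psiDefect (s : ℂ) : ℂ :=
  -(deriv riemannZeta₁ s / riemannZeta₁ s) - riemannZeta₀ s

lemma psiDefect_eq {s : ℂ} (h1 : s ≠ 1) (h0 : riemannZeta s ≠ 0) :
    psiDefect s = -deriv riemannZeta s / riemannZeta s - riemannZeta s := by
  have h : s - 1 ≠ 0 := sub_ne_zero.2 h1
  have hZ : riemannZeta₁ s ≠ 0 := by
    intro hz; apply h0; rw [riemannZeta_eq_inv_sub_mul h1, hz, mul_zero]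
  rw [psiDefect, deriv_riemannZeta_eq_neg_inv_sub_sq_mul_add h1]
  nth_rw 2 [riemannZeta_eq_inv_sub_add h1]
  rw [riemannZeta_eq_inv_sub_mul h1]
  field_simp
  ring

lemma riemannZeta₁_ne_zero {s : ℂ} (h1 : s ≠ 1) (h0 : riemannZeta s ≠ 0) : riemannZeta₁ s ≠ 0 := by
  intro hz; apply h0; rw [riemannZeta_eq_inv_sub_mul h1, hz, mul_zero]

lemma log_eight_lt : Real.log 8 < 2.1 := by
  have : Real.log 8 = 3 * Real.log 2 := by
    rw [show (8:ℝ) = 2 ^ (3:ℕ) by norm_num, Real.log_pow]; norm_num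
  rw [this]
  linarith [Real.log_two_lt_d9]

/-- Non-vanishing of `(s - 1) ζ(s)` and bound for `-ζ'/ζ - ζ` close to `s = 1`. -/
lemma psiDefect_near_one {s : ℂ} (hs : ‖s - 1‖ ≤ 1 / 125) :
    riemannZeta₁ s ≠ 0 ∧ ‖psiDefect s‖ ≤ 200 := by
  have hL := log_eight_lt
  have hL2 : 2 < Real.log 8 := two_lt_log_of_eight_le le_rfl
  have hre : 1 - 1 / 125 ≤ s.re := by
    have h := (Complex.abs_re_le_norm (s - 1)).trans hs
    rw [Complex.sub_re, Complex.one_re, abs_le] at h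
    linarith [h.1]
  have hn : ‖s‖ ≤ 2 := by
    calc ‖s‖ = ‖(s - 1) + 1‖ := by ring_nf
      _ ≤ ‖s - 1‖ + ‖(1 : ℂ)‖ := norm_add_le _ _
      _ ≤ 2 := by rw [norm_one]; linarith
  have hd : 1 / 5 ≤ 1 / (2 * Real.log 8) := one_div_le_one_div_of_le (by linarith) (by linarith)
  have hd2 : 1 / (2 * Real.log 8) ≤ 1 / Real.log 8 :=
    one_div_le_one_div_of_le (by linarith) (by linarith)
  have hH := norm_riemannZeta₀_le (T := 8) le_rfl (s := s) (by linarith) (by linarith)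
  have hH' := norm_deriv_riemannZeta₀_le (T := 8) le_rfl (s := s) (by linarith) (by linarith)
  have hH1 : ‖riemannZeta₀ s‖ ≤ 63 := by linarith
  have hH2 : ‖deriv riemannZeta₀ s‖ ≤ 265 := by nlinarith
  have hprod : ‖(s - 1) * riemannZeta₀ s‖ ≤ 1 / 125 * 63 := by
    rw [norm_mul]; gcongr
  have hZ : 49 / 100 ≤ ‖riemannZeta₁ s‖ := by
    have h := norm_sub_norm_le (1 : ℂ) (-((s - 1) * riemannZeta₀ s))
    rw [sub_neg_eq_add, norm_neg, norm_one] at h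
    rw [riemannZeta₁]
    linarith
  have hZ0 : 0 < ‖riemannZeta₁ s‖ := by linarith
  have hZ' : deriv riemannZeta₁ s = riemannZeta₀ s + (s - 1) * deriv riemannZeta₀ s := by
    have h1 : HasDerivAt (fun z : ℂ => 1 + (z - 1) * riemannZeta₀ z)
        (1 * riemannZeta₀ s + (s - 1) * deriv riemannZeta₀ s) s :=
      (((hasDerivAt_id s).sub_const 1).mul (differentiable_riemannZeta₀ s).hasDerivAt).const_add 1
    have h2 := h1.deriv
    rw [one_mul] at h2
    exact h2
  have hZ'' : ‖deriv riemannZeta₁ s‖ ≤ 66 := by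
    rw [hZ']
    refine (norm_add_le _ _).trans ?_
    have : ‖(s - 1) * deriv riemannZeta₀ s‖ ≤ 1 / 125 * 265 := by rw [norm_mul]; gcongr
    linarith
  refine ⟨norm_pos_iff.1 hZ0, ?_⟩
  rw [psiDefect]
  refine (norm_sub_le _ _).trans ?_
  have : ‖deriv riemannZeta₁ s‖ / ‖riemannZeta₁ s‖ ≤ 137 := by
    rw [div_le_iff₀ hZ0]; nlinarith
  have h137 : ‖-(deriv riemannZeta₁ s / riemannZeta₁ s)‖ ≤ 137 := by
    rw [norm_neg, norm_div]
    exact this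
  linarith

/-- The bound for `-ζ'/ζ - ζ` in the zero-free strip. -/
noncomputable def stripBound (L : ℝ) : ℝ := 10 ^ 25 * L ^ 9

lemma psiDefect_in_strip {T : ℝ} {s : ℂ} (hT : 2 * |s.im| + 8 ≤ T)
    (hs : 1 - stripWidth (Real.log T) ≤ s.re) (hs2 : s.re ≤ 1 + 1 / 250) :
    riemannZeta₁ s ≠ 0 ∧ ‖psiDefect s‖ ≤ stripBound (Real.log T) := by
  have hT8 : 8 ≤ T := by linarith [abs_nonneg s.im]
  have hL2 : 2 < Real.log T := two_lt_log_of_eight_le hT8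
  have hρ0 := stripWidth_pos hL2
  have hρ1 := stripWidth_le hL2
  have hρ2 := stripWidth_le' hL2
  rcases le_total (1 / 250) |s.im| with hy | hy
  · have h1 : s ≠ 1 := by
      rintro rfl
      norm_num at hy
    have hlow := norm_riemannZeta_ge hT hs (by linarith) hy
    have hpos : 0 < 1 / (10 ^ 20 * Real.log T ^ 7) := by positivity
    have hz0 : riemannZeta s ≠ 0 := norm_pos_iff.1 (hpos.trans_le hlow)
    refine ⟨riemannZeta₁_ne_zero h1 hz0, ?_⟩
    have hnorm : ‖s‖ ≤ T - 1 := by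
      refine (norm_le_of_re_im (a := 2) (b := |s.im|) ?_ le_rfl).trans ?_
      · rw [abs_le]; constructor <;> linarith
      · linarith [abs_nonneg s.im]
    have hhalf : 1 / (2 * Real.log T) ≤ 1 / Real.log T :=
      one_div_le_one_div_of_le (by linarith) (by linarith)
    have hd := norm_deriv_riemannZeta_le hT8 (s := s) (by linarith) hnorm hy
    have hz := norm_riemannZeta_le hT8 (s := s) (c := 250) (by norm_num) (by linarith)
      (by linarith) (by linarith)
    rw [psiDefect_eq h1 hz0]
    refine (norm_sub_le _ _).trans ?_
    rw [norm_div, norm_neg]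
    set L := Real.log T with hL
    have hq : ‖deriv riemannZeta s‖ / ‖riemannZeta s‖ ≤ 16000 * L ^ 2 * (10 ^ 20 * L ^ 7) := by
      calc ‖deriv riemannZeta s‖ / ‖riemannZeta s‖
          ≤ 16000 * L ^ 2 / (1 / (10 ^ 20 * L ^ 7)) := by gcongr
        _ = _ := by rw [div_div_eq_mul_div, div_one]
    rw [stripBound]
    have h8 : (1 : ℝ) ≤ L ^ 8 := one_le_pow₀ (by linarith)
    have e1 : 16000 * L ^ 2 * (10 ^ 20 * L ^ 7) = 16000 * 10 ^ 20 * L ^ 9 := by ring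
    have e2 : L ≤ L ^ 9 := by
      calc L = L * 1 := by ring
        _ ≤ L * L ^ 8 := by gcongr
        _ = _ := by ring
    rw [e1] at hq
    linarith
  · have hnear : ‖s - 1‖ ≤ 1 / 125 := by
      refine (norm_le_of_re_im (a := 1 / 250) (b := 1 / 250) ?_ ?_).trans (by norm_num)
      · rw [Complex.sub_re, Complex.one_re, abs_le]; constructor <;> linarith
      · simpa using hy
    refine ⟨(psiDefect_near_one hnear).1, (psiDefect_near_one hnear).2.trans ?_⟩
    rw [stripBound]
    have : (1 : ℝ) ≤ Real.log T ^ 9 := one_le_pow₀ (by linarith)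
    linarith

lemma differentiableAt_psiDefect {s : ℂ} (h : riemannZeta₁ s ≠ 0) :
    DifferentiableAt ℂ psiDefect s :=
  (((differentiable_riemannZeta₁.deriv s).div (differentiable_riemannZeta₁ s) h).neg).sub
    (differentiable_riemannZeta₀ s)

/-- Cauchy's estimate for the derivatives of `-ζ'/ζ - ζ` next to the line `re s = 1`. -/
lemma norm_iteratedDeriv_psiDefect_le (j : ℕ) {x t : ℝ} (hx : 0 ≤ x) (hx1 : x ≤ 1 / 1000) :
    ‖iteratedDeriv j psiDefect (1 + x + t * Complex.I)‖ ≤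
      j.factorial * stripBound (Real.log (2 * |t| + 10)) ^ (j + 1) := by
  set T := 2 * |t| + 10 with hT
  have hT8 : 8 ≤ T := by linarith [abs_nonneg t]
  have hL2 : 2 < Real.log T := two_lt_log_of_eight_le hT8
  have hρ0 := stripWidth_pos hL2
  have hρ1 := stripWidth_le hL2
  set L := Real.log T with hL
  set c : ℂ := 1 + x + t * Complex.I with hc
  have hcre : c.re = 1 + x := by simp [hc]
  have hcim : c.im = t := by simp [hc]
  have hreg : ∀ z ∈ Metric.closedBall c (stripWidth L), riemannZeta₁ z ≠ 0 ∧
      ‖psiDefect z‖ ≤ stripBound L := by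
    intro z hz
    have hz' : ‖z - c‖ ≤ stripWidth L := by simpa [dist_eq_norm] using hz
    have h1 := (Complex.abs_re_le_norm (z - c)).trans hz'
    have h2 := (Complex.abs_im_le_norm (z - c)).trans hz'
    rw [Complex.sub_re, hcre, abs_le] at h1
    rw [Complex.sub_im, hcim] at h2
    have h3 : |z.im| ≤ |t| + 1 / 1000 := by
      have := abs_sub_abs_le_abs_sub z.im t
      linarith
    exact psiDefect_in_strip (by linarith) (by linarith [h1.1]) (by linarith [h1.2])
  have hdc : DiffContOnCl ℂ psiDefect (Metric.ball c (stripWidth L)) := by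
    apply DifferentiableOn.diffContOnCl
    rw [closure_ball _ hρ0.ne']
    exact fun z hz => (differentiableAt_psiDefect (hreg z hz).1).differentiableWithinAt
  have h := Complex.norm_iteratedDeriv_le_of_forall_mem_sphere_norm_le j hρ0 hdc
    (fun z hz => (hreg z (Metric.sphere_subset_closedBall hz)).2)
  refine h.trans ?_
  have hB : 0 < stripBound L := by unfold stripBound; positivity
  have hinv : 1 / stripWidth L ≤ stripBound L := by
    unfold stripWidth stripBound
    rw [one_div_one_div]
    gcongr <;> norm_num
  calc (j.factorial : ℝ) * stripBound L / stripWidth L ^ j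
      = j.factorial * (stripBound L * (1 / stripWidth L) ^ j) := by
        rw [div_pow, one_pow]; ring
    _ ≤ j.factorial * (stripBound L * stripBound L ^ j) := by gcongr
    _ = _ := by ring

/-- The coefficients of the `j`-th derivative of the Dirichlet series of `Λ - 1`. -/
noncomputable def defectCoeff (j n : ℕ) : ℝ :=
  (ArithmeticFunction.vonMangoldt n - 1) * Real.log n ^ j

lemma iterate_logMul (f : ℕ → ℂ) (m n : ℕ) :
    (LSeries.logMul^[m] f) n = Complex.log n ^ m * f n := by
  induction m with
  | zero => simp
  | succ m ih => rw [Function.iterate_succ_apply', LSeries.logMul, ih]; ring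

lemma abscissa_defect_le : LSeries.abscissaOfAbsConv
    (fun n => ((ArithmeticFunction.vonMangoldt n : ℝ) : ℂ) - 1) ≤ 1 := by
  refine LSeries.abscissaOfAbsConv_le_of_forall_lt_LSeriesSummable fun y hy => ?_
  have hy' : 1 < ((y : ℂ)).re := by simpa using hy
  have h := (ArithmeticFunction.LSeriesSummable_vonMangoldt hy').sub
    (LSeriesSummable_one_iff.2 hy')
  exact h

lemma abscissa_lt_of_one_lt {s : ℂ} (hs : 1 < s.re) : LSeries.abscissaOfAbsConv
    (fun n => ((ArithmeticFunction.vonMangoldt n : ℝ) : ℂ) - 1) < s.re :=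
  abscissa_defect_le.trans_lt (by exact_mod_cast hs)

lemma term_defect (j : ℕ) {s : ℂ} (hs : 1 < s.re) (n : ℕ) :
    LSeries.term (LSeries.logMul^[j] fun n => ((ArithmeticFunction.vonMangoldt n : ℝ) : ℂ) - 1) s n
      = (defectCoeff j n : ℂ) * (n : ℂ) ^ (-s) := by
  rcases eq_or_ne n 0 with rfl | hn
  · have : -s ≠ 0 := by
      intro h; rw [neg_eq_zero] at h; simp [h] at hs; linarith
    simp [Complex.zero_cpow this]
  · rw [LSeries.term_of_ne_zero hn, iterate_logMul, defectCoeff, Complex.cpow_neg]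
    push_cast
    rw [← Complex.natCast_log]
    ring

lemma hasSum_defect (j : ℕ) {s : ℂ} (hs : 1 < s.re) :
    HasSum (fun n : ℕ => (defectCoeff j n : ℂ) * (n : ℂ) ^ (-s))
      ((-1) ^ j * iteratedDeriv j psiDefect s) := by
  have hev : psiDefect =ᶠ[nhds s]
      LSeries (fun n => ((ArithmeticFunction.vonMangoldt n : ℝ) : ℂ) - 1) := by
    filter_upwards [(isOpen_lt continuous_const Complex.continuous_re).mem_nhds
        (show s ∈ {z : ℂ | 1 < z.re} from hs)] with z hz
    have hz' : 1 < z.re := hz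
    have h1 : z ≠ 1 := by rintro rfl; simp at hz'
    rw [psiDefect_eq h1 (riemannZeta_ne_zero_of_one_le_re hz'.le),
      ← ArithmeticFunction.LSeries_vonMangoldt_eq_deriv_riemannZeta_div hz',
      ← LSeries_one_eq_riemannZeta hz',
      ← LSeries_sub (ArithmeticFunction.LSeriesSummable_vonMangoldt hz')
        (LSeriesSummable_one_iff.2 hz')]
    rfl
  rw [(hev.iteratedDeriv_eq j), LSeries_iteratedDeriv j (abscissa_lt_of_one_lt hs), ← mul_assoc,
    ← mul_pow]
  have hsum : LSeriesSummable
      (LSeries.logMul^[j] fun n => ((ArithmeticFunction.vonMangoldt n : ℝ) : ℂ) - 1) s := by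
    apply LSeriesSummable_of_abscissaOfAbsConv_lt_re
    rw [LSeries.absicssaOfAbsConv_logPowMul]
    exact abscissa_lt_of_one_lt hs
  have h := hsum.LSeriesHasSum
  simp only [LSeriesHasSum] at h
  rw [funext (term_defect j hs)] at h
  simpa using h

/-! ### A smoothed sum of the Dirichlet coefficients -/

open scoped FourierTransform
section Tent

/-- The triangular bump supported on `[-1, 1]` with maximum `1` at `0`. -/
noncomputable def tent (y : ℝ) : ℝ := max 0 (1 - |y|)

lemma tent_nonneg (y : ℝ) : 0 ≤ tent y := le_max_left _ _

lemma tent_le_one (y : ℝ) : tent y ≤ 1 :=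
  max_le zero_le_one (by linarith [abs_nonneg y])

lemma tent_eq_zero {y : ℝ} (hy : 1 ≤ |y|) : tent y = 0 := max_eq_left (by linarith)

lemma tent_eq {y : ℝ} (hy : |y| ≤ 1) : tent y = 1 - |y| := max_eq_right (by linarith)

lemma continuous_tent : Continuous tent := by unfold tent; fun_prop

lemma integral_smul_tent (g : ℝ → ℂ) :
    ∫ v, g v • (tent v : ℂ) = ∫ v in (-1 : ℝ)..1, g v • (tent v : ℂ) := by
  rw [intervalIntegral.integral_of_le (by norm_num)]
  refine (MeasureTheory.setIntegral_eq_integral_of_forall_compl_eq_zero fun v hv => ?_).symm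
  rw [tent_eq_zero, Complex.ofReal_zero, smul_zero]
  rw [Set.mem_Ioc, not_and_or, not_lt, not_le] at hv
  rcases hv with h | h
  · rw [abs_of_neg (by linarith)]; linarith
  · rw [abs_of_pos (by linarith)]; linarith

lemma integrable_tent : MeasureTheory.Integrable (fun y => (tent y : ℂ)) := by
  apply Continuous.integrable_of_hasCompactSupport
  · exact Complex.continuous_ofReal.comp continuous_tent
  · apply HasCompactSupport.of_support_subset_isCompact (K := Set.Icc (-1) 1) isCompact_Icc
    intro y hy
    by_contra h
    apply hy
    have : 1 ≤ |y| := by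
      by_contra h2
      exact h (abs_le.1 (not_le.1 h2).le)
    simp [tent_eq_zero this]

lemma hasDerivAt_cexp_mul (c : ℂ) (v : ℝ) :
    HasDerivAt (fun v : ℝ => Complex.exp (c * v)) (c * Complex.exp (c * v)) v := by
  have h := ((Complex.ofRealCLM.hasDerivAt (x := v)).const_mul c).cexp
  simpa [mul_comm] using h

lemma integral_exp_mul_tent {c : ℂ} (hc : c ≠ 0) :
    ∫ v in (-1 : ℝ)..1, Complex.exp (c * v) • (tent v : ℂ)
      = (Complex.exp c + Complex.exp (-c) - 2) / c ^ 2 := by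
  have hcont : Continuous fun v : ℝ => Complex.exp (c * v) • (tent v : ℂ) := by
    have := continuous_tent
    fun_prop
  have hid (v : ℝ) : HasDerivAt (fun v : ℝ => (v : ℂ)) 1 v := by
    simpa using (hasDerivAt_id v).ofReal_comp
  rw [← intervalIntegral.integral_add_adjacent_intervals (b := 0)
    (hcont.intervalIntegrable _ _) (hcont.intervalIntegrable _ _)]
  have h1 : ∫ v in (-1 : ℝ)..0, Complex.exp (c * v) • (tent v : ℂ)
      = ∫ v in (-1 : ℝ)..0, (1 + v) * Complex.exp (c * v) := by
    apply intervalIntegral.integral_congr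
    intro v hv
    rw [Set.uIcc_of_le (by norm_num)] at hv
    have : tent v = 1 + v := by
      rw [tent_eq (abs_le.2 ⟨hv.1, hv.2.trans zero_le_one⟩), abs_of_nonpos hv.2]; ring
    simp only [this, smul_eq_mul]
    push_cast; ring
  have h2 : ∫ v in (0 : ℝ)..1, Complex.exp (c * v) • (tent v : ℂ)
      = ∫ v in (0 : ℝ)..1, (1 - v) * Complex.exp (c * v) := by
    apply intervalIntegral.integral_congr
    intro v hv
    rw [Set.uIcc_of_le (by norm_num)] at hv
    have : tent v = 1 - v := by
      rw [tent_eq (abs_le.2 ⟨by linarith [hv.1], hv.2⟩), abs_of_nonneg hv.1]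
    simp only [this, smul_eq_mul]
    push_cast; ring
  have d1 (v : ℝ) : HasDerivAt (fun v : ℝ => (1 + (v : ℂ)) * Complex.exp (c * v) / c
      - Complex.exp (c * v) / c ^ 2) ((1 + v) * Complex.exp (c * v)) v := by
    have h := ((((hid v).const_add 1).mul (hasDerivAt_cexp_mul c v)).div_const c).sub
      ((hasDerivAt_cexp_mul c v).div_const (c ^ 2))
    refine h.congr_deriv ?_
    field_simp
    ring
  have d2 (v : ℝ) : HasDerivAt (fun v : ℝ => (1 - (v : ℂ)) * Complex.exp (c * v) / c
      + Complex.exp (c * v) / c ^ 2) ((1 - v) * Complex.exp (c * v)) v := by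
    have h := ((((hid v).const_sub 1).mul (hasDerivAt_cexp_mul c v)).div_const c).add
      ((hasDerivAt_cexp_mul c v).div_const (c ^ 2))
    refine h.congr_deriv ?_
    field_simp
    ring
  rw [h1, h2, intervalIntegral.integral_eq_sub_of_hasDerivAt (fun v _ => d1 v)
      (Continuous.intervalIntegrable (by fun_prop) _ _),
    intervalIntegral.integral_eq_sub_of_hasDerivAt (fun v _ => d2 v)
      (Continuous.intervalIntegrable (by fun_prop) _ _)]
  simp
  field_simp
  ring

lemma fourier_tent_eq (ξ : ℝ) : 𝓕 (fun y => (tent y : ℂ)) ξ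
    = ∫ v in (-1 : ℝ)..1, Complex.exp ((-2 * Real.pi * ξ * Complex.I) * v) • (tent v : ℂ) := by
  rw [Real.fourier_real_eq_integral_exp_smul, ← integral_smul_tent]
  congr 1
  ext v
  congr 2
  push_cast
  ring

lemma norm_fourier_tent_le (ξ : ℝ) :
    ‖𝓕 (fun y => (tent y : ℂ)) ξ‖ ≤ 4 * (1 + |ξ|) ^ (-2 : ℝ) := by
  have hpos : 0 < 1 + |ξ| := by positivity
  rw [Real.rpow_neg hpos.le, show (2 : ℝ) = ((2 : ℕ) : ℝ) by norm_num, Real.rpow_natCast]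
  have hexp (v : ℝ) : ‖Complex.exp ((-2 * Real.pi * ξ * Complex.I) * v)‖ = 1 := by
    rw [show (-2 * Real.pi * ξ * Complex.I) * v = ((-2 * Real.pi * ξ * v : ℝ) : ℂ) * Complex.I by
      push_cast; ring]
    exact Complex.norm_exp_ofReal_mul_I _
  rcases le_or_gt |ξ| (2 / 5) with h | h
  · rw [fourier_tent_eq]
    have : ‖∫ v in (-1 : ℝ)..1, Complex.exp ((-2 * Real.pi * ξ * Complex.I) * v) • (tent v : ℂ)‖
        ≤ 1 * |1 - (-1 : ℝ)| := by
      apply intervalIntegral.norm_integral_le_of_norm_le_const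
      intro v _
      rw [norm_smul, hexp, one_mul, Complex.norm_real, Real.norm_of_nonneg (tent_nonneg v)]
      exact tent_le_one v
    refine this.trans ?_
    rw [← div_eq_mul_inv, le_div_iff₀ (by positivity)]
    norm_num
    nlinarith [abs_nonneg ξ]
  · have hξ : ξ ≠ 0 := by rintro rfl; norm_num at h
    have hc : (-2 * Real.pi * ξ * Complex.I : ℂ) ≠ 0 := by
      simp [hξ, Real.pi_ne_zero]
    rw [fourier_tent_eq, integral_exp_mul_tent hc, norm_div]
    have h1 := hexp 1
    have h2 := hexp (-1)
    simp only [Complex.ofReal_one, mul_one, Complex.ofReal_neg, mul_neg] at h1 h2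
    have hnum : ‖Complex.exp (-2 * Real.pi * ξ * Complex.I)
        + Complex.exp (-(-2 * Real.pi * ξ * Complex.I)) - 2‖ ≤ 4 := by
      refine (norm_sub_le _ _).trans ?_
      refine (add_le_add_left (norm_add_le _ _) _).trans ?_
      rw [h1, h2]; norm_num
    have hden : ‖(-2 * Real.pi * ξ * Complex.I : ℂ) ^ 2‖ = 4 * Real.pi ^ 2 * |ξ| ^ 2 := by
      simp [mul_pow, abs_of_pos Real.pi_pos]
      norm_num
    rw [hden, ← div_eq_mul_inv]
    refine div_le_div₀ (by norm_num) hnum (by positivity) ?_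
    have hpi : 9 ≤ Real.pi ^ 2 := by nlinarith [Real.pi_gt_three]
    have : (1 + |ξ|) ^ 2 ≤ (7 / 2 * |ξ|) ^ 2 := by gcongr; linarith
    nlinarith [sq_nonneg |ξ|]

lemma integrable_fourier_tent : MeasureTheory.Integrable (𝓕 (fun y => (tent y : ℂ))) := by
  have hcont : Continuous (𝓕 (fun y => (tent y : ℂ))) :=
    VectorFourier.fourierIntegral_continuous Real.continuous_fourierChar
      (by fun_prop) integrable_tent
  refine MeasureTheory.Integrable.mono' (g := fun ξ : ℝ => 4 * (1 + ‖ξ‖) ^ (-2 : ℝ))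
    ((integrable_one_add_norm (by simp)).const_mul 4) hcont.aestronglyMeasurable
    (Filter.Eventually.of_forall fun ξ => norm_fourier_tent_le ξ)

lemma tent_eq_integral_fourier (y : ℝ) :
    (tent y : ℂ) = ∫ v : ℝ, Complex.exp ((2 * Real.pi * v * y : ℝ) * Complex.I)
      * 𝓕 (fun y => (tent y : ℂ)) v := by
  have hc : Continuous (fun y => (tent y : ℂ)) := Complex.continuous_ofReal.comp continuous_tent
  have h := congr_fun (hc.fourierInv_fourier_eq integrable_tent integrable_fourier_tent) y
  rw [← h, Real.fourierInv_eq']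
  simp only [smul_eq_mul]
  congr 1
  ext v
  congr 3
  simp
  ring

lemma integral_one_add_abs_rpow :
    ∫ v : ℝ, (1 + |v|) ^ (-(3 / 2) : ℝ) = 4 := by
  rw [integral_comp_abs (f := fun v => (1 + v) ^ (-(3 / 2) : ℝ))]
  have h := (MeasureTheory.measurePreserving_add_left MeasureTheory.volume (1 : ℝ)).setIntegral_preimage_emb
    (measurableEmbedding_addLeft (1 : ℝ)) (fun v : ℝ => v ^ (-(3 / 2) : ℝ)) (Set.Ioi 1)
  rw [Set.preimage_const_add_Ioi, sub_self] at h
  rw [h,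
    integral_Ioi_rpow_of_lt (by norm_num) (by norm_num)]
  norm_num

end Tent

/-- The smoothed sum over `n` near `exp u₀`, written as a weighted average of the `j`-th derivative
of `psiDefect` over a vertical line, by Fourier inversion. -/
lemma hasSum_smoothed (j : ℕ) {x δ : ℝ} (u₀ : ℝ) (hx : 0 < x) (hδ : 0 < δ) :
    HasSum (fun n : ℕ => (((defectCoeff j n * (n : ℝ) ^ (-(1 + x)))
        * tent ((Real.log n - u₀) / δ) : ℝ) : ℂ))
      (∫ v : ℝ, ((-1) ^ j * iteratedDeriv j psiDefect
          (1 + x + (-(2 * Real.pi * v / δ) : ℝ) * Complex.I))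
        * (Complex.exp ((2 * Real.pi * v * (-u₀ / δ) : ℝ) * Complex.I)
          * 𝓕 (fun y => (tent y : ℂ)) v)) := by
  set F : ℕ → ℝ → ℂ := fun n v => ((defectCoeff j n * (n : ℝ) ^ (-(1 + x)) : ℝ) : ℂ)
    * (Complex.exp ((2 * Real.pi * v * ((Real.log n - u₀) / δ) : ℝ) * Complex.I)
      * 𝓕 (fun y => (tent y : ℂ)) v) with hF
  have hInteg (y : ℝ) : MeasureTheory.Integrable fun v : ℝ =>
      Complex.exp ((2 * Real.pi * v * y : ℝ) * Complex.I) * 𝓕 (fun y => (tent y : ℂ)) v := by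
    refine integrable_fourier_tent.bdd_mul (c := 1) ?_ ?_
    · exact (by fun_prop : Continuous fun v : ℝ =>
        Complex.exp ((2 * Real.pi * v * y : ℝ) * Complex.I)).aestronglyMeasurable
    · exact Filter.Eventually.of_forall fun v => (Complex.norm_exp_ofReal_mul_I _).le
  have hnorm (n : ℕ) (v : ℝ) : ‖F n v‖
      = |defectCoeff j n * (n : ℝ) ^ (-(1 + x))| * ‖𝓕 (fun y => (tent y : ℂ)) v‖ := by
    rw [hF]
    simp only [norm_mul (_ : ℂ), Complex.norm_exp_ofReal_mul_I, one_mul, Complex.norm_real,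
      Real.norm_eq_abs]
  -- the series at a point of the line, term by term
  have hterm (t : ℝ) (n : ℕ) : (defectCoeff j n : ℂ) * (n : ℂ) ^ (-(1 + x + t * Complex.I : ℂ))
      = ((defectCoeff j n * (n : ℝ) ^ (-(1 + x)) : ℝ) : ℂ)
        * Complex.exp ((-t * Real.log n : ℝ) * Complex.I) := by
    rcases eq_or_ne n 0 with rfl | hn
    · have h1 : (-(1 + x + t * Complex.I) : ℂ) ≠ 0 := by
        intro h
        have := congr_arg Complex.re h
        simp at this
        linarith
      have h2 : -(1 + x) ≠ 0 := by linarith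
      simp only [Nat.cast_zero, Complex.zero_cpow h1, Real.zero_rpow h2]
      simp
    · have hn' : (0 : ℝ) < n := by positivity
      have hnc : (n : ℂ) ≠ 0 := by exact_mod_cast hn
      rw [neg_add, Complex.cpow_add _ _ hnc, Complex.ofReal_mul,
        Complex.ofReal_cpow hn'.le, mul_assoc]
      congr 2
      · push_cast; rfl
      · rw [Complex.cpow_def_of_ne_zero hnc, ← Complex.natCast_log]
        congr 1
        push_cast; ring
  have hsum1 : Summable fun n : ℕ => |defectCoeff j n * (n : ℝ) ^ (-(1 + x))| := by
    have h := (hasSum_defect j (s := 1 + x + (0 : ℝ) * Complex.I) (by simp [hx])).summable.norm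
    refine h.congr fun n => ?_
    rw [hterm, norm_mul, Complex.norm_exp_ofReal_mul_I, mul_one, Complex.norm_real,
      Real.norm_eq_abs]
  have h := MeasureTheory.hasSum_integral_of_summable_integral_norm
    (μ := MeasureTheory.volume) (F := F) (fun n => (hInteg _).const_mul _) (by
      simp_rw [hnorm, MeasureTheory.integral_const_mul]
      exact hsum1.mul_right _)
  have e1 (n : ℕ) : ∫ v : ℝ, F n v = (((defectCoeff j n * (n : ℝ) ^ (-(1 + x)))
        * tent ((Real.log n - u₀) / δ) : ℝ) : ℂ) := by
    rw [hF]
    simp only []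
    rw [MeasureTheory.integral_const_mul, ← tent_eq_integral_fourier]
    push_cast
    rfl
  have e2 (v : ℝ) : ∑' n, F n v = ((-1) ^ j * iteratedDeriv j psiDefect
          (1 + x + (-(2 * Real.pi * v / δ) : ℝ) * Complex.I))
        * (Complex.exp ((2 * Real.pi * v * (-u₀ / δ) : ℝ) * Complex.I)
          * 𝓕 (fun y => (tent y : ℂ)) v) := by
    apply HasSum.tsum_eq
    have h2 := (hasSum_defect j (s := 1 + x + (-(2 * Real.pi * v / δ) : ℝ) * Complex.I)
      (by simp [hx])).mul_right
        (Complex.exp ((2 * Real.pi * v * (-u₀ / δ) : ℝ) * Complex.I)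
          * 𝓕 (fun y => (tent y : ℂ)) v)
    refine h2.congr_fun fun n => ?_
    rw [hterm, hF]
    simp only []
    rw [mul_assoc (Complex.ofReal _), ← mul_assoc (Complex.exp _) (Complex.exp _), ← Complex.exp_add]
    congr 3
    push_cast
    field_simp
    ring
  rw [funext e1] at h
  simp_rw [e2] at h
  exact h

lemma add_pow_le_pow_mul_exp {Λ y : ℝ} {M : ℕ} (hΛ : 0 < Λ) (hy : 0 ≤ y) (hM : 2 * M ≤ Λ) :
    (Λ + y) ^ M ≤ Λ ^ M * Real.exp (y / 2) := by
  have h1 : Λ + y ≤ Λ * Real.exp (y / Λ) := by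
    have := Real.add_one_le_exp (y / Λ)
    calc Λ + y = Λ * (y / Λ + 1) := by field_simp; ring
      _ ≤ _ := by gcongr
  calc (Λ + y) ^ M ≤ (Λ * Real.exp (y / Λ)) ^ M := by gcongr
    _ = Λ ^ M * Real.exp (M * (y / Λ)) := by rw [mul_pow, ← Real.exp_nat_mul]
    _ ≤ Λ ^ M * Real.exp (y / 2) := by
      gcongr
      rw [← mul_div_assoc, div_le_div_iff₀ hΛ two_pos]
      nlinarith

lemma smoothed_bound (j : ℕ) {x δ : ℝ} (u₀ : ℝ) (hx : 0 < x) (hx1 : x ≤ 1 / 1000) (hδ : 0 < δ)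
    (hδ1 : δ ≤ 1) (hj : 18 * (j + 1) ≤ Real.log (16 / δ)) :
    |∑' n : ℕ, (defectCoeff j n * (n : ℝ) ^ (-(1 + x))) * tent ((Real.log n - u₀) / δ)|
      ≤ 16 * (j.factorial * (10 ^ 25 * Real.log (16 / δ) ^ 9) ^ (j + 1)) := by
  set Λ := Real.log (16 / δ) with hΛ
  have hΛ0 : 0 < Λ := lt_of_lt_of_le (by positivity) hj
  rw [← Real.norm_eq_abs, ← Complex.norm_real, Complex.ofReal_tsum,
    (hasSum_smoothed j u₀ hx hδ).tsum_eq]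
  set C : ℝ := j.factorial * (10 ^ 25 * Λ ^ 9) ^ (j + 1) with hC
  have hInteg : MeasureTheory.Integrable fun v : ℝ => (1 + |v|) ^ (-(3 / 2) : ℝ) :=
    integrable_one_add_norm (E := ℝ) (by norm_num)
  have hb : ∀ v : ℝ, ‖((-1) ^ j * iteratedDeriv j psiDefect
          (1 + x + (-(2 * Real.pi * v / δ) : ℝ) * Complex.I))
        * (Complex.exp ((2 * Real.pi * v * (-u₀ / δ) : ℝ) * Complex.I)
          * 𝓕 (fun y => (tent y : ℂ)) v)‖ ≤ 4 * C * (1 + |v|) ^ (-(3 / 2) : ℝ) := by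
    intro v
    have hv : 0 < 1 + |v| := by positivity
    rw [norm_mul, norm_mul, norm_mul, Complex.norm_exp_ofReal_mul_I, one_mul, norm_pow, norm_neg,
      norm_one, one_pow, one_mul]
    have h1 := norm_iteratedDeriv_psiDefect_le j (x := x) (t := -(2 * Real.pi * v / δ)) hx.le hx1
    have hlog : Real.log (2 * |-(2 * Real.pi * v / δ)| + 10) ≤ Λ + Real.log (1 + |v|) := by
      rw [hΛ, ← Real.log_mul (by positivity) hv.ne']
      apply Real.log_le_log (by positivity)
      rw [abs_neg, abs_div, abs_of_pos hδ, abs_mul, abs_of_pos (by positivity : 0 < 2 * Real.pi),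
        div_mul_eq_mul_div, ← mul_div_assoc, div_add' _ _ _ hδ.ne']
      gcongr
      nlinarith [Real.pi_le_four, abs_nonneg v]
    have hlog0 : 0 ≤ Real.log (2 * |-(2 * Real.pi * v / δ)| + 10) :=
      Real.log_nonneg (by linarith [abs_nonneg (-(2 * Real.pi * v / δ))])
    have h2 : stripBound (Real.log (2 * |-(2 * Real.pi * v / δ)| + 10)) ^ (j + 1)
        ≤ (10 ^ 25 * Λ ^ 9) ^ (j + 1) * (1 + |v|) ^ (1 / 2 : ℝ) := by
      have h3 := add_pow_le_pow_mul_exp (M := 9 * (j + 1)) hΛ0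
        (Real.log_nonneg (by linarith [abs_nonneg v] : (1 : ℝ) ≤ 1 + |v|))
        (by push_cast; linarith)
      rw [Real.rpow_def_of_pos hv, stripBound, mul_pow, mul_pow _ (Λ ^ 9), ← pow_mul (Real.log _),
        ← pow_mul Λ, mul_assoc (_ ^ (j + 1)), show Real.log (1 + |v|) * (1 / 2) = Real.log (1 + |v|) / 2 by ring]
      refine mul_le_mul_of_nonneg_left ?_ (by positivity)
      exact (pow_le_pow_left₀ hlog0 hlog _).trans h3
    calc _ ≤ (j.factorial * ((10 ^ 25 * Λ ^ 9) ^ (j + 1) * (1 + |v|) ^ (1 / 2 : ℝ)))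
          * (4 * (1 + |v|) ^ (-2 : ℝ)) := by
          refine mul_le_mul ?_ (norm_fourier_tent_le v) (norm_nonneg _) (by positivity)
          exact h1.trans (by gcongr)
      _ = 4 * C * ((1 + |v|) ^ (1 / 2 : ℝ) * (1 + |v|) ^ (-2 : ℝ)) := by rw [hC]; ring
      _ = _ := by rw [← Real.rpow_add hv]; norm_num
  calc _ ≤ ∫ v : ℝ, 4 * C * (1 + |v|) ^ (-(3 / 2) : ℝ) :=
        MeasureTheory.norm_integral_le_of_norm_le (hInteg.const_mul _)
          (Filter.Eventually.of_forall hb)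
    _ = 16 * C := by
        rw [MeasureTheory.integral_const_mul, integral_one_add_abs_rpow]; ring

/-! ### Primes in short intervals -/

lemma tent_pos_iff {y : ℝ} : 0 < tent y ↔ |y| < 1 := by
  rw [tent, lt_max_iff]
  simp

lemma half_le_tent {y : ℝ} (hy : |y| ≤ 1 / 2) : 1 / 2 ≤ tent y := by
  rw [tent_eq (by linarith)]; linarith

/-- The contribution of the constant coefficient `1`. -/
lemma le_sum_logs (j N : ℕ) {u₀ δ x : ℝ} (hu : 1 ≤ u₀) (hδ : 0 < δ) (hδ1 : δ ≤ 1)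
    (hx : 0 < x) (hxu : x * (u₀ + 1) ≤ 1) (hδu : 4 ≤ Real.exp u₀ * δ)
    (hN : Real.exp (u₀ + 1) < N) :
    u₀ ^ j * δ / 64 ≤ ∑ n ∈ Finset.range N,
      (Real.log n ^ j * (n : ℝ) ^ (-(1 + x))) * tent ((Real.log n - u₀) / δ) := by
  set a := Real.exp u₀ with ha
  set b := Real.exp (u₀ + δ / 2) with hb
  have hba : a * (1 + δ / 2) ≤ b := by
    rw [hb, Real.exp_add]
    gcongr
    linarith [Real.add_one_le_exp (δ / 2)]
  have ha0 : 0 < a := Real.exp_pos _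
  have hsub : Finset.Ioc ⌊a⌋₊ ⌊b⌋₊ ⊆ Finset.range N := by
    intro n hn
    rw [Finset.mem_Ioc] at hn
    rw [Finset.mem_range]
    have h1 : (n : ℝ) ≤ b := (Nat.le_floor_iff (Real.exp_pos _).le).1 hn.2
    have h2 : b ≤ Real.exp (u₀ + 1) := Real.exp_le_exp.2 (by linarith)
    exact_mod_cast (h1.trans h2).trans_lt hN
  have hcard : a * δ / 4 ≤ (Finset.Ioc ⌊a⌋₊ ⌊b⌋₊).card := by
    rw [Nat.card_Ioc, Nat.cast_sub (Nat.floor_le_floor (by nlinarith))]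
    have h1 := Nat.floor_le ha0.le
    have h2 := Nat.lt_floor_add_one b
    nlinarith
  have hterm : ∀ n ∈ Finset.Ioc ⌊a⌋₊ ⌊b⌋₊, u₀ ^ j / (16 * a)
      ≤ (Real.log n ^ j * (n : ℝ) ^ (-(1 + x))) * tent ((Real.log n - u₀) / δ) := by
    intro n hn
    rw [Finset.mem_Ioc] at hn
    have h1 : a < n := (Nat.floor_lt ha0.le).1 hn.1
    have h2 : (n : ℝ) ≤ b := (Nat.le_floor_iff (Real.exp_pos _).le).1 hn.2
    have hn0 : (0 : ℝ) < n := ha0.trans h1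
    have hl1 : u₀ ≤ Real.log n := by
      rw [Real.le_log_iff_exp_le hn0]; exact h1.le
    have hl2 : Real.log n ≤ u₀ + δ / 2 := by
      rw [Real.log_le_iff_le_exp hn0]; exact h2
    have ht : 1 / 2 ≤ tent ((Real.log n - u₀) / δ) := by
      apply half_le_tent
      rw [abs_of_nonneg (div_nonneg (by linarith) hδ.le), div_le_iff₀ hδ]
      linarith
    have hp : 1 / (8 * a) ≤ (n : ℝ) ^ (-(1 + x)) := by
      rw [Real.rpow_def_of_pos hn0]
      have : -(u₀ + 3 / 2) ≤ Real.log n * -(1 + x) := by nlinarith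
      refine le_trans ?_ (Real.exp_le_exp.2 this)
      rw [Real.exp_neg, Real.exp_add, ← ha, one_div, mul_comm (8 : ℝ)]
      gcongr
      have h3 : Real.exp (3 / 2) ≤ Real.exp 2 := Real.exp_le_exp.2 (by norm_num)
      have h4 : Real.exp 2 < 8 := by
        have := Real.exp_one_lt_d9
        rw [show (2 : ℝ) = 1 + 1 by norm_num, Real.exp_add]
        nlinarith [Real.exp_pos 1]
      linarith
    calc u₀ ^ j / (16 * a) = (u₀ ^ j * (1 / (8 * a))) * (1 / 2) := by field_simp; norm_num
      _ ≤ _ := by gcongr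
  calc u₀ ^ j * δ / 64 = (a * δ / 4) * (u₀ ^ j / (16 * a)) := by field_simp; norm_num
    _ ≤ (Finset.Ioc ⌊a⌋₊ ⌊b⌋₊).card * (u₀ ^ j / (16 * a)) := by gcongr
    _ ≤ ∑ n ∈ Finset.Ioc ⌊a⌋₊ ⌊b⌋₊, (Real.log n ^ j * (n : ℝ) ^ (-(1 + x)))
          * tent ((Real.log n - u₀) / δ) := by
        rw [← nsmul_eq_mul]; exact Finset.card_nsmul_le_sum _ _ _ hterm
    _ ≤ _ := Finset.sum_le_sum_of_subset_of_nonneg hsub fun n _ _ => by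
        have := tent_nonneg ((Real.log n - u₀) / δ)
        have := Real.log_natCast_nonneg n
        positivity

/-- If no prime `p` has `|log p - u₀| < δ`, then only proper prime powers contribute to the
smoothed sum of the von Mangoldt function. -/
lemma sum_vonMangoldt_le (j N : ℕ) {u₀ δ x : ℝ} (hu : 1 ≤ u₀) (hδ : 0 < δ) (hδ1 : δ ≤ 1)
    (hx : 0 < x)
    (hno : ∀ p : ℕ, p.Prime → ¬ |Real.log p - u₀| < δ) :
    ∑ n ∈ Finset.range N, (ArithmeticFunction.vonMangoldt n * Real.log n ^ j
        * (n : ℝ) ^ (-(1 + x))) * tent ((Real.log n - u₀) / δ)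
      ≤ 2 * (u₀ + 1) ^ (j + 1) * Real.exp ((3 - u₀) / 2) := by
  set y := Real.exp (u₀ + 1) with hy
  set K : ℝ := (u₀ + 1) ^ j * Real.exp (1 - u₀) with hK
  set S := {n ∈ Finset.Ioc 0 ⌊y⌋₊ | ¬ n.Prime} with hS
  have hterm : ∀ n ∈ Finset.range N, (ArithmeticFunction.vonMangoldt n * Real.log n ^ j
        * (n : ℝ) ^ (-(1 + x))) * tent ((Real.log n - u₀) / δ)
      ≤ if n ∈ S then K * ArithmeticFunction.vonMangoldt n else 0 := by
    intro n _
    have hΛ := ArithmeticFunction.vonMangoldt_nonneg (n := n)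
    by_cases ht : |(Real.log n - u₀) / δ| < 1
    · have ht' : |Real.log n - u₀| < δ := by
        rwa [abs_div, abs_of_pos hδ, div_lt_one hδ] at ht
      have hnp : ¬ n.Prime := fun hp => hno n hp ht'
      rw [abs_lt] at ht'
      have hn0 : 0 < n := by
        rcases Nat.eq_zero_or_pos n with rfl | h
        · simp at ht'; linarith
        · exact h
      have hn0' : (0 : ℝ) < n := by exact_mod_cast hn0
      have hny : (n : ℝ) ≤ y := by
        rw [hy, ← Real.log_le_iff_le_exp hn0']; linarith
      have hnS : n ∈ S := by
        rw [hS, Finset.mem_filter, Finset.mem_Ioc]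
        exact ⟨⟨hn0, Nat.le_floor hny⟩, hnp⟩
      rw [if_pos hnS]
      have hl0 := Real.log_natCast_nonneg n
      have h1 : Real.log n ^ j ≤ (u₀ + 1) ^ j := by gcongr; linarith
      have h2 : (n : ℝ) ^ (-(1 + x)) ≤ Real.exp (1 - u₀) := by
        rw [Real.rpow_def_of_pos hn0']
        apply Real.exp_le_exp.2
        nlinarith
      calc _ ≤ (ArithmeticFunction.vonMangoldt n * (u₀ + 1) ^ j * Real.exp (1 - u₀)) * 1 := by
            gcongr
            · exact tent_nonneg _
            · exact tent_le_one _
        _ = _ := by rw [hK]; ring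
    · rw [tent_eq_zero (not_lt.1 ht), mul_zero]
      split_ifs
      · positivity
      · exact le_rfl
  refine (Finset.sum_le_sum hterm).trans ?_
  rw [Finset.sum_ite_mem]
  have hy1 : 1 ≤ y := Real.one_le_exp (by linarith)
  calc ∑ n ∈ Finset.range N ∩ S, K * ArithmeticFunction.vonMangoldt n
      ≤ ∑ n ∈ S, K * ArithmeticFunction.vonMangoldt n :=
        Finset.sum_le_sum_of_subset_of_nonneg Finset.inter_subset_right fun n _ _ =>
          mul_nonneg (by positivity) ArithmeticFunction.vonMangoldt_nonneg
    _ = K * (Chebyshev.psi y - Chebyshev.theta y) := by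
        rw [Chebyshev.psi_sub_theta_eq_sum_not_prime, Finset.mul_sum]
    _ ≤ K * (2 * √y * Real.log y) := by
        gcongr
        exact Chebyshev.psi_sub_theta_le hy1
    _ = _ := by
        rw [hy, Real.log_exp, ← Real.exp_half, hK,
          show (3 - u₀) / 2 = (1 - u₀) + (u₀ + 1) / 2 by ring, Real.exp_add]
        ring

lemma exists_prime_near (j : ℕ) {u₀ δ : ℝ} (hu : 1000 ≤ u₀) (hδ : 0 < δ) (hδ1 : δ ≤ 1)
    (hδu : 4 ≤ Real.exp u₀ * δ) (hj : 18 * (j + 1) ≤ Real.log (16 / δ))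
    (hmain : 16 * (j.factorial * (10 ^ 25 * Real.log (16 / δ) ^ 9) ^ (j + 1))
      + 2 * (u₀ + 1) ^ (j + 1) * Real.exp ((3 - u₀) / 2) < u₀ ^ j * δ / 64) :
    ∃ p : ℕ, p.Prime ∧ |Real.log p - u₀| < δ := by
  by_contra! hno
  replace hno : ∀ p : ℕ, p.Prime → ¬ |Real.log p - u₀| < δ := fun p hp => not_lt.2 (hno p hp)
  set x := 1 / (u₀ + 1) with hx
  have hx0 : 0 < x := by rw [hx]; positivity
  have hx1 : x ≤ 1 / 1000 := one_div_le_one_div_of_le (by norm_num) (by linarith)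
  have hxu : x * (u₀ + 1) ≤ 1 := by rw [hx, one_div, inv_mul_cancel₀ (by linarith)]
  obtain ⟨N, hN⟩ := exists_nat_gt (Real.exp (u₀ + 1))
  have h1 := le_sum_logs j N (by linarith : 1 ≤ u₀) hδ hδ1 hx0 hxu hδu hN
  have h2 := sum_vonMangoldt_le j N (by linarith : 1 ≤ u₀) hδ hδ1 hx0 hno
  have h3 := smoothed_bound j u₀ hx0 hx1 hδ hδ1 hj
  rw [tsum_eq_sum (s := Finset.range N)] at h3
  · have h4 := (abs_le.1 h3).1
    have h5 : ∑ n ∈ Finset.range N, (defectCoeff j n * (n : ℝ) ^ (-(1 + x)))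
          * tent ((Real.log n - u₀) / δ)
        = ∑ n ∈ Finset.range N, (ArithmeticFunction.vonMangoldt n * Real.log n ^ j
            * (n : ℝ) ^ (-(1 + x))) * tent ((Real.log n - u₀) / δ)
          - ∑ n ∈ Finset.range N, (Real.log n ^ j * (n : ℝ) ^ (-(1 + x)))
            * tent ((Real.log n - u₀) / δ) := by
      rw [← Finset.sum_sub_distrib]
      refine Finset.sum_congr rfl fun n _ => ?_
      rw [defectCoeff]; ring
    rw [h5] at h4
    linarith
  · intro n hn
    rw [Finset.mem_range, not_lt] at hn
    have h4 : Real.exp (u₀ + 1) < n := hN.trans_le (by exact_mod_cast hn)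
    have h5 : u₀ + 1 < Real.log n := by
      rwa [Real.lt_log_iff_exp_lt ((Real.exp_pos _).trans h4)]
    rw [tent_eq_zero, mul_zero]
    rw [abs_of_pos (div_pos (by linarith) hδ), le_div_iff₀ hδ]
    linarith

lemma exp_half_ge {l : ℝ} (hl : 1500 ≤ l) : 2 ^ 98 * l ^ 49 ≤ Real.exp (l / 2) := by
  have h0 : 0 ≤ l := by linarith
  have h1 : 4 * l ≤ Real.exp (l / 98) := by
    refine le_trans ?_ (Real.pow_div_factorial_le_exp (l / 98) (by positivity) 5)
    have h2 : (15 : ℝ) ≤ l / 98 := by linarith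
    have h3 : (1500 / 98 : ℝ) ^ 4 ≤ (l / 98) ^ 4 := by gcongr
    have h4 : (47040 : ℝ) ≤ (l / 98) ^ 4 := le_trans (by norm_num) h3
    rw [le_div_iff₀ (by positivity)]
    norm_num [Nat.factorial]
    nlinarith
  calc 2 ^ 98 * l ^ 49 = (4 * l) ^ 49 := by ring
    _ ≤ Real.exp (l / 98) ^ 49 := by gcongr
    _ = Real.exp (l / 2) := by rw [← Real.exp_nat_mul]; congr 1; push_cast; ring

set_option maxHeartbeats 1000000 in
/-- Just above `2 ^ A` there is a prime, whose logarithm exceeds that of `2 ^ A` by less than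
`2 * exp (-(log A) ^ 5)`; the number of derivatives taken is about `4 * (log A) ^ 4`. -/
lemma exists_prime_gt_two_pow {A : ℕ} (hA : 1500 ≤ Real.log A) :
    ∃ q : ℕ, q.Prime ∧ A * Real.log 2 < Real.log q ∧
      Real.log q < A * Real.log 2 + 2 * Real.exp (-(Real.log A) ^ 5) := by
  set l := Real.log A with hl
  have hA0 : (0 : ℝ) < A := by
    rcases Nat.eq_zero_or_pos A with rfl | h
    · simp at hl; linarith
    · exact_mod_cast h
  have hAl : (A : ℝ) = Real.exp l := (Real.exp_log hA0).symm
  have hl0 : 0 < l := by linarith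
  set δ := Real.exp (-l ^ 5) with hδ
  have hδ0 : 0 < δ := Real.exp_pos _
  have hδ1 : δ ≤ 1 := Real.exp_le_one_iff.2 (by simp; positivity)
  set u₀ := A * Real.log 2 + δ with hu₀
  set j := ⌈4 * l ^ 4⌉₊ with hj
  have hj1 : 4 * l ^ 4 ≤ j := Nat.le_ceil _
  have hl4 : (1 : ℝ) ≤ l ^ 4 := one_le_pow₀ (by linarith)
  have hj2 : (j : ℝ) ≤ 5 * l ^ 4 := by
    have := Nat.ceil_lt_add_one (by positivity : 0 ≤ 4 * l ^ 4)
    rw [← hj] at this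
    linarith
  have hl5 : 1500 * l ^ 4 ≤ l ^ 5 := by
    rw [pow_succ l 4, mul_comm (l ^ 4)]; gcongr
  have hE := exp_half_ge hA
  set E := Real.exp (l / 2) with hEdef
  clear_value δ u₀ j E
  have hEE : E * E = A := by rw [hAl, hEdef, ← Real.exp_add]; congr 1; ring
  have hEl : l ^ 5 ≤ l ^ 49 := pow_le_pow_right₀ (by linarith) (by norm_num)
  have hE5 : 100 * l ^ 5 ≤ E := by nlinarith
  have hu1 : E * E / 2 ≤ u₀ := by
    rw [hEE, hu₀]
    have := Real.log_two_gt_d9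
    nlinarith
  have hE1 : 1000 ≤ E := by nlinarith
  have hu2 : 500 * E ≤ u₀ := by nlinarith
  have hu3 : 8 * l ^ 5 + 80 ≤ u₀ := by nlinarith
  have hu : 1000 ≤ u₀ := by nlinarith
  have hu00 : 0 < u₀ := by linarith
  have hju : (j : ℝ) ≤ u₀ := by nlinarith
  have hΛ : Real.log (16 / δ) = Real.log 16 + l ^ 5 := by
    rw [Real.log_div (by norm_num) hδ0.ne', hδ, Real.log_exp]; ring
  have hlog16 : 0 ≤ Real.log 16 ∧ Real.log 16 ≤ 15 :=
    ⟨Real.log_nonneg (by norm_num), by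
      have := Real.log_le_sub_one_of_pos (by norm_num : (0:ℝ) < 16); linarith⟩
  have hΛ1 : l ^ 5 ≤ Real.log (16 / δ) := by rw [hΛ]; linarith
  have hΛ2 : Real.log (16 / δ) ≤ 2 * l ^ 5 := by rw [hΛ]; nlinarith
  have hΛ0 : 0 ≤ Real.log (16 / δ) := le_trans (by positivity) hΛ1
  have hexp1 : (2 : ℝ) ≤ Real.exp 1 := by linarith [Real.exp_one_gt_d9]
  have hexpnat (n : ℕ) : (2 : ℝ) ^ n ≤ Real.exp n := by
    rw [← Real.exp_one_pow]; gcongr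
  have hmain : 16 * (j.factorial * (10 ^ 25 * Real.log (16 / δ) ^ 9) ^ (j + 1))
      + 2 * (u₀ + 1) ^ (j + 1) * Real.exp ((3 - u₀) / 2) < u₀ ^ j * δ / 64 := by
    have hpos : 0 < u₀ ^ j * δ := by positivity
    have part1 : 16 * (j.factorial * (10 ^ 25 * Real.log (16 / δ) ^ 9) ^ (j + 1))
        ≤ u₀ ^ j * δ / 256 := by
      set B : ℝ := 10 ^ 25 * (2 * l ^ 5) ^ 9 with hB
      clear_value B
      have hB0 : 0 < B := by rw [hB]; positivity
      have hjB : 4 * (j * B) ≤ E := by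
        calc 4 * (j * B) ≤ 4 * (5 * l ^ 4 * B) := by gcongr
          _ = (20 * 10 ^ 25 * 2 ^ 9) * l ^ 49 := by rw [hB]; ring
          _ ≤ 2 ^ 98 * l ^ 49 := by gcongr; norm_num
          _ ≤ E := hE
      have hBE : B ≤ E := by
        have : (1 : ℝ) ≤ j := by linarith
        nlinarith
      have hjB2 : j * B ≤ u₀ * Real.exp (-(l / 2)) := by
        rw [Real.exp_neg, ← hEdef, ← div_eq_mul_inv, le_div_iff₀ (by linarith)]
        nlinarith
      have h1 : (j * B) ^ j ≤ u₀ ^ j * Real.exp (-(2 * l ^ 5)) := by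
        calc (j * B) ^ j ≤ (u₀ * Real.exp (-(l / 2))) ^ j := by gcongr
          _ = u₀ ^ j * Real.exp (j * (-(l / 2))) := by rw [mul_pow, Real.exp_nat_mul]
          _ ≤ _ := by
            gcongr
            have : l ^ 5 = l ^ 4 * l := by ring
            nlinarith
      have h2 : 4096 * B ≤ Real.exp (l ^ 5) := by
        calc 4096 * B ≤ 2 ^ 12 * E := by linarith
          _ ≤ Real.exp (12 : ℕ) * E := by gcongr; exact hexpnat 12
          _ = Real.exp ((12 : ℕ) + l / 2) := by rw [Real.exp_add, hEdef]
          _ ≤ _ := by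
            apply Real.exp_le_exp.2
            push_cast
            have : l ≤ l ^ 5 := le_self_pow₀ (by linarith) (by norm_num)
            linarith
      have h3 : (j.factorial : ℝ) ≤ (j : ℝ) ^ j := by exact_mod_cast Nat.factorial_le_pow j
      calc 16 * (j.factorial * (10 ^ 25 * Real.log (16 / δ) ^ 9) ^ (j + 1))
          ≤ 16 * ((j : ℝ) ^ j * B ^ (j + 1)) := by rw [hB]; gcongr
        _ = ((j * B) ^ j) * (4096 * B) / 256 := by rw [mul_pow, pow_succ]; ring
        _ ≤ (u₀ ^ j * Real.exp (-(2 * l ^ 5))) * Real.exp (l ^ 5) / 256 := by gcongr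
        _ = u₀ ^ j * δ / 256 := by
          rw [mul_assoc, ← Real.exp_add, hδ]; congr 3; ring
    have part2 : 2 * (u₀ + 1) ^ (j + 1) * Real.exp ((3 - u₀) / 2) ≤ u₀ ^ j * δ / 256 := by
      have h1 : (u₀ + 1) ^ j ≤ u₀ ^ j * Real.exp 1 := by
        have h2 : u₀ + 1 ≤ u₀ * Real.exp (1 / u₀) := by
          calc u₀ + 1 = u₀ * (1 / u₀ + 1) := by field_simp; ring
            _ ≤ _ := by gcongr; exact Real.add_one_le_exp _
        calc (u₀ + 1) ^ j ≤ (u₀ * Real.exp (1 / u₀)) ^ j := by gcongr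
          _ = u₀ ^ j * Real.exp (j * (1 / u₀)) := by rw [mul_pow, Real.exp_nat_mul]
          _ ≤ _ := by
            gcongr
            rw [mul_one_div, div_le_one hu00]; exact hju
      have h2 : u₀ + 1 ≤ 4 * Real.exp (u₀ / 4) := by
        linarith [Real.add_one_le_exp (u₀ / 4)]
      calc 2 * (u₀ + 1) ^ (j + 1) * Real.exp ((3 - u₀) / 2)
          = 2 * ((u₀ + 1) ^ j * (u₀ + 1)) * Real.exp ((3 - u₀) / 2) := by rw [pow_succ]
        _ ≤ 2 * ((u₀ ^ j * Real.exp 1) * (4 * Real.exp (u₀ / 4))) * Real.exp ((3 - u₀) / 2) := by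
          gcongr
        _ = u₀ ^ j * (2 ^ 11 * (Real.exp 1 * Real.exp (u₀ / 4) * Real.exp ((3 - u₀) / 2))) / 256 := by
          ring
        _ ≤ u₀ ^ j * (Real.exp (11 : ℕ)
            * (Real.exp 1 * Real.exp (u₀ / 4) * Real.exp ((3 - u₀) / 2))) / 256 := by
          gcongr; exact hexpnat 11
        _ ≤ u₀ ^ j * δ / 256 := by
          rw [← Real.exp_add, ← Real.exp_add, ← Real.exp_add, hδ]
          gcongr
          push_cast
          linarith
    linarith
  have hδu : 4 ≤ Real.exp u₀ * δ := by
    rw [hδ, ← Real.exp_add]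
    refine le_trans ?_ (Real.exp_le_exp.2 (show ((2 : ℕ) : ℝ) ≤ u₀ + -l ^ 5 by push_cast; nlinarith))
    exact le_trans (by norm_num) (hexpnat 2)
  obtain ⟨q, hq, hqu⟩ := exists_prime_near j hu hδ0 hδ1 hδu (by nlinarith) hmain
  rw [abs_lt] at hqu
  exact ⟨q, hq, by linarith [hqu.1], by linarith [hqu.2]⟩

/-- Attainability is inherited by multiples `A * c` with `c` up to a quasi-polynomial bound. -/
lemma Attainable.mul_of_le {A c : ℕ} (h : Attainable A) (hA : 1500 ≤ Real.log A) (hc : 0 < c)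
    (hcA : Real.log c ≤ Real.log A ^ 4) : Attainable (A * c) := by
  obtain ⟨q, hq, h1, h2⟩ := exists_prime_gt_two_pow hA
  set l := Real.log A with hl
  have hA0 : (0 : ℝ) < A := by exact_mod_cast h.1
  have hc0 : (0 : ℝ) < c := by exact_mod_cast hc
  have hq0 : (0 : ℝ) < q := by exact_mod_cast hq.pos
  have hpow : (2 : ℝ) ^ A = Real.exp (A * Real.log 2) := by
    rw [Real.exp_nat_mul, Real.exp_log two_pos]
  refine h.mul hc hq ?_ ?_
  · have : (2 : ℝ) ^ A < q := by
      rw [hpow, ← Real.lt_log_iff_exp_lt hq0]; exact h1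
    exact_mod_cast this
  · have hl4 : (1 : ℝ) ≤ l ^ 4 := one_le_pow₀ (by linarith)
    have hl1 : l ≤ l ^ 4 := le_self_pow₀ (by linarith) (by norm_num)
    have hl5 : 1500 * l ^ 4 ≤ l ^ 5 := by
      rw [pow_succ l 4, mul_comm (l ^ 4)]; gcongr
    set δ := Real.exp (-l ^ 5) with hδ
    have hδ0 : 0 < δ := Real.exp_pos _
    -- `4 δ ≤ 1 / (4 A c)`
    have hkey : 4 * δ ≤ 1 / (4 * A * c) := by
      rw [le_div_iff₀ (by positivity), hδ]
      have h16 : (16 : ℝ) ≤ Real.exp 15 := by linarith [Real.add_one_le_exp (15 : ℝ)]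
      calc 4 * Real.exp (-l ^ 5) * (4 * A * c)
          = 16 * Real.exp (Real.log A) * Real.exp (Real.log c) * Real.exp (-l ^ 5) := by
            rw [Real.exp_log hA0, Real.exp_log hc0]; ring
        _ ≤ Real.exp 15 * Real.exp (Real.log A) * Real.exp (Real.log c) * Real.exp (-l ^ 5) := by
            gcongr
        _ ≤ 1 := by
            rw [← Real.exp_add, ← Real.exp_add, ← Real.exp_add, Real.exp_le_one_iff]
            linarith
    have hδ1 : δ ≤ 1 / 2 := by
      rw [hδ, Real.exp_neg, inv_le_comm₀ (Real.exp_pos _) (by norm_num)]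
      linarith [Real.add_one_le_exp (l ^ 5)]
    have hexp : Real.exp (2 * δ) ≤ 1 + 4 * δ := by
      have := Real.abs_exp_sub_one_sub_id_le (x := 2 * δ) (by rw [abs_of_pos] <;> linarith)
      rw [abs_le] at this
      nlinarith
    calc (q : ℝ) ≤ Real.exp (A * Real.log 2 + 2 * δ) := by
          rw [← Real.log_le_iff_le_exp hq0]; exact h2.le
      _ = 2 ^ A * Real.exp (2 * δ) := by rw [Real.exp_add, hpow]
      _ ≤ 2 ^ A * (1 + 1 / (4 * A * c)) := by gcongr; linarith

lemma Attainable.mul_two_pow {A : ℕ} (h : Attainable A) (hA : 1500 ≤ Real.log A) (n : ℕ) :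
    Attainable (A * 2 ^ n) ∧ 1500 ≤ Real.log (A * 2 ^ n : ℕ) := by
  have hlog (n : ℕ) : 1500 ≤ Real.log (A * 2 ^ n : ℕ) := by
    have hA0 : (0 : ℝ) < A := by exact_mod_cast h.1
    refine hA.trans (Real.log_le_log hA0 ?_)
    push_cast
    exact le_mul_of_one_le_right hA0.le (one_le_pow₀ one_le_two)
  refine ⟨?_, hlog n⟩
  induction n with
  | zero => simpa only [pow_zero, mul_one] using h
  | succ n ih =>
    rw [pow_succ, ← mul_assoc]
    refine ih.mul_of_le (hlog n) two_pos ?_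
    have h4 : (1 : ℝ) ≤ Real.log (A * 2 ^ n : ℕ) ^ 4 := one_le_pow₀ (by linarith [hlog n])
    have := Real.log_two_lt_d9
    refine le_trans ?_ h4
    rw [Nat.cast_ofNat]
    linarith

/-- Arbitrarily large attainable exponents, in the range where `Attainable.mul_of_le` applies. -/
lemma exists_attainable_ge (N : ℕ) : ∃ A, N ≤ A ∧ Attainable A ∧ 1500 ≤ Real.log A := by
  have hlog : 1500 ≤ Real.log ((8192 * 2 ^ 2300 : ℕ) : ℝ) := by
    rw [Nat.cast_mul, Nat.cast_pow, Real.log_mul (by norm_num) (by positivity), Real.log_pow]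
    have h1 := Real.log_two_gt_d9
    have h2 : 0 ≤ Real.log ((8192 : ℕ) : ℝ) := Real.log_natCast_nonneg _
    simp only [Nat.cast_ofNat] at h2 ⊢
    linarith
  have h := attainable_base.mul_two_pow hlog N
  refine ⟨_, ?_, h⟩
  exact N.lt_two_pow_self.le.trans (Nat.le_mul_of_pos_left _ attainable_base.1)

/-! ### Reciprocal sums of primes over doubly exponential blocks -/

/-- The primes `p` with `m < p ≤ n`. -/
def primesIoc (m n : ℕ) : Finset ℕ := {p ∈ Finset.Ioc m n | p.Prime}

lemma mem_primesIoc {m n p : ℕ} : p ∈ primesIoc m n ↔ (m < p ∧ p ≤ n) ∧ p.Prime := by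
  rw [primesIoc, Finset.mem_filter, Finset.mem_Ioc]

lemma sum_primesIoc_add (f : ℕ → ℝ) {a b c : ℕ} (hab : a ≤ b) (hbc : b ≤ c) :
    ∑ p ∈ primesIoc a b, f p + ∑ p ∈ primesIoc b c, f p = ∑ p ∈ primesIoc a c, f p := by
  rw [← Finset.sum_union]
  · congr 1
    ext p
    simp only [Finset.mem_union, mem_primesIoc]
    constructor
    · rintro (⟨⟨h1, h2⟩, h3⟩ | ⟨⟨h1, h2⟩, h3⟩)
      · exact ⟨⟨h1, h2.trans hbc⟩, h3⟩
      · exact ⟨⟨hab.trans_lt h1, h2⟩, h3⟩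
    · rintro ⟨⟨h1, h2⟩, h3⟩
      rcases le_or_gt p b with h | h
      · exact Or.inl ⟨⟨h1, h⟩, h3⟩
      · exact Or.inr ⟨⟨h, h2⟩, h3⟩
  · rw [Finset.disjoint_left]
    intro p hp hp'
    rw [mem_primesIoc] at hp hp'
    omega

lemma theta_natCast (n : ℕ) : Chebyshev.theta n = ∑ p ∈ primesIoc 0 n, Real.log p := by
  rw [Chebyshev.theta, Nat.floor_natCast, primesIoc]

/-- Chebyshev's bounds leave a positive proportion of the mass of `θ` between `4 ^ i` and
`4 ^ (i + 1)`. -/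
lemma sum_log_primesIoc_ge {i : ℕ} (hi : 8 ≤ i) :
    (4 : ℝ) ^ i ≤ ∑ p ∈ primesIoc (4 ^ i) (4 ^ (i + 1)), Real.log p := by
  have h1 := Chebyshev.theta_ge (4 ^ (i + 1))
  have h2 := Chebyshev.theta_le_log4_mul_x (x := ((4 ^ i : ℕ) : ℝ)) (by positivity)
  have h3 := sum_primesIoc_add (fun p => Real.log p) (Nat.zero_le (4 ^ i))
    (Nat.pow_le_pow_right (by norm_num : 0 < 4) (Nat.le_succ i))
  rw [← theta_natCast, ← theta_natCast] at h3
  have hlog4 : Real.log 4 = 2 * Real.log 2 := by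
    rw [show (4 : ℝ) = 2 ^ 2 by norm_num, Real.log_pow]; norm_num
  have hl1 := Real.log_two_gt_d9
  have hl2 := Real.log_two_lt_d9
  have hsqrt : √((4 ^ (i + 1) : ℕ) : ℝ) = 2 * 2 ^ i := by
    rw [Real.sqrt_eq_iff_mul_self_eq (by positivity) (by positivity)]
    push_cast
    rw [pow_succ, show (4 : ℝ) = 2 * 2 by norm_num, mul_pow]
    ring
  have hlog : Real.log ((4 ^ (i + 1) : ℕ) : ℝ) = (i + 1) * Real.log 4 := by
    push_cast; rw [Real.log_pow]; push_cast; ring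
  have hlog' : Real.log (((4 ^ (i + 1) : ℕ) : ℝ) + 1) ≤ (i + 2) * Real.log 4 := by
    have : (i + 2) * Real.log 4 = Real.log (4 ^ (i + 2)) := by
      rw [Real.log_pow]; push_cast; ring
    rw [this]
    apply Real.log_le_log (by positivity)
    push_cast
    have : (1 : ℝ) ≤ 4 ^ (i + 1) := one_le_pow₀ (by norm_num)
    rw [pow_succ 4 (i + 1)]
    linarith
  have hpow : 16 * ((i : ℝ) + 2) ≤ 2 ^ i := by
    have : 16 * (i + 2) ≤ 2 ^ i := by
      clear * - hi
      induction i, hi using Nat.le_induction with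
      | base => norm_num
      | succ n hn ih => rw [pow_succ]; omega
    exact_mod_cast this
  have h4 : (4 : ℝ) ^ i = 2 ^ i * 2 ^ i := by rw [← mul_pow]; norm_num
  rw [hsqrt, hlog] at h1
  push_cast at h1 h2 h3 hlog'
  rw [pow_succ (4 : ℝ), h4] at h1 h3 hlog'
  rw [h4] at h2 ⊢
  rw [hlog4] at h1 h2 hlog'
  set T : ℝ := 2 ^ i with hT
  have hT1 : 160 ≤ T := by
    have : (8 : ℝ) ≤ i := by exact_mod_cast hi
    linarith
  have hi0 : (0 : ℝ) ≤ i := by positivity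
  have e1 : ((i : ℝ) + 2) * (2 * Real.log 2) ≤ 1.4 * (i + 2) := by nlinarith
  have e2 : 2 * (2 * T) * ((i + 1) * (2 * Real.log 2)) ≤ 5.6 * T * (i + 1) := by
    have : (0 : ℝ) ≤ T * (i + 1) := by positivity
    nlinarith
  have e3 : T * (16 * ((i : ℝ) + 2)) ≤ T * T := by gcongr
  have e4 : 0.6931 * (T * T) ≤ Real.log 2 * (T * T) := by gcongr; linarith
  nlinarith

lemma sum_inv_primesIoc_four {i : ℕ} (hi : 8 ≤ i) :
    1 / (6 * ((i : ℝ) + 1)) ≤ ∑ p ∈ primesIoc (4 ^ i) (4 ^ (i + 1)), (1 : ℝ) / p := by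
  have h := sum_log_primesIoc_ge hi
  set D : ℝ := 4 ^ (i + 1) * ((i + 1) * Real.log 4) with hD
  have hlog4 : Real.log 4 = 2 * Real.log 2 := by
    rw [show (4 : ℝ) = 2 ^ 2 by norm_num, Real.log_pow]; norm_num
  have hl1 := Real.log_two_gt_d9
  have hl2 := Real.log_two_lt_d9
  have hD0 : 0 < D := by rw [hD, hlog4]; positivity
  calc 1 / (6 * ((i : ℝ) + 1)) ≤ 4 ^ i / D := by
        rw [div_le_div_iff₀ (by positivity) hD0, hD, hlog4, pow_succ]
        have : (0 : ℝ) < 4 ^ i * (i + 1) := by positivity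
        nlinarith
    _ ≤ (∑ p ∈ primesIoc (4 ^ i) (4 ^ (i + 1)), Real.log p) / D := by gcongr
    _ = ∑ p ∈ primesIoc (4 ^ i) (4 ^ (i + 1)), Real.log p / D := Finset.sum_div _ _ _
    _ ≤ _ := by
        refine Finset.sum_le_sum fun p hp => ?_
        rw [mem_primesIoc] at hp
        have hp0 : (0 : ℝ) < p := by exact_mod_cast hp.2.pos
        have hple : (p : ℝ) ≤ 4 ^ (i + 1) := by exact_mod_cast hp.1.2
        rw [div_le_div_iff₀ hD0 hp0, one_mul, hD, mul_comm]
        have : Real.log p ≤ (i + 1) * Real.log 4 := by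
          have h5 := Real.log_le_log hp0 hple
          rw [Real.log_pow] at h5
          exact_mod_cast h5
        have hlp : 0 ≤ Real.log p := Real.log_natCast_nonneg p
        gcongr

lemma sum_inv_primesIoc_ge {a b : ℕ} (ha : 8 ≤ a) (hab : a ≤ b) :
    (Real.log (b + 1) - Real.log (a + 1)) / 6 ≤ ∑ p ∈ primesIoc (4 ^ a) (4 ^ b), (1 : ℝ) / p := by
  induction b, hab using Nat.le_induction with
  | base => simp [primesIoc]
  | succ b hab ih =>
    rw [← sum_primesIoc_add _ (Nat.pow_le_pow_right (by norm_num : 0 < 4) hab)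
      (Nat.pow_le_pow_right (by norm_num : 0 < 4) (Nat.le_succ b))]
    have h1 := sum_inv_primesIoc_four (ha.trans hab)
    have h2 : Real.log ((b + 1 : ℕ) + 1) ≤ Real.log (b + 1) + 1 / (b + 1) := by
      have hb : (0 : ℝ) < b + 1 := by positivity
      have h3 : ((b + 1 : ℕ) : ℝ) + 1 = (b + 1) * (1 + 1 / (b + 1)) := by
        push_cast; field_simp
      rw [h3, Real.log_mul hb.ne' (by positivity)]
      have := Real.log_le_sub_one_of_pos (by positivity : (0 : ℝ) < 1 + 1 / (b + 1))
      linarith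
    have h4 : 1 / (6 * ((b : ℝ) + 1)) = (1 / (b + 1)) / 6 := by field_simp
    rw [h4] at h1
    linarith

lemma sum_inv_primesIoc_sq_ge {a : ℕ} (ha : 8 ≤ a) :
    Real.log a / 12 ≤ ∑ p ∈ primesIoc (4 ^ a) (4 ^ (a ^ 2)), (1 : ℝ) / p := by
  refine le_trans ?_ (sum_inv_primesIoc_ge ha (Nat.le_self_pow two_ne_zero a))
  have ha' : (8 : ℝ) ≤ a := by exact_mod_cast ha
  have h1 : Real.log a + 2 * Real.log (a + 1) ≤ 2 * Real.log ((a ^ 2 : ℕ) + 1) := by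
    have e1 : 2 * Real.log ((a : ℝ) + 1) = Real.log (((a : ℝ) + 1) ^ 2) := by
      rw [Real.log_pow]; norm_num
    have e2 : 2 * Real.log (((a ^ 2 : ℕ) : ℝ) + 1) = Real.log ((((a ^ 2 : ℕ) : ℝ) + 1) ^ 2) := by
      rw [Real.log_pow]; norm_num
    rw [e1, e2, ← Real.log_mul (by positivity) (by positivity)]
    apply Real.log_le_log (by positivity)
    push_cast
    have h2 : ((a : ℝ) + 1) ^ 2 ≤ a ^ 3 := by nlinarith
    calc (a : ℝ) * (a + 1) ^ 2 ≤ a * a ^ 3 := by gcongr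
      _ ≤ _ := by nlinarith [sq_nonneg (a : ℝ)]
  linarith

/-! ### Integers free of the primes in a block -/

lemma card_dvd_Icc (x d : ℕ) : ({b ∈ Finset.Icc 1 x | d ∣ b}).card = x / d := by
  have : Finset.Icc 1 x = Finset.Ioc 0 x := rfl
  rw [this, Nat.Ioc_filter_dvd_card_eq_div]

/-- Turán's second moment bound: most integers up to `x` have a prime factor in any set `P` of
at most `x` primes with large reciprocal sum. -/
lemma turan {P : Finset ℕ} {x : ℕ} (hP : ∀ p ∈ P, p.Prime) (hPx : P.card ≤ x) {M : ℝ}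
    (hM : M = ∑ p ∈ P, (1 : ℝ) / p) (hM0 : 0 < M) :
    (({b ∈ Finset.Icc 1 x | ∀ p ∈ P, ¬ p ∣ b}).card : ℝ) ≤ 3 * x / M := by
  set I := Finset.Icc 1 x with hI
  set w : ℕ → ℝ := fun b => ∑ p ∈ P, if p ∣ b then 1 else 0 with hw
  have hcount (d : ℕ) : ∑ b ∈ I, (if d ∣ b then (1 : ℝ) else 0) = ((x / d : ℕ) : ℝ) := by
    rw [Finset.sum_boole, card_dvd_Icc]
  have hx0 : (0 : ℝ) ≤ x := by positivity
  -- first moment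
  have h1 : x * M - P.card ≤ ∑ b ∈ I, w b := by
    rw [hw, Finset.sum_comm]
    simp_rw [hcount]
    rw [hM, Finset.mul_sum, Finset.card_eq_sum_ones, Nat.cast_sum, ← Finset.sum_sub_distrib]
    refine Finset.sum_le_sum fun p hp => ?_
    have hp0 : 0 < p := (hP p hp).pos
    have h := Nat.lt_floor_add_one ((x : ℝ) / p)
    rw [Nat.floor_div_natCast, Nat.floor_natCast] at h
    rw [mul_one_div]
    push_cast at h ⊢
    linarith
  -- second moment
  have h2 : ∑ b ∈ I, w b ^ 2 ≤ x * M ^ 2 + x * M := by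
    have e1 (b : ℕ) : w b ^ 2 = ∑ p ∈ P, ∑ q ∈ P, if p ∣ b ∧ q ∣ b then (1 : ℝ) else 0 := by
      rw [hw, sq, Finset.sum_mul_sum]
      refine Finset.sum_congr rfl fun p _ => Finset.sum_congr rfl fun q _ => ?_
      by_cases hp : p ∣ b <;> by_cases hq : q ∣ b <;> simp [hp, hq]
    simp_rw [e1]
    rw [Finset.sum_comm]
    have e2 : ∀ p ∈ P, ∑ b ∈ I, ∑ q ∈ P, (if p ∣ b ∧ q ∣ b then (1 : ℝ) else 0)
        ≤ ∑ q ∈ P, (x * ((1 : ℝ) / p * (1 / q)) + if p = q then x * (1 / (p : ℝ)) else 0) := by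
      intro p hp
      rw [Finset.sum_comm]
      refine Finset.sum_le_sum fun q hq => ?_
      rcases eq_or_ne p q with rfl | hpq
      · simp only [and_self, if_true]
        rw [hcount]
        have h := Nat.cast_div_le (α := ℝ) (m := x) (n := p)
        have : (0 : ℝ) ≤ x * (1 / p * (1 / p)) := by positivity
        rw [mul_one_div (x : ℝ) (p : ℝ)]
        linarith
      · have hco : Nat.Coprime p q := (Nat.coprime_primes (hP p hp) (hP q hq)).2 hpq
        have e3 (b : ℕ) : (p ∣ b ∧ q ∣ b) ↔ p * q ∣ b :=
          ⟨fun h => hco.mul_dvd_of_dvd_of_dvd h.1 h.2,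
            fun h => ⟨(Dvd.intro _ rfl).trans h, (Dvd.intro_left _ rfl).trans h⟩⟩
        simp_rw [e3]
        rw [hcount, if_neg hpq, add_zero]
        refine (Nat.cast_div_le (α := ℝ) (m := x) (n := p * q)).trans (le_of_eq ?_)
        push_cast
        field_simp
    refine (Finset.sum_le_sum e2).trans (le_of_eq ?_)
    simp_rw [Finset.sum_add_distrib]
    congr 1
    · rw [sq, hM, Finset.sum_mul_sum, Finset.mul_sum]
      simp_rw [Finset.mul_sum]
    · rw [hM, Finset.mul_sum]
      refine Finset.sum_congr rfl fun p hp => ?_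
      rw [Finset.sum_ite_eq, if_pos hp]
  -- the variance
  have h3 : ∑ b ∈ I, (w b - M) ^ 2 ≤ 3 * x * M := by
    have e : ∑ b ∈ I, (w b - M) ^ 2
        = ∑ b ∈ I, w b ^ 2 - 2 * M * ∑ b ∈ I, w b + x * M ^ 2 := by
      have hc : ∑ _b ∈ I, M ^ 2 = x * M ^ 2 := by
        rw [Finset.sum_const, hI, Nat.card_Icc, nsmul_eq_mul]; simp
      rw [← hc, Finset.mul_sum, ← Finset.sum_sub_distrib, ← Finset.sum_add_distrib]
      exact Finset.sum_congr rfl fun b _ => by ring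
    have hPx' : (P.card : ℝ) ≤ x := by exact_mod_cast hPx
    rw [e]
    nlinarith
  have h4 : (({b ∈ I | ∀ p ∈ P, ¬ p ∣ b}).card : ℝ) * M ^ 2 ≤ ∑ b ∈ I, (w b - M) ^ 2 := by
    refine le_trans ?_ (Finset.sum_le_sum_of_subset_of_nonneg
      (Finset.filter_subset (fun b => ∀ p ∈ P, ¬ p ∣ b) I) fun b _ _ => sq_nonneg _)
    rw [← nsmul_eq_mul]
    refine Finset.card_nsmul_le_sum _ _ _ fun b hb => ?_
    have : w b = 0 := Finset.sum_eq_zero fun p hp => if_neg ((Finset.mem_filter.1 hb).2 p hp)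
    rw [this, zero_sub, neg_sq]
  rw [le_div_iff₀ hM0]
  have h5 := h4.trans h3
  nlinarith

/-! ### Integers whose prime factors grow slowly -/

/-- The ends `4 ^ (a ^ (2 ^ i))` of the blocks: their logarithms are repeatedly squared, up to a
constant. -/
def blockEnd (a i : ℕ) : ℕ := 4 ^ (a ^ (2 ^ i))

/-- The `i`-th block consists of the primes between `blockEnd a i` and `blockEnd a (i + 1)`. If a block
other than the `0`-th contains a prime factor of `b`, then so does the block before it. -/
def Graded (a b : ℕ) : Prop :=
  ∀ i, (∃ p ∈ primesIoc (blockEnd a (i + 1)) (blockEnd a (i + 2)), p ∣ b) →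
    ∃ p ∈ primesIoc (blockEnd a i) (blockEnd a (i + 1)), p ∣ b

lemma log_blockEnd (a i : ℕ) : Real.log (blockEnd a i) = a ^ (2 ^ i) * Real.log 4 := by
  rw [blockEnd, Nat.cast_pow, Real.log_pow]; push_cast; rfl

lemma one_le_log_four : 1 ≤ Real.log 4 := by
  rw [Real.le_log_iff_exp_le (by norm_num)]
  linarith [Real.exp_one_lt_d9]

lemma log_blockEnd_add_one_le {a : ℕ} (ha : 1 ≤ a) (i : ℕ) :
    Real.log (blockEnd a (i + 1)) ≤ Real.log (blockEnd a i) ^ 4 := by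
  rw [log_blockEnd, log_blockEnd, mul_pow, ← pow_mul]
  have ha' : (1 : ℝ) ≤ a := by exact_mod_cast ha
  refine mul_le_mul (pow_le_pow_right₀ ha' ?_) (le_self_pow₀ one_le_log_four (by norm_num))
    (zero_le_one.trans one_le_log_four) (by positivity)
  rw [pow_succ]; omega

lemma log_blockEnd_add_two_le {a : ℕ} (i : ℕ) :
    Real.log (blockEnd a (i + 2)) ≤ Real.log (blockEnd a i) ^ 4 := by
  rw [log_blockEnd, log_blockEnd, mul_pow, ← pow_mul, pow_add]
  exact mul_le_mul_of_nonneg_left (le_self_pow₀ one_le_log_four (by norm_num)) (by positivity)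

lemma blockEnd_mono {a : ℕ} (ha : 1 ≤ a) (i : ℕ) : blockEnd a i ≤ blockEnd a (i + 1) :=
  Nat.pow_le_pow_right (by norm_num) (Nat.pow_le_pow_right ha
    (Nat.pow_le_pow_right (by norm_num) (Nat.le_succ i)))

lemma lt_blockEnd {a : ℕ} (ha : 2 ≤ a) (i : ℕ) : i < blockEnd a i :=
  calc i < 2 ^ i := Nat.lt_two_pow_self
    _ < a ^ (2 ^ i) := Nat.lt_pow_self ha
    _ < 4 ^ (a ^ (2 ^ i)) := Nat.lt_pow_self (by norm_num)

lemma Attainable.mul_smooth {A c : ℕ} (h : Attainable A) (hA : 1500 ≤ Real.log A) (hc : 0 < c)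
    (hcA : ∀ p, p.Prime → p ∣ c → Real.log p ≤ Real.log A ^ 4) : Attainable (A * c) := by
  induction c using induction_on_primes with
  | zero => exact absurd hc (lt_irrefl 0)
  | one => simpa using h
  | prime_mul q b hq ih =>
    have hb : 0 < b := Nat.pos_of_mul_pos_left hc
    have hAb := ih hb fun p hp hd => hcA p hp (hd.mul_left q)
    have hlog : Real.log A ≤ Real.log (A * b : ℕ) :=
      Real.log_le_log (by exact_mod_cast h.1) (by exact_mod_cast Nat.le_mul_of_pos_right A hb)
    have hq4 : Real.log q ≤ Real.log (A * b : ℕ) ^ 4 :=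
      (hcA q hq (dvd_mul_right q b)).trans (pow_le_pow_left₀ (by linarith) hlog 4)
    rw [show A * (q * b) = A * b * q by ring]
    exact hAb.mul_of_le (hA.trans hlog) hq.pos hq4

lemma exists_smooth_mul_rough (y : ℕ) {b : ℕ} (hb : 0 < b) :
    ∃ s t, b = s * t ∧ (∀ p, p.Prime → p ∣ s → p ≤ y) ∧ (∀ p, p.Prime → p ∣ t → y < p) := by
  induction b using induction_on_primes with
  | zero => exact absurd hb (lt_irrefl 0)
  | one =>
    exact ⟨1, 1, rfl, fun p hp h => absurd (Nat.dvd_one.1 h) hp.ne_one,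
      fun p hp h => absurd (Nat.dvd_one.1 h) hp.ne_one⟩
  | prime_mul q b hq ih =>
    obtain ⟨s, t, rfl, hs, ht⟩ := ih (Nat.pos_of_mul_pos_left hb)
    rcases le_or_gt q y with h | h
    · refine ⟨q * s, t, by ring, fun p hp hd => ?_, ht⟩
      rcases (Nat.Prime.dvd_mul hp).1 hd with h1 | h1
      · rwa [(Nat.prime_dvd_prime_iff_eq hp hq).1 h1]
      · exact hs p hp h1
    · refine ⟨s, q * t, by ring, hs, fun p hp hd => ?_⟩
      rcases (Nat.Prime.dvd_mul hp).1 hd with h1 | h1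
      · rwa [(Nat.prime_dvd_prime_iff_eq hp hq).1 h1]
      · exact ht p hp h1

/-- The prime factors of a graded `b` can be multiplied onto `k` one at a time in increasing order,
each being small compared with the product already formed. -/
lemma Graded.attainable {a b k : ℕ} (hb : Graded a b) (hb0 : 0 < b) (ha : 2 ≤ a)
    (hk : Attainable k) (hk1 : 1500 ≤ Real.log k) (hka : blockEnd a 0 ≤ k) :
    Attainable (k * b) := by
  have hk0 : (0 : ℝ) < k := by exact_mod_cast hk.1
  have hpos (i : ℕ) : (0 : ℝ) < blockEnd a i := by
    exact_mod_cast (Nat.zero_le i).trans_lt (lt_blockEnd ha i)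
  have hlogpos (i : ℕ) : 0 ≤ Real.log (blockEnd a i) := Real.log_natCast_nonneg _
  have hlogp {p i : ℕ} (hp : p.Prime) (h : p ≤ blockEnd a i) :
      Real.log p ≤ Real.log (blockEnd a i) :=
    Real.log_le_log (by exact_mod_cast hp.pos) (by exact_mod_cast h)
  have hk4 : Real.log (blockEnd a 0) ^ 4 ≤ Real.log k ^ 4 := by
    have := Real.log_le_log (hpos 0) (by exact_mod_cast hka : (blockEnd a 0 : ℝ) ≤ k)
    gcongr
  have key : ∀ i s t, b = s * t → (∀ p, p.Prime → p ∣ s → p ≤ blockEnd a i) →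
      (∀ p, p.Prime → p ∣ t → blockEnd a i < p) → Attainable (k * s) := by
    intro i
    induction i with
    | zero =>
      intro s t hst hs _
      have hs0 : 0 < s := Nat.pos_of_ne_zero (by rintro rfl; simp at hst; omega)
      refine hk.mul_smooth hk1 hs0 fun p hp hd => ?_
      refine ((hlogp hp (hs p hp hd)).trans ?_).trans hk4
      exact le_self_pow₀ (by
        rw [log_blockEnd]
        have : (1 : ℝ) ≤ (a : ℝ) ^ 2 ^ 0 := one_le_pow₀ (by exact_mod_cast (by omega : 1 ≤ a))
        nlinarith [one_le_log_four]) (by norm_num)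
    | succ i ih =>
      intro s t hst hs ht
      have hs0 : 0 < s := Nat.pos_of_ne_zero (by rintro rfl; simp at hst; omega)
      obtain ⟨s₁, s₂, rfl, h1, h2⟩ := exists_smooth_mul_rough (blockEnd a i) hs0
      have hs1 : 0 < s₁ := Nat.pos_of_mul_pos_right hs0
      have hs2 : 0 < s₂ := Nat.pos_of_mul_pos_left hs0
      have hrough : ∀ p, p.Prime → p ∣ s₂ * t → blockEnd a i < p := by
        intro p hp hd
        rcases (Nat.Prime.dvd_mul hp).1 hd with h | h
        · exact h2 p hp h
        · exact (blockEnd_mono (by omega) i).trans_lt (ht p hp h)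
      have hatt := ih s₁ (s₂ * t) (by rw [hst, mul_assoc]) h1 hrough
      have hlogk : Real.log k ≤ Real.log (k * s₁ : ℕ) := by
        apply Real.log_le_log hk0
        exact_mod_cast Nat.le_mul_of_pos_right k hs1
      rw [← mul_assoc]
      refine hatt.mul_smooth (hk1.trans hlogk) hs2 fun p hp hd => ?_
      have hpi : p ≤ blockEnd a (i + 1) := hs p hp (hd.mul_left _)
      refine (hlogp hp hpi).trans ?_
      rcases i with _ | i
      · refine ((log_blockEnd_add_one_le (by omega) 0).trans hk4).trans ?_
        gcongr
      · -- the block before that of `p` contains a prime factor of `s₁`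
        obtain ⟨q, hq, hqb⟩ := hb i ⟨p, mem_primesIoc.2 ⟨⟨h2 p hp hd, hpi⟩, hp⟩,
          hst ▸ (hd.mul_left s₁).mul_right t⟩
        rw [mem_primesIoc] at hq
        have hqs : q ∣ s₁ := by
          rw [hst, mul_assoc] at hqb
          rcases (Nat.Prime.dvd_mul hq.2).1 hqb with h | h
          · exact h
          · exact absurd hq.1.2 (not_le.2 (hrough q hq.2 h))
        have hqle : blockEnd a i ≤ k * s₁ :=
          hq.1.1.le.trans ((Nat.le_of_dvd hs1 hqs).trans (Nat.le_mul_of_pos_left _ hk.1))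
        have := Real.log_le_log (hpos i) (by exact_mod_cast hqle :
          (blockEnd a i : ℝ) ≤ (k * s₁ : ℕ))
        refine (log_blockEnd_add_two_le i).trans ?_
        have := hlogpos i
        gcongr
  refine key b b 1 (mul_one b).symm (fun p _ hd => ?_)
    fun p hp hd => absurd (Nat.dvd_one.1 hd) hp.ne_one
  exact (Nat.le_of_dvd hb0 hd).trans (lt_blockEnd ha b).le

/-- At least half of the integers up to `x` are graded, once the first block starts high enough. -/
lemma half_le_card_graded {a : ℕ} (ha : 8 ≤ a) (hla : 144 ≤ Real.log a) (x : ℕ) :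
    (x : ℝ) / 2 ≤ ({b ∈ Finset.Icc 1 x | Graded a b}).card := by
  set P : ℕ → Finset ℕ := fun i => primesIoc (blockEnd a i) (blockEnd a (i + 1)) with hP
  set J := {i ∈ Finset.range x | blockEnd a (i + 1) ≤ x} with hJ
  have hM (i : ℕ) : 12 * (2 : ℝ) ^ i ≤ ∑ p ∈ P i, (1 : ℝ) / p := by
    have h1 : 8 ≤ a ^ (2 ^ i) := ha.trans (Nat.le_self_pow (by positivity) a)
    have h2 := sum_inv_primesIoc_sq_ge h1
    rw [← pow_mul, ← pow_succ] at h2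
    refine le_trans ?_ h2
    rw [Nat.cast_pow, Real.log_pow]
    push_cast
    have : (0 : ℝ) < 2 ^ i := by positivity
    nlinarith
  have hcard (i : ℕ) (hi : i ∈ J) :
      (({b ∈ Finset.Icc 1 x | ∀ p ∈ P i, ¬ p ∣ b}).card : ℝ) ≤ x / 4 * (1 / 2) ^ i := by
    have hM0 : 0 < ∑ p ∈ P i, (1 : ℝ) / p := lt_of_lt_of_le (by positivity) (hM i)
    refine (turan (fun p hp => (mem_primesIoc.1 hp).2) ?_ rfl hM0).trans ?_
    · have : P i ⊆ Finset.Icc 1 x := fun p hp => by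
        have h1 := mem_primesIoc.1 hp
        exact Finset.mem_Icc.2 ⟨h1.2.pos, h1.1.2.trans (Finset.mem_filter.1 hi).2⟩
      simpa using Finset.card_le_card this
    · calc 3 * (x : ℝ) / ∑ p ∈ P i, (1 : ℝ) / p ≤ 3 * x / (12 * 2 ^ i) := by
            gcongr
            exact hM i
        _ = _ := by rw [one_div, inv_pow]; field_simp; ring
  have hbad : {b ∈ Finset.Icc 1 x | ¬ Graded a b}
      ⊆ J.biUnion fun i => {b ∈ Finset.Icc 1 x | ∀ p ∈ P i, ¬ p ∣ b} := by
    intro b hb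
    rw [Finset.mem_filter, Graded] at hb
    push Not at hb
    obtain ⟨hbx, i, ⟨p, hp, hpb⟩, hno⟩ := hb
    have hbx' := Finset.mem_Icc.1 hbx
    have h1 : blockEnd a (i + 1) ≤ x :=
      (mem_primesIoc.1 hp).1.1.le.trans ((Nat.le_of_dvd hbx'.1 hpb).trans hbx'.2)
    rw [Finset.mem_biUnion]
    refine ⟨i, ?_, Finset.mem_filter.2 ⟨hbx, hno⟩⟩
    rw [hJ, Finset.mem_filter, Finset.mem_range]
    have := lt_blockEnd (by omega : 2 ≤ a) (i + 1)
    exact ⟨by omega, h1⟩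
  have hsum : (({b ∈ Finset.Icc 1 x | ¬ Graded a b}).card : ℝ) ≤ x / 2 := by
    calc (({b ∈ Finset.Icc 1 x | ¬ Graded a b}).card : ℝ)
        ≤ ∑ i ∈ J, (({b ∈ Finset.Icc 1 x | ∀ p ∈ P i, ¬ p ∣ b}).card : ℝ) := by
          exact_mod_cast (Finset.card_le_card hbad).trans Finset.card_biUnion_le
      _ ≤ ∑ i ∈ J, (x : ℝ) / 4 * (1 / 2) ^ i := Finset.sum_le_sum hcard
      _ ≤ ∑ i ∈ Finset.range x, (x : ℝ) / 4 * (1 / 2) ^ i :=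
          Finset.sum_le_sum_of_subset_of_nonneg (Finset.filter_subset _ _)
            fun _ _ _ => by positivity
      _ = x / 4 * ∑ i ∈ Finset.range x, ((1 : ℝ) / 2) ^ i := by rw [Finset.mul_sum]
      _ ≤ x / 4 * 2 := by gcongr; exact sum_geometric_two_le x
      _ = x / 2 := by ring
  have htot := Finset.card_filter_add_card_filter_not (s := Finset.Icc 1 x) (Graded a)
  rw [Nat.card_Icc, Nat.add_sub_cancel] at htot
  have htot' : (({b ∈ Finset.Icc 1 x | Graded a b}).card : ℝ)
      + ({b ∈ Finset.Icc 1 x | ¬ Graded a b}).card = x := by exact_mod_cast htot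
  linarith

/-- The set of positive integers `k` such that `2^k` is separable has positive
lower asymptotic density. -/
theorem lowerDensity_two_pow_separable_pos :
    0 < Filter.liminf
      (fun x : ℕ => (((Finset.Icc 1 x).filter fun k => Separable (2 ^ k)).card : ℝ) / x)
      Filter.atTop := by
  obtain ⟨a, ha⟩ := exists_nat_ge (Real.exp 144)
  have hla : 144 ≤ Real.log a := by
    rwa [Real.le_log_iff_exp_le ((Real.exp_pos _).trans_le ha)]
  have ha8 : 8 ≤ a := by
    have : (8 : ℝ) ≤ a := by linarith [Real.add_one_le_exp (144 : ℝ)]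
    exact_mod_cast this
  obtain ⟨k, hk1, hk2, hk3⟩ := exists_attainable_ge (blockEnd a 0)
  have hk0 : 0 < k := hk2.1
  have hk0' : (0 : ℝ) < k := by exact_mod_cast hk0
  have hcount (x : ℕ) : ((x / k : ℕ) : ℝ) / 2
      ≤ ((Finset.Icc 1 x).filter fun k => Separable (2 ^ k)).card := by
    refine (half_le_card_graded ha8 hla (x / k)).trans ?_
    rw [Nat.cast_le]
    refine Finset.card_le_card_of_injOn (fun b => k * b) (fun b hb => ?_)
      (fun b _ c _ h => Nat.eq_of_mul_eq_mul_left hk0 h)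
    rw [Finset.mem_coe, Finset.mem_filter, Finset.mem_Icc] at hb
    rw [Finset.mem_coe, Finset.mem_filter, Finset.mem_Icc]
    refine ⟨⟨Nat.mul_pos hk0 hb.1.1, ?_⟩, ?_⟩
    · exact (Nat.mul_le_mul_left k hb.1.2).trans (Nat.mul_div_le x k)
    · exact (hb.2.attainable hb.1.1 (by omega) hk2 hk3 hk1).separable
  refine lt_of_lt_of_le (by positivity : 0 < 1 / (4 * (k : ℝ))) ?_
  refine Filter.le_liminf_of_le ?_ ?_
  · refine Filter.IsBoundedUnder.isCoboundedUnder_ge ⟨1, ?_⟩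
    rw [Filter.eventually_map]
    refine Filter.Eventually.of_forall fun x => div_le_one_of_le₀ ?_ (by positivity)
    have := Finset.card_filter_le (Finset.Icc 1 x) fun k => Separable (2 ^ k)
    rw [Nat.card_Icc, Nat.add_sub_cancel] at this
    exact_mod_cast this
  · filter_upwards [Filter.eventually_ge_atTop k] with x hx
    have hx0 : (0 : ℝ) < x := by exact_mod_cast hk0.trans_le hx
    rw [le_div_iff₀ hx0]
    refine le_trans ?_ (hcount x)
    -- `x / k ≥ 1`, so rounding down loses at most a factor `2`
    have h1 : x ≤ 2 * k * (x / k) := by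
      have h2 : 1 ≤ x / k := (Nat.one_le_div_iff hk0).2 hx
      have h3 := Nat.div_add_mod x k
      have h4 := Nat.mod_lt x hk0
      nlinarith
    have h1' : (x : ℝ) ≤ 2 * k * (x / k : ℕ) := by exact_mod_cast h1
    rw [div_mul_eq_mul_div, one_mul, div_le_div_iff₀ (by positivity) two_pos]
    linarith
end

section
/- If (m, n) is an interlocking pair of positive integers with m·n = P_k, where P_k denotes the product of the first k primes, then k ≤ 8. -/
/-- `primesProd k` is the product of the first `k` primes. -/
noncomputable def primesProd (k : ℕ) : ℕ := ∏ i ∈ Finset.range k, Nat.nth Nat.Prime i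

theorem Interlocking.symm {m n : ℕ} (h : Interlocking m n) : Interlocking n m :=
  ⟨h.2.1, h.1, h.2.2.2, h.2.2.1⟩

/-- The interlocking condition on consecutive divisors extends to arbitrary pairs of divisors:
compare `d` with the least divisor of `n` exceeding it. -/
theorem Interlocking.exists_between_s10 {m n d d' : ℕ} (h : Interlocking m n)
    (hd : d ∣ n) (hd' : d' ∣ n) (h1 : 1 < d) (hlt : d < d') :
    ∃ e, e ∣ m ∧ d < e ∧ e < d' := by
  classical
  have hex : ∃ x, x ∣ n ∧ d < x := ⟨d', hd', hlt⟩
  obtain ⟨e, he, h2, h3⟩ := h.2.2.1 d (Nat.find hex) hd (Nat.find_spec hex).1 h1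
    (Nat.find_spec hex).2 (fun e he hlt' => Nat.find_min hex hlt'.2 ⟨he, hlt'.1⟩)
  exact ⟨e, he, h2, h3.trans_le (Nat.find_min' hex ⟨hd', hlt⟩)⟩

/-- The alternation argument, with the number divisible by `2` named `n`. -/
theorem Interlocking.false_of_two_dvd {m n : ℕ} (h : Interlocking m n)
    (hsq : Squarefree (m * n)) (hp : ∀ p, p.Prime → p ≤ 23 → p ∣ m ∨ p ∣ n)
    (h2 : 2 ∣ n) : False := by
  have hcop : Nat.Coprime m n := Nat.coprime_of_squarefree_mul hsq
  have disj : ∀ p, 1 < p → p ∣ m → p ∣ n → False := fun p h1 hm hn =>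
    h1.ne' (Nat.eq_one_of_dvd_coprimes hcop hm hn)
  have h4 : ¬ 4 ∣ n := fun h4 => by
    have := hsq 2 ((show 2 * 2 ∣ n from h4).trans (Dvd.intro_left m rfl))
    simp at this
  have h3 : 3 ∣ m := (hp 3 (by norm_num) (by norm_num)).resolve_right fun h3 => by
    obtain ⟨e, he, ha, hb⟩ := h.exists_between_s10 h2 h3 (by norm_num) (by norm_num)
    exact absurd hb (by clear * - ha; omega)
  have h5 : 5 ∣ n := (hp 5 (by norm_num) (by norm_num)).resolve_left fun h5 => by
    obtain ⟨e, he, ha, hb⟩ := h.symm.exists_between_s10 h3 h5 (by norm_num) (by norm_num)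
    obtain rfl : e = 4 := by clear * - ha hb; omega
    exact h4 he
  have h7 : 7 ∣ m := (hp 7 (by norm_num) (by norm_num)).resolve_right fun h7 => by
    obtain ⟨e, he, ha, hb⟩ := h.exists_between_s10 h5 h7 (by norm_num) (by norm_num)
    obtain rfl : e = 6 := by clear * - ha hb; omega
    exact disj 2 (by norm_num) (Dvd.dvd.trans (by norm_num) he) h2
  have h10 : 10 ∣ n := Nat.Coprime.mul_dvd_of_dvd_of_dvd (by norm_num) h2 h5
  have h11 : 11 ∣ m := (hp 11 (by norm_num) (by norm_num)).resolve_right fun h11 => by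
    obtain ⟨e, he, ha, hb⟩ := h.exists_between_s10 h10 h11 (by norm_num) (by norm_num)
    exact absurd hb (by clear * - ha; omega)
  have h13 : 13 ∣ n := (hp 13 (by norm_num) (by norm_num)).resolve_left fun h13 => by
    obtain ⟨e, he, ha, hb⟩ := h.symm.exists_between_s10 h11 h13 (by norm_num) (by norm_num)
    obtain rfl : e = 12 := by clear * - ha hb; omega
    exact h4 (Dvd.dvd.trans (by norm_num) he)
  have h17 : 17 ∣ m := (hp 17 (by norm_num) (by norm_num)).resolve_right fun h17 => by
    obtain ⟨e, he, ha, hb⟩ := h.exists_between_s10 h13 h17 (by norm_num) (by norm_num)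
    obtain rfl | rfl | rfl : e = 14 ∨ e = 15 ∨ e = 16 := by clear * - ha hb; omega
    · exact disj 2 (by norm_num) (Dvd.dvd.trans (by norm_num) he) h2
    · exact disj 5 (by norm_num) (Dvd.dvd.trans (by norm_num) he) h5
    · exact disj 2 (by norm_num) (Dvd.dvd.trans (by norm_num) he) h2
  have h19 : 19 ∣ n := (hp 19 (by norm_num) (by norm_num)).resolve_left fun h19 => by
    obtain ⟨e, he, ha, hb⟩ := h.symm.exists_between_s10 h17 h19 (by norm_num) (by norm_num)
    obtain rfl : e = 18 := by clear * - ha hb; omega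
    exact disj 3 (by norm_num) h3 (Dvd.dvd.trans (by norm_num) he)
  have h21 : 21 ∣ m := Nat.Coprime.mul_dvd_of_dvd_of_dvd (by norm_num) h3 h7
  have h23 : 23 ∣ n := (hp 23 (by norm_num) (by norm_num)).resolve_left fun h23 => by
    obtain ⟨e, he, ha, hb⟩ := h.symm.exists_between_s10 h21 h23 (by norm_num) (by norm_num)
    obtain rfl : e = 22 := by clear * - ha hb; omega
    exact disj 11 (by norm_num) h11 (Dvd.dvd.trans (by norm_num) he)
  have h26 : 26 ∣ n := Nat.Coprime.mul_dvd_of_dvd_of_dvd (by norm_num) h2 h13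
  obtain ⟨e, he, ha, hb⟩ := h.exists_between_s10 h23 h26 (by norm_num) (by norm_num)
  obtain rfl | rfl : e = 24 ∨ e = 25 := by clear * - ha hb; omega
  · exact disj 2 (by norm_num) (Dvd.dvd.trans (by norm_num) he) h2
  · exact disj 5 (by norm_num) (Dvd.dvd.trans (by norm_num) he) h5

theorem squarefree_primesProd (k : ℕ) : Squarefree (primesProd k) := by
  refine Finset.squarefree_prod_of_pairwise_isCoprime ?_ fun i _ =>
    (Nat.prime_nth_prime i).squarefree
  intro i _ j _ hij
  refine Nat.coprime_iff_isRelPrime.1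
    ((Nat.coprime_primes (Nat.prime_nth_prime i) (Nat.prime_nth_prime j)).2 fun heq => hij ?_)
  exact Nat.nth_injective Nat.infinite_setOfPred_prime heq

theorem dvd_primesProd {p k : ℕ} (hp : p.Prime) (hp23 : p ≤ 23) (hk : 9 ≤ k) :
    p ∣ primesProd k := by
  have hc : Nat.count Nat.Prime p < k := by
    have h1 : Nat.count Nat.Prime p ≤ Nat.count Nat.Prime 23 := Nat.count_monotone _ hp23
    have h2 : Nat.count Nat.Prime 23 = 8 := by decide
    omega
  have := Finset.dvd_prod_of_mem (fun i => Nat.nth Nat.Prime i) (Finset.mem_range.2 hc)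
  simpa only [Nat.nth_count hp, primesProd] using this

/-- If `(m, n)` is an interlocking pair with `m * n` equal to the product of the
first `k` primes, then `k ≤ 8`. -/
theorem interlocking_primesProd_bound (m n k : ℕ) (h : Interlocking m n)
    (hmn : m * n = primesProd k) : k ≤ 8 := by
  by_contra hk
  have hsq : Squarefree (m * n) := hmn ▸ squarefree_primesProd k
  have hp : ∀ p, p.Prime → p ≤ 23 → p ∣ m ∨ p ∣ n := fun p hp hp23 =>
    hp.dvd_mul.1 (hmn ▸ dvd_primesProd hp hp23 (by omega))
  rcases hp 2 Nat.prime_two (by norm_num) with h2 | h2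
  · exact h.symm.false_of_two_dvd (mul_comm m n ▸ hsq) (fun p h1 h3 => (hp p h1 h3).symm) h2
  · exact h.false_of_two_dvd hsq hp h2
end
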